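/- arXiv:1903.04828 — 2 statements merged into one kernel-verified Lean document; each statement's English description precedes it below -/
import Mathlib

section
/- For every n there exists a constant c = c(n) such that every finite subgroup H of GL(n, ℂ) satisfies d(H) ≤ c, where d(H) is the minimal number of generators of H. Concretely, one may take c = n + (n+1)!. -/
open Matrix

lemma joint_eig {G : Type*} [Group G] [Finite G] {n : ℕ} (ρ : G →* Matrix (Fin n) (Fin n) ℂ)
    (K : Subgroup G) (hK : ∀ a ∈ K, ∀ b ∈ K, a * b = b * a) :
    ∃ (b : Module.Basis (Fin n) ℂ (Fin n → ℂ)) (χ : Fin n → K →* ℂˣ),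
      ∀ i (k : K), ρ k *ᵥ b i = (χ i k : ℂ) • b i := by
  classical
  let f : K → Module.End ℂ (Fin n → ℂ) := fun k => Matrix.toLin' (ρ k)
  have hcomm : ∀ i j, Commute (f i) (f j) := by
    intro i j
    change f i * f j = f j * f i
    simp only [f, Module.End.mul_eq_comp, ← Matrix.toLin'_mul, ← map_mul]
    rw [hK i i.2 j j.2]
  have hss : ∀ i, (f i).IsSemisimple := by
    intro i
    have hm : (orderOf (i : G)) ≠ 0 := (orderOf_pos (i : G)).ne'
    refine Module.End.isSemisimple_of_squarefree_aeval_eq_zero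
      (p := Polynomial.X ^ (orderOf (i : G)) - Polynomial.C 1) ?_ ?_
    · exact (Polynomial.separable_X_pow_sub_C (1 : ℂ) (by exact_mod_cast hm) one_ne_zero).squarefree
    · have : f i ^ (orderOf (i : G)) = 1 := by
        simp only [f]
        rw [← Matrix.toLin'_pow, ← map_pow, pow_orderOf_eq_one, map_one, Matrix.toLin'_one]; rfl
      simp only [map_sub, map_pow, Polynomial.aeval_X, map_one, this, sub_self]
  have htop := Module.End.iSup_iInf_maxGenEigenspace_eq_top_of_forall_mapsTo f
    (fun i j φ => Module.End.mapsTo_maxGenEigenspace_of_comm (hcomm j i) φ)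
    (fun i => Module.End.iSup_maxGenEigenspace_eq_top (f i))
  have heq : ∀ i μ, (f i).maxGenEigenspace μ = (f i).eigenspace μ := fun i μ =>
    (hss i).isFinitelySemisimple.maxGenEigenspace_eq_eigenspace μ
  simp only [heq] at htop
  let s : Set (Fin n → ℂ) := ⋃ c : K → ℂ, ((⨅ i, (f i).eigenspace (c i) : Submodule ℂ _) : Set _)
  have hs : ⊤ ≤ Submodule.span ℂ s := by
    rw [← htop, iSup_le_iff]
    intro c x hx
    exact Submodule.subset_span (Set.mem_iUnion.2 ⟨c, hx⟩)
  let b0 := Module.Basis.ofSpan hs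
  have hsub := Module.Basis.ofSpan_subset hs
  have : Fintype ((linearIndepOn_empty ℂ (id : (Fin n → ℂ) → _)).extend (Set.empty_subset s)) :=
    Module.Basis.fintypeIndexOfRankLtAleph0 b0 (Module.rank_lt_aleph0 _ _) 
  let e := b0.indexEquiv (Pi.basisFun ℂ (Fin n))
  let b := b0.reindex e
  have hb : ∀ i, ∃ c : K → ℂ, ∀ k : K, ρ k *ᵥ b i = c k • b i := by
    intro i
    have : b i ∈ s := hsub ⟨e.symm i, by simp [b, b0]⟩
    obtain ⟨c, hc⟩ := Set.mem_iUnion.1 this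
    refine ⟨c, fun k => ?_⟩
    have := (Submodule.mem_iInf _).1 hc k
    rw [Module.End.mem_eigenspace_iff] at this
    simpa [f] using this
  choose c hc using hb
  have hinj : ∀ i (x y : ℂ), x • b i = y • b i → x = y := fun i x y h =>
    smul_left_injective ℂ (b.ne_zero i) h
  let χ0 : Fin n → K →* ℂ := fun i =>
    { toFun := c i
      map_one' := hinj i _ _ (by rw [← hc]; simp)
      map_mul' := fun x y => hinj i _ _ (by
        rw [← hc, Subgroup.coe_mul, map_mul, ← Matrix.mulVec_mulVec, hc, Matrix.mulVec_smul, hc,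
          smul_smul, mul_comm]) }
  exact ⟨b, fun i => (χ0 i).toHomUnits, fun i k => by simpa [χ0] using hc i k⟩

/-- joint injectivity -/
lemma joint_inj {G : Type*} [Group G] [Finite G] {n : ℕ} (ρ : G →* Matrix (Fin n) (Fin n) ℂ)
    (hρ : Function.Injective ρ) (K : Subgroup G) 
    (b : Module.Basis (Fin n) ℂ (Fin n → ℂ)) (χ : Fin n → K →* ℂˣ)
    (h : ∀ i (k : K), ρ k *ᵥ b i = (χ i k : ℂ) • b i) (k : K) (hk : ∀ i, χ i k = 1) : k = 1 := by
  have : Matrix.toLin' (ρ k) = Matrix.toLin' (1 : Matrix (Fin n) (Fin n) ℂ) := by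
    refine b.ext fun i => ?_
    simp [h, hk]
  have := Matrix.toLin'.injective this
  rw [← map_one ρ] at this
  exact Subtype.ext (hρ this)

lemma gens_of_chars {G : Type*} [Group G] [Finite G] : ∀ (m : ℕ) (K : Subgroup G)
    (χ : Fin m → K →* ℂˣ) (_ : ∀ k, (∀ i, χ i k = 1) → k = 1),
    ∃ S : Finset G, S.card ≤ m ∧ Subgroup.closure (S : Set G) = K := by
  classical
  intro m
  induction m with
  | zero =>
    intro K χ h
    refine ⟨∅, by simp, ?_⟩
    rw [eq_comm, Finset.coe_empty, Subgroup.closure_empty, Subgroup.eq_bot_iff_forall]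
    intro x hx
    simpa using congrArg Subtype.val (h ⟨x, hx⟩ (fun i => i.elim0))
  | succ m ih =>
    intro K χ h
    let K' : Subgroup G := (χ 0).ker.map K.subtype
    have hle : K' ≤ K := Subgroup.map_subtype_le _
    have hker : ∀ k : K', χ 0 (Subgroup.inclusion hle k) = 1 := by
      rintro ⟨k, ⟨y, hy, rfl⟩⟩
      exact hy
    obtain ⟨S, hS, hc⟩ := ih K' (fun i => (χ i.succ).comp (Subgroup.inclusion hle)) (by
      intro k hk
      have := h (Subgroup.inclusion hle k) (fun i => by
        refine Fin.cases (hker k) (fun j => hk j) i)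
      exact Subtype.ext (by simpa using congrArg Subtype.val this))
    have : Finite (χ 0).range := Finite.of_surjective _ (χ 0).rangeRestrict_surjective
    obtain ⟨⟨_, ⟨g, rfl⟩⟩, hg⟩ := (inferInstance : IsCyclic (χ 0).range).exists_generator
    refine ⟨insert (g : G) S, (Finset.card_insert_le _ _).trans (by omega), ?_⟩
    apply le_antisymm
    · rw [Subgroup.closure_le]
      intro x hx
      rcases Finset.mem_insert.1 (Finset.mem_coe.1 hx) with rfl | hx
      · exact g.2
      · exact hle (hc ▸ Subgroup.subset_closure hx)
    · intro x hx
      obtain ⟨z, hz⟩ := Subgroup.mem_zpowers_iff.1 (hg ⟨χ 0 ⟨x, hx⟩, ⟨_, rfl⟩⟩)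
      have hz' : (χ 0 g) ^ z = χ 0 ⟨x, hx⟩ := congrArg Subtype.val hz
      have h1 : (g : G) ∈ Subgroup.closure ((insert (g : G) S : Finset G) : Set G) :=
        Subgroup.subset_closure (by simp)
      have h2 : K' ≤ Subgroup.closure ((insert (g : G) S : Finset G) : Set G) := by
        rw [← hc]; exact Subgroup.closure_mono (by simp)
      have h3 : (g : G) ^ (-z) * x ∈ K' := by
        refine ⟨g ^ (-z) * ⟨x, hx⟩, ?_, by simp⟩
        change χ 0 _ = 1
        rw [map_mul, map_zpow, _root_.zpow_neg, hz', inv_mul_cancel]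
      have := mul_mem (zpow_mem h1 z) (h2 h3)
      simpa using this

lemma gens_abelian {G : Type*} [Group G] [Finite G] {n : ℕ} (ρ : G →* Matrix (Fin n) (Fin n) ℂ)
    (hρ : Function.Injective ρ) (K : Subgroup G) (hK : ∀ a ∈ K, ∀ b ∈ K, a * b = b * a) :
    ∃ S : Finset G, S.card ≤ n ∧ Subgroup.closure (S : Set G) = K := by
  obtain ⟨b, χ, h⟩ := joint_eig ρ K hK
  exact gens_of_chars n K χ (joint_inj ρ hρ K b χ h)

/-- chain lemma -/
lemma chain_gens {G : Type*} [Group G] [Finite G] (q : ℕ) (H : Subgroup G) : ∀ (N : ℕ)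
    (K : Subgroup G) (_ : K ≤ H) (_ : K.relIndex H = N)
    (_ : ∀ d, d ∣ N → 1 < d → q ≤ d),
    ∃ S : Finset G, q ^ S.card ≤ N ∧ K ⊔ Subgroup.closure (S : Set G) = H := by
  classical
  intro N
  induction N using Nat.strong_induction_on with
  | _ N ih =>
  intro K hKH hN hq
  by_cases hK : H ≤ K
  · refine ⟨∅, ?_, by simp [le_antisymm hKH hK]⟩
    have : K.relIndex H = 1 := Subgroup.relIndex_eq_one.2 hK
    simp [← hN, this]
  · obtain ⟨g, hg, hgK⟩ := Set.not_subset.1 hK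
    let K' := K ⊔ Subgroup.closure {g}
    have h1 : K ≤ K' := le_sup_left
    have hgK' : g ∈ K' := (le_sup_right : _ ≤ K') (Subgroup.subset_closure rfl)
    have h2 : K' ≤ H := sup_le hKH (by simpa [Subgroup.closure_le] using hg)
    have hmul := Subgroup.relIndex_mul_relIndex K K' H h1 h2
    have hne : K.relIndex K' ≠ 1 := fun h => hgK (Subgroup.relIndex_eq_one.1 h hgK')
    have hne0 : K.relIndex K' ≠ 0 := Subgroup.index_ne_zero_of_finite
    have hne0' : K'.relIndex H ≠ 0 := Subgroup.index_ne_zero_of_finite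
    have hq1 : q ≤ K.relIndex K' := hq _ (hN ▸ hmul ▸ Dvd.intro _ rfl) (by omega)
    have hlt : K'.relIndex H < N := by
      rw [← hN, ← hmul]
      exact lt_mul_left (by omega) (by omega)
    obtain ⟨S, hS, hc⟩ := ih _ hlt K' h2 rfl (fun d hd => hq d (hd.trans (hN ▸ hmul ▸ Dvd.intro_left _ rfl)))
    refine ⟨insert g S, ?_, ?_⟩
    · rcases Nat.eq_zero_or_pos q with rfl | hq0
      · rcases Nat.eq_zero_or_pos (insert g S).card with h0 | h0
        · simp at h0
        · rw [zero_pow h0.ne']; omega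
      calc q ^ (insert g S).card ≤ q ^ (S.card + 1) :=
            Nat.pow_le_pow_right hq0 (Finset.card_insert_le _ _)
        _ = q * q ^ S.card := pow_succ' _ _
        _ ≤ K.relIndex K' * K'.relIndex H := Nat.mul_le_mul hq1 hS
        _ = N := by rw [hmul, hN]
    · rw [← hc, Finset.coe_insert, Set.insert_eq, Subgroup.closure_union, ← sup_assoc]

lemma pgroup_center {p : ℕ} [Fact p.Prime] {G : Type*} [Group G] [Finite G] (hG : IsPGroup p G)
    (N : Subgroup G) [N.Normal] (hN : N ≠ ⊥) : ∃ z ∈ N, z ≠ 1 ∧ z ∈ Subgroup.center G := by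
  have hN' : Nontrivial N := (Subgroup.nontrivial_iff_ne_bot N).2 hN
  have hG' : IsPGroup p (ConjAct G) := hG
  obtain ⟨k, hk, hc⟩ := (hG.to_subgroup N).nontrivial_iff_card.1 hN'
  have h1 : (1 : N) ∈ MulAction.fixedPoints (ConjAct G) N := by
    intro g; ext; simp
  obtain ⟨z, hz, hz1⟩ := hG'.exists_fixed_point_of_prime_dvd_card_of_fixed_point N
    (by rw [hc]; exact dvd_pow_self _ hk.ne') h1
  refine ⟨z, z.2, fun h => hz1 (Subtype.ext h.symm), ?_⟩
  rw [Subgroup.mem_center_iff]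
  intro g
  have := congrArg Subtype.val (hz (ConjAct.toConjAct g))
  rw [ConjAct.Subgroup.val_conj_smul, ConjAct.smul_def] at this
  simp only [ConjAct.ofConjAct_toConjAct] at this
  exact mul_inv_eq_iff_eq_mul.1 this

lemma pgroup_self_centralizing {p : ℕ} [Fact p.Prime] {G : Type*} [Group G] [Finite G]
    (hG : IsPGroup p G) : ∃ A : Subgroup G, A.Normal ∧ (∀ a ∈ A, ∀ b ∈ A, a * b = b * a) ∧
      ∀ g, (∀ a ∈ A, a * g = g * a) → g ∈ A := by
  obtain ⟨A, hA⟩ := (Set.toFinite {A : Subgroup G | A.Normal ∧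
    (∀ a ∈ A, ∀ b ∈ A, a * b = b * a)}).exists_maximal ⟨⊥, inferInstance, by
      intro a ha b hb; rw [Subgroup.mem_bot] at ha hb; simp [ha, hb]⟩
  obtain ⟨⟨hn, hc⟩, hmax⟩ := hA
  refine ⟨A, hn, hc, ?_⟩
  by_contra! hcon
  obtain ⟨g, hg, hgA⟩ := hcon
  let C := Subgroup.centralizer (A : Set G)
  have hgC : g ∈ C := Subgroup.mem_centralizer_iff.2 hg
  let N := C.map (QuotientGroup.mk' A)
  have hNn : N.Normal := Subgroup.Normal.map inferInstance _ (QuotientGroup.mk'_surjective A)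
  have hNb : N ≠ ⊥ := by
    intro h
    have : QuotientGroup.mk' A g ∈ N := ⟨g, hgC, rfl⟩
    rw [h, Subgroup.mem_bot] at this
    exact hgA ((QuotientGroup.eq_one_iff g).1 this)
  obtain ⟨z, ⟨c, hcC, rfl⟩, hz1, hzc⟩ := pgroup_center (hG.to_quotient A) N hNb
  have hcC' : ∀ a ∈ A, a * c = c * a := Subgroup.mem_centralizer_iff.1 hcC
  let B := (Subgroup.zpowers (QuotientGroup.mk' A c)).comap (QuotientGroup.mk' A)
  have hzn : (Subgroup.zpowers (QuotientGroup.mk' A c)).Normal := by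
    refine ⟨fun x hx y => ?_⟩
    have : x ∈ Subgroup.center (G ⧸ A) := (Subgroup.zpowers_le.2 hzc) hx
    rw [Subgroup.mem_center_iff.1 this y, mul_inv_cancel_right]
    exact hx
  have hB : ∀ x ∈ B, ∃ (k : ℤ), ∃ a ∈ A, x = c ^ k * a := by
    intro x hx
    obtain ⟨k, hk⟩ := Subgroup.mem_zpowers_iff.1 (Subgroup.mem_comap.1 hx)
    refine ⟨k, (c ^ k)⁻¹ * x, ?_, by simp⟩
    rw [← map_zpow] at hk
    exact QuotientGroup.eq.1 hk
  have hAB : A ≤ B := by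
    intro a ha
    have : QuotientGroup.mk' A a = 1 := (QuotientGroup.eq_one_iff a).2 ha
    rw [Subgroup.mem_comap, this]; exact one_mem _
  have hBA : B ≤ A := hmax ⟨hzn.comap _, by
    intro x hx y hy
    obtain ⟨k, a, ha, rfl⟩ := hB x hx
    obtain ⟨l, b, hb, rfl⟩ := hB y hy
    have e1 : Commute a (c ^ l) := Commute.zpow_right (hcC' a ha) l
    have e2 : Commute b (c ^ k) := Commute.zpow_right (hcC' b hb) k
    have e3 : Commute a b := hc a ha b hb
    have e4 : Commute (c ^ k) (c ^ l) := Commute.zpow_zpow_self c k l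
    exact ((e4.mul_left e1).mul_right (e2.symm.mul_left e3))⟩ hAB
  exact hz1 ((QuotientGroup.eq_one_iff c).2 (hBA (Subgroup.mem_comap.2 (Subgroup.mem_zpowers _))))

lemma index_dvd {G : Type*} [Group G] [Finite G] {n : ℕ} (ρ : G →* Matrix (Fin n) (Fin n) ℂ)
    (hρ : Function.Injective ρ) (A : Subgroup G) [A.Normal]
    (hA : ∀ a ∈ A, ∀ b ∈ A, a * b = b * a) (hc : ∀ g, (∀ a ∈ A, a * g = g * a) → g ∈ A) :
    A.index ∣ n.factorial := by
  classical
  obtain ⟨b, χ, hb⟩ := joint_eig ρ A hA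
  let X : Set (A →* ℂˣ) := {f | ∃ v : Fin n → ℂ, v ≠ 0 ∧ ∀ a : A, ρ a *ᵥ v = (f a : ℂ) • v}
  have hX : ∀ f ∈ X, ∃ i, χ i = f := by
    rintro f ⟨v, hv, hf⟩
    have : ∃ i, b.repr v i ≠ 0 := by
      by_contra! h
      exact hv (b.repr.map_eq_zero_iff.1 (Finsupp.ext h))
    obtain ⟨i, hi⟩ := this
    refine ⟨i, MonoidHom.ext fun a => Units.ext ?_⟩
    have h1 : ρ a *ᵥ v = ∑ j, (b.repr v j * χ j a) • b j := by
      conv_lhs => rw [← b.sum_repr v]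
      rw [Matrix.mulVec_sum]
      refine Finset.sum_congr rfl fun j _ => ?_
      rw [Matrix.mulVec_smul, hb, smul_smul]
    have h2 := congrArg (fun w => b.repr w i) ((hf a).symm.trans h1)
    simp only [b.repr_sum_self, map_smul, Finsupp.smul_apply, smul_eq_mul] at h2
    rw [mul_comm] at h2
    exact (mul_left_cancel₀ hi h2).symm
  have hχX : ∀ i, χ i ∈ X := fun i => ⟨b i, b.ne_zero i, hb i⟩
  let F : Fin n → X := fun i => ⟨χ i, hχX i⟩
  have hF : Function.Surjective F := fun ⟨f, hf⟩ => by
    obtain ⟨i, rfl⟩ := hX f hf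
    exact ⟨i, rfl⟩
  have : Finite X := Finite.of_surjective F hF
  have hcard : Nat.card X ≤ n := by simpa using Nat.card_le_card_of_surjective F hF
  let act : MulAction G X :=
    { smul := fun g x => ⟨x.1.comp (MulAut.conjNormal g⁻¹ : MulAut A).toMonoidHom, by
        obtain ⟨v, hv, hf⟩ := x.2
        refine ⟨ρ g *ᵥ v, ?_, ?_⟩
        · intro h
          apply hv
          have := congrArg (fun w => ρ g⁻¹ *ᵥ w) h
          simpa [Matrix.mulVec_mulVec, ← map_mul] using this
        · intro a
          have h1 := hf (MulAut.conjNormal g⁻¹ a)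
          rw [MulAut.conjNormal_apply] at h1
          have h2 := congrArg (fun w => ρ g *ᵥ w) h1
          simp only [Matrix.mulVec_mulVec, ← map_mul, Matrix.mulVec_smul] at h2 ⊢
          simpa [mul_assoc] using h2⟩
      one_smul := fun x => Subtype.ext (MonoidHom.ext fun a => by
        change x.1 (MulAut.conjNormal (1 : G)⁻¹ a) = _
        simp)
      mul_smul := fun g h x => Subtype.ext (MonoidHom.ext fun a => by
        change x.1 (MulAut.conjNormal (g * h)⁻¹ a) =
          x.1 (MulAut.conjNormal h⁻¹ (MulAut.conjNormal g⁻¹ a))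
        simp) }
  let φ := MulAction.toPermHom G X
  have hker : φ.ker ≤ A := by
    intro g hg
    apply hc
    intro a ha
    have hg' : ∀ x : X, g • x = x := fun x => by
      have := congrArg (fun σ => σ x) (MonoidHom.mem_ker.1 hg)
      exact this
    have key : MulAut.conjNormal g⁻¹ (⟨a, ha⟩ : A) * (⟨a, ha⟩ : A)⁻¹ = 1 := by
      apply joint_inj ρ hρ A b χ hb
      intro i
      have := congrArg (fun x : X => x.1 ⟨a, ha⟩) (hg' ⟨χ i, hχX i⟩)
      have h3 : χ i (MulAut.conjNormal g⁻¹ (⟨a, ha⟩ : A)) = χ i ⟨a, ha⟩ := this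
      rw [map_mul, h3, map_inv, mul_inv_cancel]
    have := congrArg Subtype.val (mul_inv_eq_one.1 key)
    rw [MulAut.conjNormal_apply] at this
    simp only [inv_inv] at this
    have h4 := congrArg (fun t => g * t) this
    simpa [mul_assoc] using h4
  calc A.index ∣ φ.ker.index := Subgroup.index_dvd_of_le hker
    _ = Nat.card φ.range := Subgroup.index_ker φ
    _ ∣ Nat.card (Equiv.Perm X) := Subgroup.card_subgroup_dvd_card _
    _ = (Nat.card X).factorial := Nat.card_perm
    _ ∣ n.factorial := Nat.factorial_dvd_factorial hcard

lemma pgroup_gens {p : ℕ} [hp : Fact p.Prime] {G : Type*} [Group G] [Finite G]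
    (hG : IsPGroup p G) {n : ℕ} (hn : n ≤ 3) (ρ : G →* Matrix (Fin n) (Fin n) ℂ)
    (hρ : Function.Injective ρ) :
    ∃ S : Finset G, S.card ≤ n + 1 ∧ Subgroup.closure (S : Set G) = ⊤ := by
  classical
  obtain ⟨A, hAn, hA, hc⟩ := pgroup_self_centralizing hG
  have hd := index_dvd ρ hρ A hA hc
  obtain ⟨k, hk⟩ := hG.index A
  have hk1 : k ≤ 1 := by
    by_contra! h
    have h6 : p ^ 2 ∣ 6 := (pow_dvd_pow p h).trans
      ((hk ▸ hd).trans (Nat.factorial_dvd_factorial hn))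
    have h2 := hp.out.two_le
    have : p ≤ 2 := by have := Nat.le_of_dvd (by norm_num) h6; nlinarith
    have : p = 2 := by omega
    subst this; norm_num at h6
  obtain ⟨S, hS, hcl⟩ := gens_abelian ρ hρ A hA
  obtain ⟨T, hT, hTc⟩ := chain_gens p ⊤ _ A le_top rfl (by
    rw [Subgroup.relIndex_top_right, hk]
    intro d hd h1
    obtain ⟨j, _, rfl⟩ := (Nat.dvd_prime_pow hp.out).1 hd
    have : j ≠ 0 := by rintro rfl; simp at h1
    exact Nat.le_self_pow this p)
  rw [Subgroup.relIndex_top_right, hk, Nat.pow_le_pow_iff_right hp.out.one_lt] at hT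
  refine ⟨S ∪ T, (Finset.card_union_le _ _).trans (by omega), ?_⟩
  rw [Finset.coe_union, Subgroup.closure_union, hcl, hTc]

/-- adding to `A` a Sylow `p`-subgroup -/
lemma sylow_gens (p : ℕ) [hp : Fact p.Prime] {G : Type*} [Group G] [Finite G]
    {n : ℕ} (hn : n ≤ 3) (ρ : G →* Matrix (Fin n) (Fin n) ℂ)
    (hρ : Function.Injective ρ) (A : Subgroup G) :
    ∃ S : Finset G, S.card ≤ n + 1 ∧ p ^ S.card ∣ A.index ∧
      ¬ p ∣ (A ⊔ Subgroup.closure (S : Set G)).index := by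
  classical
  obtain ⟨Q⟩ := (inferInstance : Nonempty (Sylow p A))
  obtain ⟨P, hP⟩ := (Q.2.map A.subtype).exists_le_sylow
  let Q' : Subgroup G := (Q : Subgroup A).map A.subtype
  have hQP : Q' ≤ P := hP
  obtain ⟨v, hv⟩ := P.2.index (Q'.subgroupOf P)
  have hv' : Q'.relIndex P = p ^ v := hv
  have hPi : ¬ p ∣ (P : Subgroup G).index := P.not_dvd_index
  have hdv : p ^ v ∣ A.index := by
    have e1 : Q'.relIndex P * (P : Subgroup G).index = Q'.index :=
      Subgroup.relIndex_mul_index hQP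
    have hQA : Q' ≤ A := Subgroup.map_subtype_le _
    have e2 : Q'.relIndex A * A.index = Q'.index := Subgroup.relIndex_mul_index hQA
    have e3 : Q'.relIndex A = (Q : Subgroup A).index := by
      rw [Subgroup.relIndex]
      congr 1
      exact Subgroup.comap_map_eq_self_of_injective A.subtype_injective _
    have h4 : ¬ p ∣ Q'.relIndex A := e3 ▸ Q.not_dvd_index
    have h5 : p ^ v ∣ Q'.relIndex A * A.index := by
      rw [e2, ← e1, hv']; exact Dvd.intro _ rfl
    exact (Nat.Coprime.pow_left v ((Nat.Prime.coprime_iff_not_dvd hp.out).2 h4)).dvd_of_dvd_mul_left h5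
  have fin : ∀ S : Finset G, (P : Subgroup G) ≤ A ⊔ Subgroup.closure (S : Set G) →
      ¬ p ∣ (A ⊔ Subgroup.closure (S : Set G)).index := fun S h hd =>
    hPi (hd.trans (Subgroup.index_dvd_of_le h))
  by_cases hvn : v ≤ n + 1
  · obtain ⟨S, hS, hc⟩ := chain_gens p (P : Subgroup G) _ Q' hQP hv' (by
      intro d hd h1
      obtain ⟨j, _, rfl⟩ := (Nat.dvd_prime_pow hp.out).1 hd
      have : j ≠ 0 := by rintro rfl; simp at h1
      exact Nat.le_self_pow this p)
    rw [Nat.pow_le_pow_iff_right hp.out.one_lt] at hS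
    refine ⟨S, hS.trans hvn, (pow_dvd_pow p hS).trans hdv, fin S ?_⟩
    rw [← hc]
    exact sup_le_sup_right (Subgroup.map_subtype_le _) _
  · obtain ⟨S, hS, hc⟩ := pgroup_gens P.2 hn (ρ.comp (P : Subgroup G).subtype)
      (hρ.comp (Subgroup.subtype_injective _))
    have hS' : (S.image (P : Subgroup G).subtype).card ≤ n + 1 := Finset.card_image_le.trans hS
    refine ⟨S.image (P : Subgroup G).subtype, hS', (pow_dvd_pow p (by omega)).trans hdv, fin _ ?_⟩
    refine le_trans ?_ le_sup_right
    rw [Finset.coe_image, ← MonoidHom.map_closure]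
    erw [hc]
    intro x hx
    exact ⟨⟨x, hx⟩, trivial, rfl⟩

/-- generation bound from an abelian subgroup, small `n` -/
lemma gens_small {G : Type*} [Group G] [Finite G]
    {n : ℕ} (hn : n ≤ 3) (ρ : G →* Matrix (Fin n) (Fin n) ℂ)
    (hρ : Function.Injective ρ) (A : Subgroup G) (hA : ∀ a ∈ A, ∀ b ∈ A, a * b = b * a) :
    ∃ a b c : ℕ, a ≤ n + 1 ∧ b ≤ n + 1 ∧ 2 ^ a * 3 ^ b * 5 ^ c ≤ A.index ∧
    ∃ S : Finset G, S.card ≤ n + a + b + c ∧ Subgroup.closure (S : Set G) = ⊤ := by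
  classical
  have : Fact (Nat.Prime 2) := ⟨Nat.prime_two⟩
  have : Fact (Nat.Prime 3) := ⟨Nat.prime_three⟩
  obtain ⟨S, hS, hcl⟩ := gens_abelian ρ hρ A hA
  obtain ⟨S2, h21, h22, h23⟩ := sylow_gens 2 hn ρ hρ A
  obtain ⟨S3, h31, h32, h33⟩ := sylow_gens 3 hn ρ hρ A
  let K := A ⊔ Subgroup.closure (S2 : Set G) ⊔ Subgroup.closure (S3 : Set G)
  have k2 : ¬ 2 ∣ K.index := fun h => h23 (h.trans (Subgroup.index_dvd_of_le le_sup_left))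
  have k3 : ¬ 3 ∣ K.index := fun h => h33 (h.trans (Subgroup.index_dvd_of_le
    (sup_le_sup_right le_sup_left _)))
  have kA : K.index ∣ A.index := Subgroup.index_dvd_of_le (le_sup_left.trans le_sup_left)
  obtain ⟨T, hT, hTc⟩ := chain_gens 5 ⊤ _ K le_top rfl (by
    rw [Subgroup.relIndex_top_right]
    intro d hd h1
    by_contra! h5
    interval_cases d
    · exact k2 hd
    · exact k3 hd
    · exact k2 (Dvd.dvd.trans (by norm_num) hd))
  rw [Subgroup.relIndex_top_right] at hT
  refine ⟨S2.card, S3.card, T.card, h21, h31, ?_, S ∪ S2 ∪ S3 ∪ T, ?_, ?_⟩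
  · have c1 : Nat.Coprime (2 ^ S2.card) (3 ^ S3.card) := Nat.Coprime.pow _ _ (by norm_num)
    have c2 : Nat.Coprime (2 ^ S2.card * 3 ^ S3.card) K.index :=
      Nat.Coprime.mul_left
        (Nat.Coprime.pow_left _ ((Nat.Prime.coprime_iff_not_dvd Nat.prime_two).2 k2))
        (Nat.Coprime.pow_left _ ((Nat.Prime.coprime_iff_not_dvd Nat.prime_three).2 k3))
    have := c2.mul_dvd_of_dvd_of_dvd (c1.mul_dvd_of_dvd_of_dvd h22 h32) kA
    exact (Nat.mul_le_mul_left _ hT).trans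
      (Nat.le_of_dvd (Nat.pos_of_ne_zero Subgroup.index_ne_zero_of_finite) this)
  · have e1 := Finset.card_union_le S S2
    have e2 := Finset.card_union_le (S ∪ S2) S3
    have e3 := Finset.card_union_le (S ∪ S2 ∪ S3) T
    omega
  · simp only [Finset.coe_union, Subgroup.closure_union, hcl]
    exact hTc

section analysis
open scoped Matrix.Norms.L2Operator ComplexOrder

lemma half_plane {G : Type*} [Group G] [Finite G] {n : ℕ} (ρ : G →* Matrix (Fin n) (Fin n) ℂ)
    (hρ : Function.Injective ρ) (hu : ∀ g, ρ g ∈ unitary (Matrix (Fin n) (Fin n) ℂ)) (g x : G)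
    (d : ℂ) (hx : ‖ρ x - d • 1‖ < 1 / 2)
    (hc : g * (g * x * g⁻¹ * x⁻¹) = (g * x * g⁻¹ * x⁻¹) * g) : g * x = x * g := by
  by_contra hne
  set y := g * x * g⁻¹ * x⁻¹ with hy
  have hy1 : y ≠ 1 := by
    intro h
    apply hne
    rw [hy, mul_inv_eq_one, mul_inv_eq_iff_eq_mul] at h
    exact h
  let K := Subgroup.closure ({g, y} : Set G)
  have hK : ∀ a ∈ K, ∀ b ∈ K, a * b = b * a := by
    have hcm : IsMulCommutative K := Subgroup.isMulCommutative_closure (by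
      intro a ha b hb
      rcases ha with rfl | rfl <;> rcases hb with rfl | rfl <;> first | rfl | exact hc | exact hc.symm)
    intro a ha b hb
    exact congrArg Subtype.val (hcm.is_comm.comm ⟨a, ha⟩ ⟨b, hb⟩)
  have hgK : g ∈ K := Subgroup.subset_closure (by simp)
  have hyK : y ∈ K := Subgroup.subset_closure (by simp)
  obtain ⟨b, χ, hb⟩ := joint_eig ρ K hK
  have : ∃ i, χ i ⟨y, hyK⟩ ≠ 1 := by
    by_contra! h
    exact hy1 (congrArg Subtype.val (joint_inj ρ hρ K b χ hb ⟨y, hyK⟩ h))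
  obtain ⟨i, hi⟩ := this
  set v := b i
  have hv0 : v ≠ 0 := b.ne_zero i
  set a : ℂˣ := χ i ⟨g, hgK⟩
  set l : ℂˣ := χ i ⟨y, hyK⟩
  set w := ρ x⁻¹ *ᵥ v with hw
  have hvw : ρ x *ᵥ w = v := by
    rw [hw, Matrix.mulVec_mulVec, ← map_mul]; simp
  have hgv : ρ g *ᵥ v = (a : ℂ) • v := hb i ⟨g, hgK⟩
  have hgw : ρ g *ᵥ w = ((l⁻¹ * a : ℂˣ) : ℂ) • w := by
    have h1 : ρ (y⁻¹ * g) *ᵥ v = ((l⁻¹ * a : ℂˣ) : ℂ) • v := by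
      have := hb i (⟨y, hyK⟩⁻¹ * ⟨g, hgK⟩)
      rw [map_mul, map_inv] at this
      exact this
    have h2 : g * x⁻¹ = x⁻¹ * (y⁻¹ * g) := by rw [hy]; group
    rw [hw, Matrix.mulVec_mulVec, ← map_mul, h2, map_mul, ← Matrix.mulVec_mulVec, h1,
      Matrix.mulVec_smul]
  -- orthogonality
  have hpres : ∀ (h : G) (s t : Fin n → ℂ), star (ρ h *ᵥ s) ⬝ᵥ (ρ h *ᵥ t) = star s ⬝ᵥ t := by
    intro h s t
    rw [Matrix.star_mulVec, Matrix.dotProduct_mulVec, Matrix.vecMul_vecMul,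
      ← Matrix.star_eq_conjTranspose, (Unitary.mem_iff.1 (hu h)).1, Matrix.vecMul_one]
  have hvv : star v ⬝ᵥ v ≠ 0 := fun h => hv0 (dotProduct_star_self_eq_zero.1 h)
  have haa : star (a : ℂ) * a = 1 := by
    have h1 := hpres g v v
    rw [hgv, star_smul, smul_dotProduct, dotProduct_smul, smul_eq_mul, smul_eq_mul, ← mul_assoc] at h1
    exact mul_right_cancel₀ hvv (h1.trans (one_mul _).symm)
  have horth : star v ⬝ᵥ w = 0 := by
    have h1 := hpres g v w
    rw [hgv, hgw, star_smul, smul_dotProduct, dotProduct_smul, smul_eq_mul, smul_eq_mul,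
      Units.val_mul, ← mul_assoc, mul_comm ((l⁻¹ : ℂˣ) : ℂ), ← mul_assoc, haa, one_mul] at h1
    by_contra h0
    apply hi
    have : ((l⁻¹ : ℂˣ) : ℂ) = 1 := mul_right_cancel₀ h0 (h1.trans (one_mul _).symm)
    exact inv_eq_one.1 (Units.ext this)
  -- norms
  let V : EuclideanSpace ℂ (Fin n) := WithLp.toLp 2 v
  let W : EuclideanSpace ℂ (Fin n) := WithLp.toLp 2 w
  have hinner : ∀ s t : Fin n → ℂ,
      inner ℂ (WithLp.toLp 2 s : EuclideanSpace ℂ (Fin n)) (WithLp.toLp 2 t) = star s ⬝ᵥ t := by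
    intro s t
    rw [EuclideanSpace.inner_toLp_toLp, dotProduct_comm]
  have hVW : inner ℂ V W = 0 := (hinner v w).trans horth
  have hnorm : ‖V‖ = ‖W‖ := by
    have h1 := hpres x w w
    rw [hvw, ← hinner, ← hinner, inner_self_eq_norm_sq_to_K, inner_self_eq_norm_sq_to_K] at h1
    have h2 : ‖V‖ ^ 2 = ‖W‖ ^ 2 := by exact_mod_cast h1
    exact (sq_eq_sq₀ (norm_nonneg _) (norm_nonneg _)).1 h2
  have hW0 : 0 < ‖W‖ := by
    rw [← hnorm, norm_pos_iff]
    intro h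
    exact hv0 (congrArg WithLp.ofLp h)
  have hle : ‖V - d • W‖ ≤ ‖ρ x - d • 1‖ * ‖W‖ := by
    have := Matrix.l2_opNorm_mulVec (ρ x - d • 1) W
    have e : (EuclideanSpace.equiv (Fin n) ℂ).symm ((ρ x - d • 1) *ᵥ W.ofLp) = V - d • W := by
      have : (ρ x - d • 1) *ᵥ w = v - d • w := by
        rw [Matrix.sub_mulVec, hvw, Matrix.smul_mulVec, Matrix.one_mulVec]
      change WithLp.toLp 2 ((ρ x - d • 1) *ᵥ w) = _
      rw [this]; rfl
    rwa [e] at this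
  have hge : ‖V‖ * ‖V‖ ≤ ‖V - d • W‖ * ‖V - d • W‖ := by
    have h0 : inner ℂ V (-(d • W)) = 0 := by
      rw [inner_neg_right, inner_smul_right, hVW]; simp
    have := norm_add_sq_eq_norm_sq_add_norm_sq_of_inner_eq_zero V (-(d • W)) h0
    rw [← sub_eq_add_neg] at this
    rw [this]
    have := mul_self_nonneg ‖-(d • W)‖
    linarith
  have hge' : ‖V‖ ≤ ‖V - d • W‖ := (mul_self_le_mul_self_iff (norm_nonneg _) (norm_nonneg _)).2 hge
  nlinarith

lemma comm_norm {n : ℕ} (A X : Matrix (Fin n) (Fin n) ℂ) (c d : ℂ) :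
    ‖A * X - X * A‖ ≤ 2 * ‖A - c • 1‖ * ‖X - d • 1‖ := by
  have e : A * X - X * A = (A - c • 1) * (X - d • 1) - (X - d • 1) * (A - c • 1) := by
    simp only [sub_mul, mul_sub, smul_mul_assoc, mul_smul_comm, one_mul, mul_one, smul_sub]
    rw [smul_comm c d]
    abel
  rw [e]
  calc _ ≤ ‖(A - c • 1) * (X - d • 1)‖ + ‖(X - d • 1) * (A - c • 1)‖ := norm_sub_le _ _
    _ ≤ ‖A - c • 1‖ * ‖X - d • 1‖ + ‖X - d • 1‖ * ‖A - c • 1‖ :=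
      add_le_add (norm_mul_le _ _) (norm_mul_le _ _)
    _ = _ := by ring

lemma near_commute {G : Type*} [Group G] [Finite G] {n : ℕ} (ρ : G →* Matrix (Fin n) (Fin n) ℂ)
    (hρ : Function.Injective ρ) (hu : ∀ g, ρ g ∈ unitary (Matrix (Fin n) (Fin n) ℂ)) (g x : G)
    (hg : ∃ c : ℂ, ‖ρ g - c • 1‖ < 1 / 2) (hx : ∃ c : ℂ, ‖ρ x - c • 1‖ < 1 / 2) :
    g * x = x * g := by
  by_contra hne
  obtain ⟨c, hc⟩ := hg
  let T : Set G := {x | (∃ c : ℂ, ‖ρ x - c • 1‖ < 1 / 2) ∧ g * x ≠ x * g}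
  obtain ⟨x, ⟨⟨d, hd⟩, hx⟩, hmin⟩ := Set.exists_min_image T (fun x => ‖ρ x - 1‖) (Set.toFinite T)
    ⟨x, hx, hne⟩
  set y := g * x * g⁻¹ * x⁻¹ with hy
  have hcomm : ∀ e : ℂ, ‖ρ y - 1‖ ≤ 2 * ‖ρ g - c • 1‖ * ‖ρ x - e • 1‖ := by
    intro e
    have h1 : (ρ y - 1) * ρ (x * g) = ρ g * ρ x - ρ x * ρ g := by
      rw [sub_mul, one_mul, ← map_mul, ← map_mul, ← map_mul, hy]; group
    have h2 : ‖ρ y - 1‖ = ‖ρ g * ρ x - ρ x * ρ g‖ := by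
      rw [← h1, CStarRing.norm_mul_mem_unitary _ (hu _)]
    rw [h2]
    exact comm_norm _ _ _ _
  have hyT : y ∈ T := by
    refine ⟨⟨1, ?_⟩, ?_⟩
    · rw [one_smul]
      have := hcomm d
      nlinarith [norm_nonneg (ρ g - c • 1), norm_nonneg (ρ x - d • 1)]
    · intro h
      exact hx (half_plane ρ hρ hu g x d hd h)
  have h1 := hmin y hyT
  have h2 := hcomm 1
  rw [one_smul] at h2
  have h3 : ‖ρ x - 1‖ ≤ 0 := by
    nlinarith [norm_nonneg (ρ x - 1)]
  have h4 : ρ x = ρ 1 := by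
    rw [map_one]; exact sub_eq_zero.1 (norm_le_zero_iff.1 h3)
  apply hx
  rw [hρ h4]; simp

lemma exists_abelian {G : Type*} [Group G] [Finite G] {n : ℕ} (ρ : G →* Matrix (Fin n) (Fin n) ℂ)
    (hρ : Function.Injective ρ) (hu : ∀ g, ρ g ∈ unitary (Matrix (Fin n) (Fin n) ℂ)) 
    (W : Submodule ℝ (Matrix (Fin n) (Fin n) ℂ))
    (hW : ∀ g, ∃ z : ℂ, ‖z‖ = 1 ∧ z • ρ g ∈ W) :
    ∃ A : Subgroup G, (∀ a ∈ A, ∀ b ∈ A, a * b = b * a) ∧ A.index ≤ 5 ^ Module.finrank ℝ W := by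
  classical
  let A := Subgroup.closure {g : G | ∃ c : ℂ, ‖ρ g - c • 1‖ < 1 / 2}
  refine ⟨A, ?_, ?_⟩
  · have hcm : IsMulCommutative A := Subgroup.isMulCommutative_closure (by
      intro a ha b hb
      exact near_commute ρ hρ hu a b ha hb)
    intro a ha b hb
    exact congrArg Subtype.val (hcm.is_comm.comm ⟨a, ha⟩ ⟨b, hb⟩)
  choose z hz hzW using hW
  have hsep : ∀ g h : G, ‖z g • ρ g - z h • ρ h‖ < 1 / 2 → (g : G ⧸ A) = h := by
    intro g h hlt
    rw [QuotientGroup.eq]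
    apply Subgroup.subset_closure
    refine ⟨z g / z h, ?_⟩
    have hzh : z h ≠ 0 := norm_ne_zero_iff.1 (by rw [hz]; norm_num)
    have e : z g • ρ g - z h • ρ h = (-z h) • (ρ g * (ρ (g⁻¹ * h) - (z g / z h) • 1)) := by
      rw [mul_sub, ← map_mul, mul_inv_cancel_left, mul_smul_comm, mul_one, smul_sub, smul_smul]
      have : -z h * (z g / z h) = - z g := by field_simp
      rw [this, neg_smul, neg_smul]; abel
    rw [e, norm_smul, norm_neg, hz, one_mul, CStarRing.norm_mem_unitary_mul _ (hu _)] at hlt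
    exact hlt
  let F : G ⧸ A → W := fun q => ⟨(2 : ℝ) • (z q.out • ρ q.out), W.smul_mem _ (hzW q.out)⟩
  have hF : ∀ q r, q ≠ r → 1 ≤ ‖F q - F r‖ := by
    intro q r hqr
    by_contra! hlt
    apply hqr
    rw [← QuotientGroup.out_eq' q, ← QuotientGroup.out_eq' r]
    apply hsep
    have : ‖F q - F r‖ = 2 * ‖z q.out • ρ q.out - z r.out • ρ r.out‖ := by
      change ‖(2 : ℝ) • (z q.out • ρ q.out) - (2 : ℝ) • (z r.out • ρ r.out)‖ = _
      rw [← smul_sub, norm_smul]; simp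
    linarith
  have hFi : Function.Injective F := by
    intro q r h
    by_contra hne
    have := hF q r hne
    rw [h, sub_self, norm_zero] at this
    linarith
  have : Fintype (G ⧸ A) := Fintype.ofFinite _
  have hcard := Besicovitch.card_le_of_separated (Finset.univ.image F) (by
    intro c hc
    obtain ⟨q, _, rfl⟩ := Finset.mem_image.1 hc
    have h1 : ‖ρ q.out‖ ≤ 1 := by
      rcases isEmpty_or_nonempty (Fin n) with h | h
      · rw [Subsingleton.elim (ρ q.out) 0, norm_zero]; exact zero_le_one
      · exact (CStarRing.norm_of_mem_unitary (hu _)).le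
    have : ‖F q‖ = 2 * ‖z q.out • ρ q.out‖ := by
      change ‖(2 : ℝ) • (z q.out • ρ q.out)‖ = _
      rw [norm_smul]; simp
    rw [this, norm_smul, hz]; linarith) (by
    intro c hc d hd hne
    obtain ⟨q, _, rfl⟩ := Finset.mem_image.1 hc
    obtain ⟨r, _, rfl⟩ := Finset.mem_image.1 hd
    exact hF q r (fun h => hne (h ▸ rfl)))
  rw [Finset.card_image_of_injective _ hFi, Finset.card_univ, ← Nat.card_eq_fintype_card] at hcard
  exact hcard

end analysis

section Trick
open scoped ComplexOrder MatrixOrder Matrix.Norms.L2Operator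

lemma unitary_trick {G : Type*} [Group G] [Finite G] {n : ℕ} (σ : G →* Matrix (Fin n) (Fin n) ℂ)
    (hσ : Function.Injective σ) : ∃ ρ : G →* Matrix (Fin n) (Fin n) ℂ, Function.Injective ρ ∧
      ∀ g, ρ g ∈ unitary (Matrix (Fin n) (Fin n) ℂ) := by
  classical
  have : Fintype G := Fintype.ofFinite G
  let S : Matrix (Fin n) (Fin n) ℂ := ∑ g, (σ g)ᴴ * σ g
  have hinv : ∀ h, (σ h)ᴴ * S * σ h = S := by
    intro h
    simp only [S, Finset.mul_sum, Finset.sum_mul]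
    refine Fintype.sum_equiv (Equiv.mulRight h) _ _ fun g => ?_
    simp only [Equiv.coe_mulRight, map_mul, Matrix.conjTranspose_mul, mul_assoc]
  have hpd : S.PosDef := by
    have h1 : S = 1 + ∑ g ∈ Finset.univ.erase (1 : G), (σ g)ᴴ * σ g := by
      simp only [S]
      rw [← Finset.add_sum_erase _ _ (Finset.mem_univ (1 : G))]; simp
    rw [h1]
    exact Matrix.PosDef.one.add_posSemidef
      (Matrix.posSemidef_sum _ fun g _ => Matrix.posSemidef_conjTranspose_mul_self _)
  obtain ⟨B, hB, hS⟩ : ∃ B : Matrix (Fin n) (Fin n) ℂ, IsUnit B ∧ S = Bᴴ * B := by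
    obtain ⟨y, hy, h⟩ := CStarAlgebra.isStrictlyPositive_iff_eq_star_mul_self.mp
      hpd.isStrictlyPositive
    exact ⟨y, hy, h⟩
  obtain ⟨u, rfl⟩ := hB
  have hBi : (↑u⁻¹ : Matrix (Fin n) (Fin n) ℂ)ᴴ * (u : Matrix (Fin n) (Fin n) ℂ)ᴴ = 1 := by
    rw [← Matrix.conjTranspose_mul]; simp
  let ρ : G →* Matrix (Fin n) (Fin n) ℂ :=
    { toFun := fun g => u * σ g * ↑u⁻¹
      map_one' := by simp
      map_mul' := fun x y => by simp [mul_assoc] }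
  refine ⟨ρ, ?_, ?_⟩
  · intro x y h
    apply hσ
    have h' : u * σ x * (↑u⁻¹ : Matrix (Fin n) (Fin n) ℂ) = u * σ y * (↑u⁻¹ : Matrix (Fin n) (Fin n) ℂ) := h
    exact u.isUnit.mul_left_cancel (u⁻¹.isUnit.mul_right_cancel h')
  · intro g
    have h1 : star (u * σ g * (↑u⁻¹ : Matrix (Fin n) (Fin n) ℂ)) *
        (u * σ g * (↑u⁻¹ : Matrix (Fin n) (Fin n) ℂ)) = 1 := by
      rw [Matrix.star_eq_conjTranspose, Matrix.conjTranspose_mul, Matrix.conjTranspose_mul]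
      calc _ = (↑u⁻¹ : Matrix (Fin n) (Fin n) ℂ)ᴴ * ((σ g)ᴴ *
            ((u : Matrix (Fin n) (Fin n) ℂ)ᴴ * u) * σ g) * ↑u⁻¹ := by simp only [mul_assoc]
        _ = 1 := by
          rw [← hS, hinv, hS, ← mul_assoc, hBi, one_mul, Units.mul_inv]
    exact Unitary.mem_iff.2 ⟨h1, mul_eq_one_comm.1 h1⟩

end Trick

lemma finrank_quat (W : Submodule ℝ (Matrix (Fin 2) (Fin 2) ℂ))
    (h : ∀ X ∈ W, X 1 1 = star (X 0 0) ∧ X 0 1 = - star (X 1 0)) : Module.finrank ℝ W ≤ 4 := by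
  let f : W →ₗ[ℝ] (ℂ × ℂ) :=
    { toFun := fun X => (X.1 0 0, X.1 1 0)
      map_add' := fun _ _ => rfl
      map_smul' := fun _ _ => rfl }
  have hf : Function.Injective f := by
    rintro ⟨X, hX⟩ ⟨Y, hY⟩ hXY
    have h0 : X 0 0 = Y 0 0 := congrArg Prod.fst hXY
    have h1 : X 1 0 = Y 1 0 := congrArg Prod.snd hXY
    ext i j
    fin_cases i <;> fin_cases j
    · exact h0
    · show X 0 1 = Y 0 1
      rw [(h X hX).2, (h Y hY).2, h1]
    · exact h1
    · show X 1 1 = Y 1 1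
      rw [(h X hX).1, (h Y hY).1, h0]
  have := LinearMap.finrank_le_finrank_of_injective hf
  have e : Module.finrank ℝ (ℂ × ℂ) = 4 := by
    rw [Module.finrank_prod, Complex.finrank_real_complex]
  omega

lemma arith_big (n : ℕ) (hn : 4 ≤ n) : 5 * n ^ 2 ≤ (n + 1).factorial := by
  induction n, hn using Nat.le_induction with
  | base => decide
  | succ n hn ih =>
    rw [Nat.factorial_succ]
    nlinarith

theorem main_abs {G : Type*} [Group G] [Finite G] {n : ℕ} (σ : G →* Matrix (Fin n) (Fin n) ℂ)
    (hσ : Function.Injective σ) :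
    ∃ S : Finset G, S.card ≤ n + Nat.factorial (n + 1) ∧
      Subgroup.closure (S : Set G) = ⊤ := by
  classical
  obtain ⟨ρ, hρ, hu⟩ := unitary_trick σ hσ
  have hfr : Module.finrank ℝ (⊤ : Submodule ℝ (Matrix (Fin n) (Fin n) ℂ)) = 2 * n ^ 2 := by
    rw [finrank_top, ← Module.finrank_mul_finrank ℝ ℂ, Module.finrank_matrix]; simp [sq]
  have htop := exists_abelian ρ hρ hu ⊤ (fun g => ⟨1, by simp, trivial⟩)
  rw [hfr] at htop
  rcases Nat.lt_or_ge n 4 with hn | hn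
  · interval_cases n
    · obtain ⟨S, hS, hc⟩ := gens_abelian ρ hρ ⊤ (fun a _ b _ => hρ (Subsingleton.elim _ _))
      exact ⟨S, hS.trans (by simp), hc⟩
    · obtain ⟨S, hS, hc⟩ := gens_abelian ρ hρ ⊤ (fun a _ b _ => hρ (by
        rw [map_mul, map_mul]
        ext i j
        simp [Matrix.mul_apply, Subsingleton.elim i 0, Subsingleton.elim j 0, mul_comm]))
      exact ⟨S, hS.trans (by simp), hc⟩
    · let W : Submodule ℝ (Matrix (Fin 2) (Fin 2) ℂ) :=
        { carrier := {X | X 1 1 = star (X 0 0) ∧ X 0 1 = - star (X 1 0)}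
          add_mem' := by
            rintro X Y ⟨h1, h2⟩ ⟨h3, h4⟩
            refine ⟨by simp [h1, h3], by simp [h2, h4]; ring⟩
          zero_mem' := by simp
          smul_mem' := by
            rintro c X ⟨h1, h2⟩
            refine ⟨by simp [h1], by simp [h2]⟩ }
      obtain ⟨A, hA, hAi⟩ := exists_abelian ρ hρ hu W (by
        intro g
        have hun := Unitary.mem_iff.1 (hu g)
        set X := ρ g
        have hdet : star X.det * X.det = 1 := by
          have := congrArg Matrix.det hun.1
          rwa [Matrix.det_mul, Matrix.star_eq_conjTranspose, Matrix.det_conjTranspose,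
            Matrix.det_one] at this
        have hdn : ‖X.det‖ = 1 := by
          have h1 := congrArg norm hdet
          rw [norm_mul, norm_star, norm_one] at h1
          nlinarith [norm_nonneg X.det]
        obtain ⟨z, hz⟩ := IsAlgClosed.exists_pow_nat_eq (star X.det) (n := 2) (by norm_num)
        have hzn : ‖z‖ = 1 := by
          have h1 := congrArg norm hz
          rw [norm_pow, norm_star, hdn] at h1
          nlinarith [norm_nonneg z]
        refine ⟨z, hzn, ?_⟩
        set Y := z • X with hY
        have hYdet : Y.det = 1 := by
          rw [hY, Matrix.det_smul, Fintype.card_fin, hz, hdet]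
        have hzz : star z * z = 1 := by
          have := Complex.conj_mul' z
          rw [hzn] at this; simpa using this
        have hYu : star Y * Y = 1 := by
          rw [hY, star_smul, smul_mul_smul_comm, hzz, hun.1, one_smul]
        have hadj : Y.adjugate = star Y := by
          calc Y.adjugate = (star Y * Y) * Y.adjugate := by rw [hYu, one_mul]
            _ = star Y := by rw [mul_assoc, Matrix.mul_adjugate, hYdet, one_smul, mul_one]
        rw [Matrix.adjugate_fin_two] at hadj
        have e1 := congrFun (congrFun hadj 0) 0
        have e2 := congrFun (congrFun hadj 0) 1
        simp only [Matrix.star_eq_conjTranspose, Matrix.conjTranspose_apply] at e1 e2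
        refine ⟨by simpa using e1, ?_⟩
        have e2' : - Y 0 1 = star (Y 1 0) := by simpa using e2
        rw [← e2', neg_neg])
      have h4 := finrank_quat W (fun X hX => hX)
      have hA5 : A.index ≤ 5 ^ 4 := hAi.trans (Nat.pow_le_pow_right (by norm_num) h4)
      obtain ⟨a, b, c, ha, hb, hle, S, hS, hc⟩ := gens_small (by norm_num) ρ hρ A hA
      refine ⟨S, hS.trans ?_, hc⟩
      have hle := hle.trans hA5
      have : a + b + c ≤ 6 := by
        by_contra! hcon
        have h5 : 5 ^ (7 - a - b) ≤ 5 ^ c := Nat.pow_le_pow_right (by norm_num) (by omega)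
        have := (Nat.mul_le_mul_left (2 ^ a * 3 ^ b) h5).trans hle
        clear hle h5 hcon hS hfr htop
        interval_cases a <;> interval_cases b <;> norm_num at this
      have : Nat.factorial (2 + 1) = 6 := rfl
      omega
    · obtain ⟨A, hA, hAi⟩ := htop
      obtain ⟨a, b, c, ha, hb, hle, S, hS, hc⟩ := gens_small (by norm_num) ρ hρ A hA
      refine ⟨S, hS.trans ?_, hc⟩
      have hle := hle.trans hAi
      have : a + b + c ≤ 24 := by
        by_contra! hcon
        have h5 : 5 ^ (25 - a - b) ≤ 5 ^ c := Nat.pow_le_pow_right (by norm_num) (by omega)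
        have := (Nat.mul_le_mul_left (2 ^ a * 3 ^ b) h5).trans hle
        clear hle h5 hcon hS hfr hAi
        interval_cases a <;> interval_cases b <;> norm_num at this
      have : Nat.factorial (3 + 1) = 24 := rfl
      omega
  · obtain ⟨A, hA, hAi⟩ := htop
    obtain ⟨S, hS, hcl⟩ := gens_abelian ρ hρ A hA
    obtain ⟨T, hT, hTc⟩ := chain_gens 2 ⊤ _ A le_top rfl (fun d _ h => h)
    rw [Subgroup.relIndex_top_right] at hT
    refine ⟨S ∪ T, (Finset.card_union_le _ _).trans (add_le_add hS ?_), ?_⟩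
    · refine le_trans ?_ (arith_big n hn)
      have h1 : 2 ^ T.card ≤ 2 ^ (5 * n ^ 2) := by
        calc 2 ^ T.card ≤ 5 ^ (2 * n ^ 2) := hT.trans hAi
          _ = (5 ^ 2) ^ (n ^ 2) := pow_mul _ _ _
          _ ≤ (2 ^ 5) ^ (n ^ 2) := Nat.pow_le_pow_left (by norm_num) _
          _ = 2 ^ (5 * n ^ 2) := (pow_mul _ _ _).symm
      exact (Nat.pow_le_pow_iff_right (by norm_num)).1 h1
    · rw [Finset.coe_union, Subgroup.closure_union, hcl, hTc]

/-- For every `n` there is a constant `c = c(n)` (concretely `c = n + (n+1)!`)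
bounding the minimal number of generators of every finite subgroup of `GL n ℂ`. -/
theorem finite_subgroup_GL_generated_by_const
    (n : ℕ) (H : Subgroup (GL (Fin n) ℂ)) [Finite H] :
    ∃ S : Finset H, S.card ≤ n + Nat.factorial (n + 1) ∧
      Subgroup.closure (S : Set H) = ⊤ := by
  refine main_abs ((Units.coeHom (Matrix (Fin n) (Fin n) ℂ)).comp H.subtype) ?_
  exact Units.val_injective.comp H.subtype_injective
end

section
/- Let X₁, …, Xₙ be pure-dimensional projective varieties over ℂ and let Z₁, …, Zₘ be the irreducible components of X₁ ∩ ⋯ ∩ Xₙ. Then Σᵢ deg(Zᵢ) ≤ Πⱼ deg(Xⱼ). In particular, the number m of irreducible components of the intersection is at most the product of the degrees. -/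
/-! We formalize projective varieties in `ℙ^N(ℂ)` via their affine cones in
`V = ℂ^(N+1)`: zero sets of families of homogeneous polynomials.  The
(projective) dimension is defined via chains of irreducible subvarieties, the
degree of a variety as the largest (projective) number of points in a finite
intersection with a linear subspace — by the classical theory this recovers
the usual degree, since a generic linear space of complementary dimension
realizes it and no finite linear section can exceed it. -/

variable (N : ℕ)

/-- The affine cone cut out by a set of polynomials. -/
def zeroLocus (S : Set (MvPolynomial (Fin (N + 1)) ℂ)) : Set (Fin (N + 1) → ℂ) :=
  {v | ∀ p ∈ S, MvPolynomial.eval v p = 0}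

/-- `X` is the affine cone of a projective algebraic set: the zero locus of a
family of homogeneous polynomials. -/
def IsAlgCone (X : Set (Fin (N + 1) → ℂ)) : Prop :=
  ∃ S : Set (MvPolynomial (Fin (N + 1)) ℂ),
    (∀ p ∈ S, ∃ d, p.IsHomogeneous d) ∧ X = zeroLocus N S

/-- `X` is the cone of an irreducible projective variety: it is a nontrivial
algebraic cone which is not covered by two algebraic sets unless it lies in
one of them. -/
def IsIrredCone (X : Set (Fin (N + 1) → ℂ)) : Prop :=
  IsAlgCone N X ∧ ¬ X ⊆ {0} ∧
    ∀ Y Z : Set (Fin (N + 1) → ℂ), IsAlgCone N Y → IsAlgCone N Z →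
      X ⊆ Y ∪ Z → X ⊆ Y ∨ X ⊆ Z

/-- `Z` is an irreducible component of `X`: a maximal irreducible subvariety. -/
def IsIrredComponent (X Z : Set (Fin (N + 1) → ℂ)) : Prop :=
  IsIrredCone N Z ∧ Z ⊆ X ∧
    ∀ Z', IsIrredCone N Z' → Z ⊆ Z' → Z' ⊆ X → Z' = Z

/-- The (projective) dimension of `X`: the longest chain
`c 0 ⊂ c 1 ⊂ ⋯ ⊂ c k ⊆ X` of irreducible subvarieties. -/
noncomputable def projDim (X : Set (Fin (N + 1) → ℂ)) : ℕ :=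
  sSup {k : ℕ | ∃ c : Fin (k + 1) → Set (Fin (N + 1) → ℂ),
    (∀ i, IsIrredCone N (c i) ∧ c i ⊆ X) ∧ ∀ i j, i < j → c i ⊂ c j}

/-- The projective points of a cone `X`: the lines through the origin
contained in `X`. -/
def projPoints (X : Set (Fin (N + 1) → ℂ)) : Set (Submodule ℂ (Fin (N + 1) → ℂ)) :=
  {L | Module.finrank ℂ L = 1 ∧ (L : Set (Fin (N + 1) → ℂ)) ⊆ X}

/-- The degree of a projective variety (given by its cone `X`): the largest
number of projective points in a finite intersection of `X` with a linear
subspace. -/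
noncomputable def projDegree (X : Set (Fin (N + 1) → ℂ)) : ℕ :=
  sSup {k : ℕ | ∃ W : Submodule ℂ (Fin (N + 1) → ℂ),
    (projPoints N (X ∩ (W : Set (Fin (N + 1) → ℂ)))).Finite ∧
      (projPoints N (X ∩ (W : Set (Fin (N + 1) → ℂ)))).ncard = k}


namespace GB
open MvPolynomial

section basics
variable {σ : Type*}

def Cone (V : Set (σ → ℂ)) : Prop :=
  ∃ S : Set (MvPolynomial σ ℂ), (∀ p ∈ S, ∃ d, p.IsHomogeneous d) ∧
    V = {v | ∀ p ∈ S, eval v p = 0}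

def Irr (V : Set (σ → ℂ)) : Prop :=
  Cone V ∧ ¬ V ⊆ {0} ∧ ∀ Y Z : Set (σ → ℂ), Cone Y → Cone Z → V ⊆ Y ∪ Z → V ⊆ Y ∨ V ⊆ Z

def Comp (X Z : Set (σ → ℂ)) : Prop :=
  Irr Z ∧ Z ⊆ X ∧ ∀ Z', Irr Z' → Z ⊆ Z' → Z' ⊆ X → Z' = Z

/-- vanishing ideal -/
noncomputable def I (V : Set (σ → ℂ)) : Ideal (MvPolynomial σ ℂ) := vanishingIdeal ℂ V

lemma mem_I {V : Set (σ → ℂ)} {p : MvPolynomial σ ℂ} : p ∈ I V ↔ ∀ x ∈ V, eval x p = 0 := by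
  simp [I, mem_vanishingIdeal_iff]

lemma I_anti {V W : Set (σ → ℂ)} (h : V ⊆ W) : I W ≤ I V := fun _ hp =>
  mem_I.2 fun x hx => mem_I.1 hp x (h hx)

lemma eval_smul_homog {p : MvPolynomial σ ℂ} {d : ℕ} (hp : p.IsHomogeneous d) (c : ℂ)
    (v : σ → ℂ) : eval (c • v) p = c ^ d * eval v p := by
  rw [eval_eq, eval_eq, Finset.mul_sum]
  refine Finset.sum_congr rfl fun m hm => ?_
  have h1 := hp.degree_eq_sum_deg_support hm
  simp only [Pi.smul_apply, smul_eq_mul, mul_pow, Finset.prod_mul_distrib]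
  rw [Finset.prod_pow_eq_pow_sum, ← h1]
  ring

lemma Cone.smul {V : Set (σ → ℂ)} (hV : Cone V) {v : σ → ℂ} (hv : v ∈ V) (c : ℂ) : c • v ∈ V := by
  obtain ⟨S, hS, rfl⟩ := hV
  intro p hp
  obtain ⟨d, hd⟩ := hS p hp
  rw [eval_smul_homog hd, hv p hp, mul_zero]

lemma comp_mem_I {V : Set (σ → ℂ)} (hV : ∀ v ∈ V, ∀ c : ℂ, c • v ∈ V) {p : MvPolynomial σ ℂ}
    (hp : p ∈ I V) (n : ℕ) : homogeneousComponent n p ∈ I V := by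
  rw [mem_I] at hp ⊢
  intro x hx
  let P : Polynomial ℂ := ∑ i ∈ Finset.range (p.totalDegree + 1),
    Polynomial.monomial i (eval x (homogeneousComponent i p))
  have hP : P = 0 := by
    apply Polynomial.funext
    intro c
    have := hp _ (hV x hx c)
    rw [← sum_homogeneousComponent p, map_sum] at this
    simp only [P, Polynomial.eval_finsetSum, Polynomial.eval_monomial, Polynomial.eval_zero]
    rw [← this]
    refine Finset.sum_congr rfl fun i _ => ?_
    rw [eval_smul_homog (homogeneousComponent_isHomogeneous i p)]
    ring
  by_cases hn : n < p.totalDegree + 1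
  · have := congrArg (fun q => Polynomial.coeff q n) hP
    simp only [P, Polynomial.finsetSum_coeff, Polynomial.coeff_monomial] at this
    simpa [Finset.sum_ite_eq', Nat.lt_succ_iff.1 hn] using this
  · rw [homogeneousComponent_eq_zero n p (by omega)]; simp

lemma Cone.comp_mem {V : Set (σ → ℂ)} (hV : Cone V) {p : MvPolynomial σ ℂ}
    (hp : p ∈ I V) (n : ℕ) : homogeneousComponent n p ∈ I V :=
  comp_mem_I (fun _ hv c => hV.smul hv c) hp n

lemma Cone.mem_iff {V : Set (σ → ℂ)} (hV : Cone V) {v : σ → ℂ} :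
    v ∈ V ↔ ∀ p ∈ I V, eval v p = 0 := by
  constructor
  · intro hv p hp; exact mem_I.1 hp v hv
  · obtain ⟨S, hS, rfl⟩ := hV
    intro h p hp
    exact h p (mem_I.2 fun x hx => hx p hp)

lemma Cone.subset_iff {V W : Set (σ → ℂ)} (hW : Cone W) : V ⊆ W ↔ I W ≤ I V := by
  refine ⟨I_anti, fun h v hv => hW.mem_iff.2 fun p hp => mem_I.1 (h hp) v hv⟩

lemma Cone.eq_iff {V W : Set (σ → ℂ)} (hV : Cone V) (hW : Cone W) : V = W ↔ I V = I W := by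
  refine ⟨fun h => h ▸ rfl, fun h => ?_⟩
  exact Set.Subset.antisymm (hW.subset_iff.2 h.ge) (hV.subset_iff.2 h.le)

lemma Cone.iInter {ι : Type*} {X : ι → Set (σ → ℂ)} (h : ∀ i, Cone (X i)) : Cone (⋂ i, X i) := by
  choose S hS hX using h
  refine ⟨⋃ i, S i, ?_, ?_⟩
  · intro p hp
    obtain ⟨i, hi⟩ := Set.mem_iUnion.1 hp
    exact hS i p hi
  · ext v
    simp only [Set.mem_iInter, Set.mem_ofPred_eq, Set.mem_iUnion]
    constructor
    · rintro h p ⟨i, hi⟩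
      have := h i
      rw [hX i] at this
      exact this p hi
    · intro h i
      rw [hX i]
      exact fun p hp => h p ⟨i, hp⟩

lemma Cone.inter {V W : Set (σ → ℂ)} (hV : Cone V) (hW : Cone W) : Cone (V ∩ W) := by
  rw [Set.inter_eq_iInter]
  exact Cone.iInter (fun b => by cases b <;> assumption)

lemma Cone.union {V W : Set (σ → ℂ)} (hV : Cone V) (hW : Cone W) : Cone (V ∪ W) := by
  obtain ⟨S, hS, rfl⟩ := hV
  obtain ⟨T, hT, rfl⟩ := hW
  refine ⟨{r | ∃ p ∈ S, ∃ q ∈ T, r = p * q}, ?_, ?_⟩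
  · rintro _ ⟨p, hp, q, hq, rfl⟩
    obtain ⟨d, hd⟩ := hS p hp
    obtain ⟨e, he⟩ := hT q hq
    exact ⟨d + e, hd.mul he⟩
  · ext v
    constructor
    · rintro (h | h) _ ⟨p, hp, q, hq, rfl⟩
      · simp [h p hp]
      · simp [h q hq]
    · intro h
      by_contra hc
      simp only [Set.mem_union, Set.mem_ofPred_eq, not_or, not_forall] at hc
      obtain ⟨⟨p, hp, hp'⟩, q, hq, hq'⟩ := hc
      have := h _ ⟨p, hp, q, hq, rfl⟩
      rw [map_mul] at this
      exact (mul_ne_zero hp' hq') this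

lemma cone_of_homog {p : MvPolynomial σ ℂ} {d : ℕ} (hp : p.IsHomogeneous d) :
    Cone {v : σ → ℂ | eval v p = 0} :=
  ⟨{p}, by rintro _ rfl; exact ⟨d, hp⟩, by simp⟩

lemma cone_zero : Cone ({0} : Set (σ → ℂ)) := by
  refine ⟨Set.range X, ?_, ?_⟩
  · rintro _ ⟨i, rfl⟩; exact ⟨1, isHomogeneous_X _ _⟩
  · ext v; simp [funext_iff]

lemma cone_biUnion {T : Finset (Set (σ → ℂ))} (h : ∀ Z ∈ T, Cone Z) : Cone (⋃ Z ∈ T, Z) := by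
  classical
  induction T using Finset.induction_on with
  | empty =>
    refine ⟨{1}, by rintro _ rfl; exact ⟨0, isHomogeneous_one _ _⟩, by simp⟩
  | insert a s ha ih =>
    rw [Finset.set_biUnion_insert]
    exact (h a (by simp)).union (ih fun Z hZ => h Z (by simp [hZ]))

lemma Irr.subset_of_biUnion {V : Set (σ → ℂ)} (hV : Irr V) {T : Finset (Set (σ → ℂ))}
    (h : ∀ Z ∈ T, Cone Z) (hsub : V ⊆ {0} ∪ ⋃ Z ∈ T, Z) : ∃ Z ∈ T, V ⊆ Z := by
  classical
  induction T using Finset.induction_on with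
  | empty => exact absurd (by simpa using hsub) hV.2.1
  | insert a s ha ih =>
    have hs : ∀ Z ∈ s, Cone Z := fun Z hZ => h Z (by simp [hZ])
    rw [Finset.set_biUnion_insert] at hsub
    rcases hV.2.2 a ({0} ∪ ⋃ Z ∈ s, Z) (h a (by simp)) (cone_zero.union (cone_biUnion hs))
      (hsub.trans (by intro x hx; simp only [Set.mem_union] at hx ⊢; tauto)) with h1 | h1
    · exact ⟨a, by simp, h1⟩
    · obtain ⟨Z, hZ, h2⟩ := ih hs h1
      exact ⟨Z, by simp [hZ], h2⟩

lemma Irr.nonempty {V : Set (σ → ℂ)} (hV : Irr V) : ∃ v ∈ V, v ≠ 0 := by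
  by_contra h
  push Not at h
  exact hV.2.1 fun v hv => h v hv

lemma Irr.zero_mem {V : Set (σ → ℂ)} (hV : Irr V) : (0 : σ → ℂ) ∈ V := by
  obtain ⟨v, hv, _⟩ := hV.nonempty
  simpa using hV.1.smul hv 0

lemma Cone.isHomogeneous {V : Set (σ → ℂ)} (hV : Cone V) :
    letI := MvPolynomial.gradedAlgebra (σ := σ) (R := ℂ)
    (I V).IsHomogeneous (homogeneousSubmodule σ ℂ) := by
  intro i p hp
  have := hV.comp_mem hp i
  rwa [← decomposition.decompose'_apply] at this

lemma Irr.prime {V : Set (σ → ℂ)} (hV : Irr V) : (I V).IsPrime := by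
  letI := MvPolynomial.gradedAlgebra (σ := σ) (R := ℂ)
  apply hV.1.isHomogeneous.isPrime_of_homogeneous_mem_or_mem
  · intro h
    obtain ⟨v, hv, _⟩ := hV.nonempty
    have : (1 : MvPolynomial σ ℂ) ∈ I V := by rw [h]; trivial
    simpa using mem_I.1 this v hv
  · rintro p q ⟨d, hd⟩ ⟨e, he⟩ hpq
    rcases hV.2.2 _ _ (cone_of_homog hd) (cone_of_homog he) (by
      intro v hv
      have := mem_I.1 hpq v hv
      rw [map_mul] at this
      exact mul_eq_zero.1 this) with h | h
    · exact Or.inl (mem_I.2 h)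
    · exact Or.inr (mem_I.2 h)

lemma irr_of_prime {V : Set (σ → ℂ)} (hV : Cone V) (h0 : ¬ V ⊆ {0}) (hp : (I V).IsPrime) :
    Irr V := by
  refine ⟨hV, h0, fun Y Z hY hZ hsub => ?_⟩
  by_contra hc
  rw [not_or, hY.subset_iff, hZ.subset_iff, SetLike.not_le_iff_exists, SetLike.not_le_iff_exists]
    at hc
  obtain ⟨⟨f, hf, hf'⟩, g, hg, hg'⟩ := hc
  rcases hp.mem_or_mem (x := f) (y := g) (mem_I.2 fun v hv => by
    rw [map_mul]
    rcases hsub hv with h | h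
    · rw [mem_I.1 hf v h, zero_mul]
    · rw [mem_I.1 hg v h, mul_zero]) with h | h
  · exact hf' h
  · exact hg' h

/-- Noetherian induction on cones. -/
lemma cone_induction [Finite σ] {P : Set (σ → ℂ) → Prop}
    (h : ∀ V, Cone V → (∀ W, Cone W → W ⊂ V → P W) → P V) (V : Set (σ → ℂ)) (hV : Cone V) :
    P V := by
  have key : ∀ J : Ideal (MvPolynomial σ ℂ), ∀ V, Cone V → I V = J → P V := by
    intro J
    induction J using WellFoundedGT.induction with
    | ind J ih =>
      intro V hV hJ
      apply h V hV
      intro W hW hWV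
      refine ih (I W) ?_ W hW rfl
      rw [← hJ]
      refine lt_of_le_of_ne (I_anti hWV.1) fun he => ?_
      exact hWV.ne ((hW.eq_iff hV).2 he.symm)
  exact key _ V hV rfl

lemma exists_irr_decomp [Finite σ] (V : Set (σ → ℂ)) (hV : Cone V) :
    ∃ T : Finset (Set (σ → ℂ)), (∀ Z ∈ T, Irr Z ∧ Z ⊆ V) ∧ V ⊆ {0} ∪ ⋃ Z ∈ T, Z := by
  classical
  refine cone_induction (P := fun V => ∃ T : Finset (Set (σ → ℂ)),
    (∀ Z ∈ T, Irr Z ∧ Z ⊆ V) ∧ V ⊆ {0} ∪ ⋃ Z ∈ T, Z) (fun V hV ih => ?_) V hV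
  · by_cases h0 : V ⊆ {0}
    · exact ⟨∅, by simp, by simpa using h0⟩
    by_cases hI : Irr V
    · exact ⟨{V}, by simpa using hI, by simp⟩
    have : ∃ Y Z, Cone Y ∧ Cone Z ∧ V ⊆ Y ∪ Z ∧ ¬ V ⊆ Y ∧ ¬ V ⊆ Z := by
      by_contra hc
      push Not at hc
      refine hI ⟨hV, h0, fun Y Z hY hZ hs => ?_⟩
      by_contra h'
      rw [not_or] at h'
      exact h'.2 (hc Y Z hY hZ hs h'.1)
    obtain ⟨Y, Z, hY, hZ, hs, h1, h2⟩ := this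
    obtain ⟨T1, hT1, hT1'⟩ := ih (V ∩ Y) (hV.inter hY)
      ⟨Set.inter_subset_left, fun h => h1 fun x hx => (h hx).2⟩
    obtain ⟨T2, hT2, hT2'⟩ := ih (V ∩ Z) (hV.inter hZ)
      ⟨Set.inter_subset_left, fun h => h2 fun x hx => (h hx).2⟩
    refine ⟨T1 ∪ T2, ?_, ?_⟩
    · intro W hW
      rcases Finset.mem_union.1 hW with h | h
      · exact ⟨(hT1 W h).1, (hT1 W h).2.trans Set.inter_subset_left⟩
      · exact ⟨(hT2 W h).1, (hT2 W h).2.trans Set.inter_subset_left⟩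
    · intro x hx
      rw [Finset.set_biUnion_union]
      rcases hs hx with h | h
      · rcases hT1' ⟨hx, h⟩ with h | h
        · exact Or.inl h
        · exact Or.inr (Or.inl h)
      · rcases hT2' ⟨hx, h⟩ with h | h
        · exact Or.inl h
        · exact Or.inr (Or.inr h)

/-- every irreducible subset is contained in a component; the components are finite in number -/
lemma exists_comps [Finite σ] (V : Set (σ → ℂ)) (hV : Cone V) :
    ∃ T : Finset (Set (σ → ℂ)), (∀ Z, Z ∈ T ↔ Comp V Z) ∧ V ⊆ {0} ∪ ⋃ Z ∈ T, Z ∧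
      ∀ W, Irr W → W ⊆ V → ∃ Z ∈ T, W ⊆ Z := by
  classical
  obtain ⟨T, hT, hT'⟩ := exists_irr_decomp V hV
  have hc : ∀ Z ∈ T, Cone Z := fun Z hZ => (hT Z hZ).1.1
  have hiff : ∀ Z, Z ∈ T.filter (fun Z => ∀ W ∈ T, Z ⊆ W → W = Z) ↔ Comp V Z := by
    intro Z
    rw [Finset.mem_filter]
    constructor
    · rintro ⟨h1, h2⟩
      refine ⟨(hT Z h1).1, (hT Z h1).2, fun Z' hZ' hs hs' => ?_⟩
      obtain ⟨W, hW, hW'⟩ := hZ'.subset_of_biUnion hc (hs'.trans hT')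
      have := h2 W hW (hs.trans hW')
      subst this
      exact hW'.antisymm hs
    · rintro ⟨h1, h2, h3⟩
      obtain ⟨W, hW, hW'⟩ := h1.subset_of_biUnion hc (h2.trans hT')
      have := h3 W (hT W hW).1 hW' (hT W hW).2
      subst this
      exact ⟨hW, fun W' hW' hs => h3 W' (hT W' hW').1 hs (hT W' hW').2⟩
  have hle : ∀ W, Irr W → W ⊆ V → ∃ Z ∈ T.filter (fun Z => ∀ W ∈ T, Z ⊆ W → W = Z), W ⊆ Z := by
    intro W hW hWV
    obtain ⟨W', hW', hs⟩ := hW.subset_of_biUnion hc (hWV.trans hT')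
    obtain ⟨M, hM, hmax⟩ := T.exists_le_maximal hW'
    refine ⟨M, Finset.mem_filter.2 ⟨hmax.1, fun W hW hs => ?_⟩, hs.trans hM⟩
    exact (hmax.2 hW hs).antisymm hs
  refine ⟨_, hiff, ?_, hle⟩
  intro x hx
  rcases hT' hx with h | h
  · exact Or.inl h
  · simp only [Set.mem_iUnion] at h
    obtain ⟨Z, hZ, hxZ⟩ := h
    obtain ⟨M, hM, hs⟩ := hle Z (hT Z hZ).1 (hT Z hZ).2
    right
    simp only [Set.mem_iUnion]
    exact ⟨M, hM, hs hxZ⟩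

end basics
end GB


namespace GB
open MvPolynomial

section combinatorics
open Filter Topology

lemma choose_lim (m k : ℕ) : Tendsto (fun t : ℕ => (((t + k).choose m : ℕ) : ℝ) / (t : ℝ) ^ m) atTop
    (𝓝 (1 / (m.factorial : ℝ))) := by
  have h1 : Tendsto (fun t : ℕ => ((t.choose m : ℕ) : ℝ) / (t : ℝ) ^ m) atTop
      (𝓝 (1 / (m.factorial : ℝ))) := by
    have hz : ∀ᶠ (x : ℕ) in atTop, ((x : ℝ) ^ m / m.factorial) ≠ 0 := by
      filter_upwards [eventually_gt_atTop 0] with x hx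
      positivity
    have := (Asymptotics.isEquivalent_iff_tendsto_one hz).1 (isEquivalent_choose m)
    have h2 := this.mul_const (1 / (m.factorial : ℝ))
    rw [one_mul] at h2
    refine h2.congr' ?_
    filter_upwards [eventually_gt_atTop 0] with x hx
    simp only [Pi.div_apply]
    have : (m.factorial : ℝ) ≠ 0 := by positivity
    field_simp
  have h2 := (tendsto_add_atTop_iff_nat k).2 h1
  have h3 : Tendsto (fun t : ℕ => (((t + k : ℕ) : ℝ) / t) ^ m) atTop (𝓝 1) := by
    have : Tendsto (fun t : ℕ => ((t : ℝ) / (t + (k : ℝ)))) atTop (𝓝 1) :=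
      tendsto_natCast_div_add_atTop (k : ℝ)
    have h4 := (this.inv₀ one_ne_zero).pow m
    simpa [inv_div] using h4
  have h4 := h2.mul h3
  rw [mul_one] at h4
  refine h4.congr' ?_
  filter_upwards [eventually_gt_atTop 0] with x hx
  have : (x : ℝ) ≠ 0 := by positivity
  have : ((x + k : ℕ) : ℝ) ≠ 0 := by positivity
  rw [div_pow]
  field_simp

lemma mc_eq (m t : ℕ) : (m + 1).multichoose t = (t + m).choose m := by
  rw [Nat.multichoose_eq, Nat.choose_symm_of_eq_add (a := t) (b := m) (by omega)]
  congr 1; omega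

lemma mc_pos (m t : ℕ) (hm : 1 ≤ m) : 1 ≤ m.multichoose t := by
  obtain ⟨m, rfl⟩ : ∃ k, m = k + 1 := ⟨m - 1, by omega⟩
  rw [mc_eq]
  exact Nat.choose_pos (by omega)

lemma mc_cmp {n n' r r' s : ℕ} (hn : 1 ≤ n) (hr : 1 ≤ r)
    (h : ∀ t, r * n.multichoose t ≤ r' * n'.multichoose (t + s)) :
    n < n' ∨ (n = n' ∧ r ≤ r') := by
  obtain ⟨m, rfl⟩ : ∃ k, n = k + 1 := ⟨n - 1, by omega⟩
  rcases n' with _ | m'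
  · exfalso
    have h1 := h 1
    have h2 := mc_pos (m + 1) 1 (by omega)
    have : (0 : ℕ).multichoose (1 + s) = 0 := by rw [add_comm]; simp
    rw [this] at h1
    nlinarith
  by_contra hc
  push Not at hc
  have hmm : m' ≤ m := by omega
  have hineq : ∀ᶠ t : ℕ in atTop, (r : ℝ) * ((((t + m).choose m : ℕ) : ℝ) / (t : ℝ) ^ m) ≤
      (r' : ℝ) * ((((t + (s + m')).choose m' : ℕ) : ℝ) / (t : ℝ) ^ m') * (1 / (t : ℝ) ^ (m - m')) := by
    filter_upwards [eventually_gt_atTop 0] with t ht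
    have h1 := h t
    rw [mc_eq, mc_eq, add_assoc] at h1
    have h2 : (r : ℝ) * (((t + m).choose m : ℕ) : ℝ) ≤ (r' : ℝ) * ((t + (s + m')).choose m' : ℕ) := by
      exact_mod_cast h1
    have ht' : (0 : ℝ) < t := by positivity
    have e : (t : ℝ) ^ m = (t : ℝ) ^ m' * (t : ℝ) ^ (m - m') := by
      rw [← pow_add]; congr 1; omega
    calc _ = (r : ℝ) * (((t + m).choose m : ℕ) : ℝ) / (t : ℝ) ^ m := by ring
      _ ≤ (r' : ℝ) * ((t + (s + m')).choose m' : ℕ) / (t : ℝ) ^ m := by gcongr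
      _ = _ := by rw [e]; field_simp
  have hl := (choose_lim m m).const_mul (r : ℝ)
  have hr1 := (choose_lim m' (s + m')).const_mul (r' : ℝ)
  have hfp : (0 : ℝ) < 1 / (m.factorial : ℝ) := by positivity
  have hr0 : (0 : ℝ) < r := by exact_mod_cast hr
  rcases hmm.lt_or_eq with hlt | heq
  · have h0 : Tendsto (fun t : ℕ => 1 / (t : ℝ) ^ (m - m')) atTop (𝓝 0) := by
      have : Tendsto (fun t : ℕ => (t : ℝ) ^ (m - m')) atTop atTop :=
        (tendsto_pow_atTop (by omega)).comp tendsto_natCast_atTop_atTop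
      have h9 := this.inv_tendsto_atTop
      refine h9.congr fun t => ?_
      simp
    have h5 := le_of_tendsto_of_tendsto hl (hr1.mul h0) hineq
    rw [mul_zero] at h5
    have : 0 < (r : ℝ) * (1 / (m.factorial : ℝ)) := by positivity
    linarith
  · subst heq
    simp only [Nat.sub_self, pow_zero, div_one, mul_one] at hineq
    have h5 := le_of_tendsto_of_tendsto hl hr1 hineq
    have h6 : (r : ℝ) ≤ r' := le_of_mul_le_mul_right h5 hfp
    have h7 : r ≤ r' := by exact_mod_cast h6
    exact absurd h7 (not_le.2 (hc.2 rfl))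

lemma mc_mono (n : ℕ) (hn : 1 ≤ n) {a b : ℕ} (h : a ≤ b) : n.multichoose a ≤ n.multichoose b := by
  obtain ⟨m, rfl⟩ : ∃ k, n = k + 1 := ⟨n - 1, by omega⟩
  rw [mc_eq, mc_eq]
  exact Nat.choose_le_choose _ (by omega)

lemma mc_sum (n t : ℕ) : ∑ u ∈ Finset.range (t + 1), n.multichoose u = (n + 1).multichoose t := by
  rw [Nat.sum_range_multichoose, mc_eq]

lemma mc_conv (n m t : ℕ) : ∑ x ∈ Finset.HasAntidiagonal.antidiagonal t, n.multichoose x.1 * m.multichoose x.2 =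
    (n + m).multichoose t := by
  induction n generalizing t with
  | zero =>
    rw [Finset.sum_eq_single (0, t)]
    · simp
    · rintro ⟨a, b⟩ hab hne
      rcases a with _ | a
      · simp only [Finset.HasAntidiagonal.mem_antidiagonal, zero_add] at hab
        exact absurd (by rw [hab]) hne
      · simp
    · simp
  | succ n ihn =>
    induction t with
    | zero => simp
    | succ t iht =>
      rw [Finset.Nat.sum_antidiagonal_succ]
      simp only [Nat.multichoose_succ_succ, add_mul, Finset.sum_add_distrib]
      rw [iht, show n + 1 + m = (n + m) + 1 by ring, Nat.multichoose_succ_succ, ← ihn,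
        Finset.Nat.sum_antidiagonal_succ]
      simp only [Nat.multichoose_zero_right]
      ring

lemma mc_conv_le (n m t s s' : ℕ) :
    ∑ x ∈ Finset.HasAntidiagonal.antidiagonal t, n.multichoose (x.1 + s) * m.multichoose (x.2 + s') ≤
    (n + m).multichoose (t + (s + s')) := by
  rw [← mc_conv]
  rw [← Finset.sum_image (f := fun x : ℕ × ℕ => n.multichoose x.1 * m.multichoose x.2)
    (g := fun x : ℕ × ℕ => (x.1 + s, x.2 + s'))]
  · apply Finset.sum_le_sum_of_subset
    intro x hx
    simp only [Finset.mem_image, Finset.HasAntidiagonal.mem_antidiagonal, Prod.exists] at hx ⊢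
    obtain ⟨a, b, h1, rfl⟩ := hx
    simp only
    omega
  · rintro ⟨a, b⟩ _ ⟨c, d⟩ _ h
    simp only [Prod.mk.injEq, add_left_inj] at h ⊢
    exact h

end combinatorics

section hilb
variable {σ : Type*}

/-- Independence of polynomials as functions on `V`. -/
def Ind (V : Set (σ → ℂ)) {ι : Type*} [Fintype ι] (p : ι → MvPolynomial σ ℂ) : Prop :=
  ∀ c : ι → ℂ, (∑ i, C (c i) * p i) ∈ I V → ∀ i, c i = 0

lemma ind_iff (V : Set (σ → ℂ)) {ι : Type*} [Fintype ι] (p : ι → MvPolynomial σ ℂ) :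
    Ind V p ↔ LinearIndependent ℂ (fun i => Ideal.Quotient.mk (I V) (p i)) := by
  rw [Fintype.linearIndependent_iff]
  refine forall_congr' fun c => ?_
  rw [← Ideal.Quotient.eq_zero_iff_mem, map_sum]
  have : ∀ i, Ideal.Quotient.mk (I V) (C (c i) * p i) = c i • Ideal.Quotient.mk (I V) (p i) := by
    intro i
    rw [← smul_eq_C_mul]; rfl
  simp only [this]

/-- Hilbert function of a cone. -/
noncomputable def HF (V : Set (σ → ℂ)) (t : ℕ) : ℕ :=
  Module.finrank ℂ (Submodule.map (Ideal.Quotient.mkₐ ℂ (I V)).toLinearMap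
    (homogeneousSubmodule σ ℂ t))

variable [Finite σ]

instance (V : Set (σ → ℂ)) (t : ℕ) : Module.Finite ℂ (Submodule.map
    (Ideal.Quotient.mkₐ ℂ (I V)).toLinearMap (homogeneousSubmodule σ ℂ t)) :=
  Module.Finite.of_fg ((homogeneousSubmodule_fg σ ℂ t).map _)

lemma HF_family (V : Set (σ → ℂ)) (t : ℕ) : ∃ p : Fin (HF V t) → MvPolynomial σ ℂ,
    (∀ i, (p i).IsHomogeneous t) ∧ Ind V p := by
  let b := Module.finBasis ℂ (Submodule.map (Ideal.Quotient.mkₐ ℂ (I V)).toLinearMap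
    (homogeneousSubmodule σ ℂ t))
  have : ∀ i, ∃ p : MvPolynomial σ ℂ, p.IsHomogeneous t ∧ Ideal.Quotient.mk (I V) p = (b i : _ ⧸ I V) := by
    intro i
    obtain ⟨p, hp, h⟩ := (b i).2
    exact ⟨p, hp, h⟩
  choose p hp h using this
  refine ⟨p, hp, (ind_iff V p).2 ?_⟩
  simp only [h]
  exact b.linearIndependent.map' (Submodule.subtype _) (Submodule.ker_subtype _)

lemma le_HF (V : Set (σ → ℂ)) {t : ℕ} {ι : Type*} [Fintype ι] {p : ι → MvPolynomial σ ℂ}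
    (hp : ∀ i, (p i).IsHomogeneous t) (h : Ind V p) : Fintype.card ι ≤ HF V t := by
  rw [ind_iff] at h
  let q : ι → (Submodule.map (Ideal.Quotient.mkₐ ℂ (I V)).toLinearMap
    (homogeneousSubmodule σ ℂ t)) := fun i => ⟨Ideal.Quotient.mk (I V) (p i), p i, hp i, rfl⟩
  have hq : LinearIndependent ℂ q := by
    apply LinearIndependent.of_comp (Submodule.subtype _)
    exact h
  exact hq.fintype_card_le_finrank

lemma ind_card_le {V : Set (σ → ℂ)} {ι κ : Type*} [Fintype ι] [Fintype κ]
    {p : ι → MvPolynomial σ ℂ} {q : κ → MvPolynomial σ ℂ} (h : Ind V p)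
    (hs : ∀ i, ∃ c : κ → ℂ, p i - ∑ k, C (c k) * q k ∈ I V) : Fintype.card ι ≤ Fintype.card κ := by
  rw [ind_iff] at h
  have h2 : Set.range (fun i => Ideal.Quotient.mk (I V) (p i)) ≤
      Submodule.span ℂ (Set.range fun k => Ideal.Quotient.mk (I V) (q k)) := by
    rintro _ ⟨i, rfl⟩
    obtain ⟨c, hc⟩ := hs i
    rw [← Ideal.Quotient.eq] at hc
    simp only [hc, map_sum]
    refine Submodule.sum_mem _ fun k _ => ?_
    rw [← smul_eq_C_mul]
    exact Submodule.smul_mem _ (c k) (Submodule.subset_span (Set.mem_range_self k))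
  classical
  have h3 := linearIndependent_le_span_aux' _ h _ h2
  refine h3.trans ?_
  exact Fintype.card_range_le _

lemma HF_le {V : Set (σ → ℂ)} {t : ℕ} {κ : Type*} [Fintype κ]
    {q : κ → MvPolynomial σ ℂ}
    (hs : ∀ p : MvPolynomial σ ℂ, p.IsHomogeneous t → ∃ c : κ → ℂ, p - ∑ k, C (c k) * q k ∈ I V) :
    HF V t ≤ Fintype.card κ := by
  obtain ⟨p, hp, hI⟩ := HF_family V t
  simpa using ind_card_le hI fun i => hs (p i) (hp i)

open Classical in
/-- monomials of degree `t` -/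
abbrev Mon (τ : Type*) [Fintype τ] (t : ℕ) : Type _ :=
  ↥(Finset.finsuppAntidiag (Finset.univ : Finset τ) t)

lemma Mon.card (τ : Type*) [Fintype τ] (t : ℕ) :
    Fintype.card (Mon τ t) = (Fintype.card τ).multichoose t := by
  classical
  rw [Fintype.card_coe, Finset.card_finsuppAntidiag_nat_eq_multichoose, Finset.card_univ]

lemma mem_mon {τ : Type*} [Fintype τ] {t : ℕ} {d : τ →₀ ℕ} :
    d ∈ (open Classical in Finset.finsuppAntidiag (Finset.univ : Finset τ) t) ↔ d.degree = t := by
  classical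
  simp [Finset.mem_finsuppAntidiag, Finsupp.degree_eq_sum]

lemma Mon.homog {τ : Type*} [Fintype τ] {t : ℕ} (d : Mon τ t) :
    (monomial d.1 (1 : ℂ)).IsHomogeneous t :=
  isHomogeneous_monomial _ (mem_mon.1 d.2)

lemma Mon.sum {τ : Type*} [Fintype τ] {t : ℕ} {f : MvPolynomial τ ℂ} (hf : f.IsHomogeneous t) :
    f = ∑ d : Mon τ t, C (coeff d.1 f) * monomial d.1 1 := by
  classical
  ext m
  simp only [C_mul_monomial, mul_one, coeff_sum, coeff_monomial]
  by_cases hm : m.degree = t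
  · rw [Finset.sum_eq_single ⟨m, mem_mon.2 hm⟩]
    · simp
    · intro d _ hd
      rw [if_neg]
      intro h
      exact hd (Subtype.ext h)
    · simp
  · rw [hf.coeff_eq_zero hm, Finset.sum_eq_zero]
    intro d _
    rw [if_neg]
    rintro rfl
    exact hm (mem_mon.1 d.2)

lemma Mon.coeff_sum {τ : Type*} [Fintype τ] {t : ℕ} (c : Mon τ t → ℂ) (e : Mon τ t) :
    coeff e.1 (∑ d : Mon τ t, C (c d) * monomial d.1 (1 : ℂ)) = c e := by
  classical
  simp only [C_mul_monomial, mul_one, MvPolynomial.coeff_sum, coeff_monomial]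
  rw [Finset.sum_eq_single e]
  · simp
  · intro d _ hd
    rw [if_neg]
    intro h
    exact hd (Subtype.ext h)
  · simp

end hilb
end GB


namespace GB
open MvPolynomial

set_option linter.unusedSectionVars false

lemma sub_c {A : Type*} [Sub A] {a b c d : A} (h : a = c) (h' : b = d) : a - b = c - d := by
  rw [h, h']

section norm
variable {σ τ : Type*} [Fintype σ] [Fintype τ]

open Classical in
/-- substitution of linear forms -/
noncomputable def pull (π : (σ → ℂ) →ₗ[ℂ] (τ → ℂ)) : MvPolynomial τ ℂ →ₐ[ℂ] MvPolynomial σ ℂ :=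
  aeval (fun j => ∑ i, C (π (Pi.single i 1) j) * X i)

lemma eval_pull (π : (σ → ℂ) →ₗ[ℂ] (τ → ℂ)) (x : σ → ℂ) (f : MvPolynomial τ ℂ) :
    eval x (pull π f) = eval (π x) f := by
  classical
  have h : ((aeval x : MvPolynomial σ ℂ →ₐ[ℂ] ℂ).comp (pull π)) = aeval (π x) := by
    apply MvPolynomial.algHom_ext
    intro j
    simp only [AlgHom.comp_apply, pull, aeval_X, map_sum, map_mul, aeval_C]
    conv_rhs => rw [LinearMap.pi_apply_eq_sum_univ π x]
    have hs : ∀ i : σ, (Pi.single i 1 : σ → ℂ) = fun j => if i = j then 1 else 0 := by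
      intro i; ext j; simp [Pi.single_apply, eq_comm]
    simp [Finset.sum_apply, mul_comm, hs]
  have := DFunLike.congr_fun h f
  simpa [coe_aeval_eq_eval] using this

lemma pull_homog (π : (σ → ℂ) →ₗ[ℂ] (τ → ℂ)) {f : MvPolynomial τ ℂ} {d : ℕ}
    (hf : f.IsHomogeneous d) : (pull π f).IsHomogeneous d := by
  classical
  have := hf.aeval (fun j => ∑ i, C (π (Pi.single i 1) j) * X i) (n := 1) (fun j => by
    apply IsHomogeneous.sum
    intro i _
    exact isHomogeneous_C_mul_X _ _)
  rw [one_mul] at this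
  exact this

lemma hC_mul {f g : MvPolynomial σ ℂ} {e : ℕ} (d : ℕ) (hg : g.IsHomogeneous e) :
    homogeneousComponent (d + e) (f * g) = homogeneousComponent d f * g := by
  conv_lhs => rw [← sum_homogeneousComponent f, Finset.sum_mul, map_sum]
  have : ∀ i, homogeneousComponent (d + e) (homogeneousComponent i f * g) =
      if i = d then homogeneousComponent d f * g else 0 := by
    intro i
    rw [homogeneousComponent_of_mem ((homogeneousComponent_isHomogeneous i f).mul hg)]
    by_cases h : i = d
    · simp [h]
    · rw [if_neg h, if_neg (by omega)]
  simp only [this, Finset.sum_ite_eq', Finset.mem_range]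
  split_ifs with h
  · rfl
  · rw [homogeneousComponent_eq_zero d f (by omega), zero_mul]

lemma hC_pull (π : (σ → ℂ) →ₗ[ℂ] (τ → ℂ)) (n : ℕ) (f : MvPolynomial τ ℂ) :
    homogeneousComponent n (pull π f) = pull π (homogeneousComponent n f) := by
  conv_lhs => rw [← sum_homogeneousComponent f, map_sum, map_sum]
  have : ∀ i, homogeneousComponent n (pull π (homogeneousComponent i f)) =
      if i = n then pull π (homogeneousComponent n f) else 0 := by
    intro i
    rw [homogeneousComponent_of_mem (pull_homog π (homogeneousComponent_isHomogeneous i f))]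
    by_cases h : i = n
    · simp [h]
    · rw [if_neg h, if_neg (by omega)]
  simp only [this, Finset.sum_ite_eq', Finset.mem_range]
  split_ifs with h
  · rfl
  · rw [homogeneousComponent_eq_zero n f (by omega), map_zero]

/-- the linear map has no nontrivial zeros on `V` -/
def Good (V : Set (σ → ℂ)) (π : (σ → ℂ) →ₗ[ℂ] (τ → ℂ)) : Prop := ∀ x ∈ V, π x = 0 → x = 0

lemma nullst {V : Set (σ → ℂ)} (hV : Cone V) {π : (σ → ℂ) →ₗ[ℂ] (τ → ℂ)} (hπ : Good V π) :
    ∃ K, 1 ≤ K ∧ ∀ t, ∀ p : MvPolynomial σ ℂ, p.IsHomogeneous (t + 1) → K ≤ t + 1 →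
      ∃ q : τ → MvPolynomial σ ℂ, (∀ j, (q j).IsHomogeneous t) ∧
        p - ∑ j, q j * pull π (X j) ∈ I V := by
  let J : Ideal (MvPolynomial σ ℂ) := I V ⊔ Ideal.span (Set.range fun j => pull π (X j))
  have hJ : Ideal.span (Set.range (X : σ → MvPolynomial σ ℂ)) ≤ J.radical := by
    rw [Ideal.span_le]
    rintro _ ⟨i, rfl⟩
    rw [SetLike.mem_coe, ← vanishingIdeal_zeroLocus_eq_radical (K := ℂ), mem_vanishingIdeal_iff]
    intro x hx
    rw [mem_zeroLocus_iff] at hx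
    have hxV : x ∈ V := hV.mem_iff.2 fun p hp => by
      have := hx p (Ideal.mem_sup_left hp)
      simpa using this
    have hx0 : π x = 0 := by
      ext j
      have := hx (pull π (X j)) (Ideal.mem_sup_right (Ideal.subset_span ⟨j, rfl⟩))
      have h2 : eval x (pull π (X j)) = 0 := by simpa using this
      rw [eval_pull, eval_X] at h2
      simpa using h2
    rw [hπ x hxV hx0]
    simp
  obtain ⟨K, hK⟩ := Ideal.exists_pow_le_of_le_radical_of_fg hJ (IsNoetherian.noetherian _)
  refine ⟨K + 1, by omega, fun t p hp hKt => ?_⟩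
  have h1 : p ∈ Ideal.span (Set.range (X : σ → MvPolynomial σ ℂ)) ^ (t + 1) := by
    rw [Ideal.mem_span_pow_iff_exists_isHomogeneous]
    refine ⟨map C p, hp.map _, ?_⟩
    rw [eval_map, eval₂_eta]
  have h2 : p ∈ J := hK (Ideal.pow_le_pow_right (by omega) h1)
  obtain ⟨a, ha, b, hb, hab⟩ := Submodule.mem_sup.1 h2
  obtain ⟨c, hc⟩ := Ideal.mem_span_range_iff_exists_fun.1 hb
  refine ⟨fun j => homogeneousComponent t (c j), fun j => homogeneousComponent_isHomogeneous _ _, ?_⟩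
  have h3 : p - ∑ j, homogeneousComponent t (c j) * pull π (X j) = homogeneousComponent (t + 1) a := by
    have h4 := congrArg (homogeneousComponent (t + 1)) hab
    rw [homogeneousComponent_eq_self hp, map_add, ← hc, map_sum] at h4
    rw [← h4]
    have : ∀ j, homogeneousComponent (t + 1) (c j * pull π (X j)) =
        homogeneousComponent t (c j) * pull π (X j) := fun j =>
      hC_mul t (pull_homog π (isHomogeneous_X ℂ j))
    simp only [this]
    ring
  rw [h3]
  exact hV.comp_mem ha _

/-- the coordinate ring is generated by finitely many homogeneous elements over the
linear forms -/
lemma gen {V : Set (σ → ℂ)} (hV : Cone V) {π : (σ → ℂ) →ₗ[ℂ] (τ → ℂ)} (hπ : Good V π) :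
    ∃ K, ∃ M : Finset (MvPolynomial σ ℂ), (∀ m ∈ M, ∃ b ≤ K, m.IsHomogeneous b) ∧
      ∀ p : MvPolynomial σ ℂ, ∃ c : MvPolynomial σ ℂ → MvPolynomial τ ℂ,
        p - ∑ m ∈ M, pull π (c m) * m ∈ I V := by
  classical
  obtain ⟨K, hK1, hK⟩ := nullst hV hπ
  let M : Finset (MvPolynomial σ ℂ) := (Finset.range K).biUnion fun b =>
    (Finset.univ : Finset (Mon σ b)).image fun d => monomial d.1 1
  let W : Submodule ℂ (MvPolynomial σ ℂ) :=
    { carrier := {p | ∃ c : MvPolynomial σ ℂ → MvPolynomial τ ℂ,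
        p - ∑ m ∈ M, pull π (c m) * m ∈ I V}
      add_mem' := by
        rintro p q ⟨c, hc⟩ ⟨d, hd⟩
        refine ⟨c + d, ?_⟩
        have := (I V).add_mem hc hd
        convert this using 1
        simp only [Pi.add_apply, map_add, add_mul, Finset.sum_add_distrib]
        ring
      zero_mem' := ⟨0, by simp⟩
      smul_mem' := by
        rintro a p ⟨c, hc⟩
        refine ⟨fun m => C a * c m, ?_⟩
        have := (I V).mul_mem_left (C a) hc
        convert this using 1
        have hC : pull π (C a) = C a := by
          exact (pull π).commutes a
        simp only [map_mul, hC, mul_assoc, ← Finset.mul_sum]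
        rw [smul_eq_C_mul]; ring }
  have hWmul : ∀ p ∈ W, ∀ f, p * pull π f ∈ W := by
    rintro p ⟨c, hc⟩ f
    refine ⟨fun m => f * c m, ?_⟩
    have := (I V).mul_mem_left (pull π f) hc
    convert this using 1
    simp only [map_mul, mul_assoc, ← Finset.mul_sum]
    ring
  have hWI : ∀ p ∈ I V, p ∈ W := fun p hp => ⟨0, by simpa using hp⟩
  have hWM : ∀ m ∈ M, m ∈ W := by
    intro m hm
    refine ⟨fun m' => if m' = m then 1 else 0, ?_⟩
    rw [Finset.sum_eq_single m]
    · simp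
    · intro b _ hb; simp [hb]
    · intro h; exact absurd hm h
  have hW : ∀ t, ∀ p : MvPolynomial σ ℂ, p.IsHomogeneous t → p ∈ W := by
    intro t
    induction t with
    | zero =>
      intro p hp
      rw [Mon.sum hp]
      refine W.sum_mem fun d _ => ?_
      rw [← smul_eq_C_mul]
      refine W.smul_mem _ (hWM _ ?_)
      simp only [M, Finset.mem_biUnion, Finset.mem_range, Finset.mem_image, Finset.mem_univ, true_and]
      exact ⟨0, by omega, d, rfl⟩
    | succ t ih =>
      intro p hp
      by_cases hKt : K ≤ t + 1
      · obtain ⟨q, hq, hpq⟩ := hK t p hp hKt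
        have : p = (p - ∑ j, q j * pull π (X j)) + ∑ j, q j * pull π (X j) := by ring
        rw [this]
        refine W.add_mem (hWI _ hpq) (W.sum_mem fun j _ => hWmul _ (ih _ (hq j)) _)
      · rw [Mon.sum hp]
        refine W.sum_mem fun d _ => ?_
        rw [← smul_eq_C_mul]
        refine W.smul_mem _ (hWM _ ?_)
        simp only [M, Finset.mem_biUnion, Finset.mem_range, Finset.mem_image, Finset.mem_univ,
          true_and]
        exact ⟨t + 1, by omega, d, rfl⟩
  refine ⟨K, M, ?_, ?_⟩
  · intro m hm
    simp only [M, Finset.mem_biUnion, Finset.mem_range, Finset.mem_image, Finset.mem_univ,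
      true_and] at hm
    obtain ⟨b, hb, d, rfl⟩ := hm
    exact ⟨b, hb.le, d.homog⟩
  · intro p
    have : p ∈ W := by
      rw [← sum_homogeneousComponent p]
      exact W.sum_mem fun i _ => hW i _ (homogeneousComponent_isHomogeneous _ _)
    exact this

/-- injectivity of the pullback on functions of `V` -/
def Inj (V : Set (σ → ℂ)) (π : (σ → ℂ) →ₗ[ℂ] (τ → ℂ)) : Prop := ∀ f, pull π f ∈ I V → f = 0

set_option maxHeartbeats 400000 in
lemma rank_pre {V : Set (σ → ℂ)} (hV : Irr V) {π : (σ → ℂ) →ₗ[ℂ] (τ → ℂ)} (hπ : Good V π)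
    (hinj : Inj V π) :
    ∃ (K : ℕ) (S : Finset (MvPolynomial σ ℂ)) (P : MvPolynomial τ ℂ), P ≠ 0 ∧ 1 ≤ S.card ∧
      (∀ m ∈ S, ∃ b ≤ K, m.IsHomogeneous b) ∧
      (∀ c : MvPolynomial σ ℂ → MvPolynomial τ ℂ,
        ∑ m ∈ S, pull π (c m) * m ∈ I V → ∀ m ∈ S, c m = 0) ∧
      (∀ p : MvPolynomial σ ℂ, ∃ c : MvPolynomial σ ℂ → MvPolynomial τ ℂ,
        pull π P * p - ∑ q ∈ S, pull π (c q) * q ∈ I V) := by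
  classical
  obtain ⟨K, M, hM, hgen⟩ := gen hV.1 hπ
  have hprime := hV.prime
  -- maximal independent subset
  let LI : Finset (MvPolynomial σ ℂ) → Prop := fun S => ∀ c : MvPolynomial σ ℂ → MvPolynomial τ ℂ,
    ∑ m ∈ S, pull π (c m) * m ∈ I V → ∀ m ∈ S, c m = 0
  have hne : (M.powerset.filter LI).Nonempty :=
    ⟨∅, by simp [LI]⟩
  obtain ⟨S, hS⟩ := Finset.exists_maximal hne
  have hSM : S ⊆ M := Finset.mem_powerset.1 (Finset.mem_filter.1 hS.1).1
  have hSLI : LI S := (Finset.mem_filter.1 hS.1).2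
  have hg : ∀ m ∈ M, ∃ g : MvPolynomial τ ℂ, g ≠ 0 ∧ ∃ c : MvPolynomial σ ℂ → MvPolynomial τ ℂ,
      pull π g * m - ∑ q ∈ S, pull π (c q) * q ∈ I V := by
    intro m hm
    by_cases hmS : m ∈ S
    · refine ⟨1, one_ne_zero, fun q => if q = m then 1 else 0, ?_⟩
      rw [Finset.sum_eq_single m]
      · simp
      · intro b _ hb; simp [hb]
      · intro h; exact absurd hmS h
    have hnot : ¬ LI (insert m S) := by
      intro h
      have := hS.2 (y := insert m S) (Finset.mem_filter.2 ⟨Finset.mem_powerset.2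
        (Finset.insert_subset hm hSM), h⟩) (Finset.subset_insert _ _)
      exact hmS (this (Finset.mem_insert_self _ _))
    simp only [LI, not_forall] at hnot
    obtain ⟨c, hc, q, hq, hcq⟩ := hnot
    rw [Finset.sum_insert hmS] at hc
    refine ⟨c m, fun h0 => ?_, fun q => - c q, ?_⟩
    · rw [h0, map_zero, zero_mul, zero_add] at hc
      have := hSLI c hc
      rcases Finset.mem_insert.1 hq with rfl | h
      · exact hcq h0
      · exact hcq (this q h)
    · convert hc using 1
      simp
  choose! g hg0 cc hcc using hg
  let P := ∏ m ∈ M, g m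
  have hP0 : P ≠ 0 := Finset.prod_ne_zero_iff.2 hg0
  have hPgen : ∀ p : MvPolynomial σ ℂ, ∃ c : MvPolynomial σ ℂ → MvPolynomial τ ℂ,
      pull π P * p - ∑ q ∈ S, pull π (c q) * q ∈ I V := by
    intro p
    obtain ⟨d, hd⟩ := hgen p
    refine ⟨fun q => ∑ m ∈ M, d m * (∏ m' ∈ M.erase m, g m') * cc m q, ?_⟩
    have h1 := (I V).mul_mem_left (pull π P) hd
    have h2 : ∑ m ∈ M, pull π (d m * ∏ m' ∈ M.erase m, g m') *
        (pull π (g m) * m - ∑ q ∈ S, pull π (cc m q) * q) ∈ I V :=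
      (I V).sum_mem fun m hm => (I V).mul_mem_left _ (hcc m hm)
    convert (I V).add_mem h1 h2 using 1
    have e1 : ∀ m ∈ M, pull π (d m * ∏ m' ∈ M.erase m, g m') *
        (pull π (g m) * m - ∑ q ∈ S, pull π (cc m q) * q) = pull π P * (pull π (d m) * m) -
          ∑ q ∈ S, pull π (d m * (∏ m' ∈ M.erase m, g m') * cc m q) * q := by
      intro m hm
      have : P = (∏ m' ∈ M.erase m, g m') * g m := by
        rw [mul_comm]; exact (Finset.mul_prod_erase M g hm).symm
      rw [this, mul_sub, Finset.mul_sum]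
      simp only [map_mul]
      refine sub_c ?_ ?_
      · ring
      · refine Finset.sum_congr rfl fun q _ => by ring
    rw [Finset.sum_congr rfl e1, Finset.sum_sub_distrib, ← Finset.mul_sum, Finset.sum_comm]
    simp only [map_sum, Finset.sum_mul]
    ring
  have hSne : 1 ≤ S.card := by
    rw [Nat.one_le_iff_ne_zero, Ne, Finset.card_eq_zero]
    intro h
    obtain ⟨c, hc⟩ := hPgen 1
    rw [h] at hc
    simp only [mul_one, Finset.sum_empty, sub_zero] at hc
    exact hP0 (hinj _ hc)
  exact ⟨K, S, P, hP0, hSne, fun m hm => hM m (hSM hm), hSLI, hPgen⟩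

set_option maxHeartbeats 400000 in
lemma rank_core {V : Set (σ → ℂ)} (hV : Irr V) {π : (σ → ℂ) →ₗ[ℂ] (τ → ℂ)} (hπ : Good V π)
    (hinj : Inj V π) (j0 : τ) :
    ∃ (r s l : ℕ) (a : Fin r → MvPolynomial σ ℂ) (G : MvPolynomial τ ℂ), 1 ≤ r ∧
      (∀ i, (a i).IsHomogeneous s) ∧ G ≠ 0 ∧
      (∀ c : Fin r → MvPolynomial τ ℂ, ∑ i, pull π (c i) * a i ∈ I V → ∀ i, c i = 0) ∧
      (∀ t, ∀ p : MvPolynomial σ ℂ, p.IsHomogeneous t → ∃ c : Fin r → MvPolynomial τ ℂ,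
        (∀ i, (c i).IsHomogeneous (t + l)) ∧ pull π G * p - ∑ i, pull π (c i) * a i ∈ I V) := by
  classical
  obtain ⟨K, S, P, hP0, hSne, hdeg, hSLI, hPgen⟩ := rank_pre hV hπ hinj
  choose! b hbK hb using hdeg
  let e := S.equivFin
  let q : Fin S.card → MvPolynomial σ ℂ := fun i => (e.symm i).1
  have hqS : ∀ i, q i ∈ S := fun i => (e.symm i).2
  have hsumS : ∀ F : MvPolynomial σ ℂ → MvPolynomial σ ℂ, ∑ m ∈ S, F m = ∑ i, F (q i) := by
    intro F
    rw [← Finset.sum_coe_sort S F]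
    exact (e.symm.sum_comp (fun m : S => F m.1)).symm
  have hXne : (X j0 : MvPolynomial τ ℂ) ≠ 0 := X_ne_zero j0
  obtain ⟨l, hl⟩ : ∃ l, homogeneousComponent l P ≠ 0 := by
    by_contra h
    push Not at h
    apply hP0
    rw [← sum_homogeneousComponent P]
    exact Finset.sum_eq_zero fun i _ => h i
  refine ⟨S.card, K, l, fun i => pull π (X j0 ^ (K - b (q i))) * q i,
    homogeneousComponent l P * X j0 ^ K, hSne, ?_, ?_, ?_, ?_⟩
  · intro i
    have := (pull_homog π (isHomogeneous_X_pow (R := ℂ) j0 (K - b (q i)))).mul (hb _ (hqS i))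
    rwa [Nat.sub_add_cancel (hbK _ (hqS i))] at this
  · exact mul_ne_zero hl (pow_ne_zero _ hXne)
  · intro c hc i
    have h1 := hSLI (fun m => if h : m ∈ S then c (e ⟨m, h⟩) * X j0 ^ (K - b m) else 0) (by
      rw [hsumS]
      convert hc using 1
      refine Finset.sum_congr rfl fun i _ => ?_
      simp only [hqS i, dite_true]
      have : e ⟨q i, hqS i⟩ = i := by simp [q]
      rw [this, map_mul]
      ring) (q i) (hqS i)
    simp only [hqS i, dite_true] at h1
    have : e ⟨q i, hqS i⟩ = i := by simp [q]
    rw [this] at h1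
    exact (mul_eq_zero.1 h1).resolve_right (pow_ne_zero _ hXne)
  · intro t p hp
    obtain ⟨c, hc⟩ := hPgen p
    have h1 : pull π P * (p * pull π (X j0 ^ K)) -
        ∑ i, pull π (c (q i) * X j0 ^ (b (q i))) * (pull π (X j0 ^ (K - b (q i))) * q i) ∈ I V := by
      convert (I V).mul_mem_left (pull π (X j0 ^ K)) hc using 1
      rw [hsumS, mul_sub, Finset.mul_sum]
      refine sub_c ?_ ?_
      · ring
      · refine Finset.sum_congr rfl fun i _ => ?_
        have : (X j0 : MvPolynomial τ ℂ) ^ K = X j0 ^ (b (q i)) * X j0 ^ (K - b (q i)) := by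
          rw [← pow_add]; congr 1
          have := hbK _ (hqS i); omega
        rw [this]; simp only [map_mul]; ring
    have h2 := hV.1.comp_mem h1 (l + (t + K))
    refine ⟨fun i => homogeneousComponent (t + l) (c (q i) * X j0 ^ (b (q i))),
      fun i => homogeneousComponent_isHomogeneous _ _, ?_⟩
    convert h2 using 1
    rw [map_sub, map_sum]
    refine sub_c ?_ ?_
    · rw [hC_mul l (hp.mul (pull_homog π (isHomogeneous_X_pow (R := ℂ) j0 K))), hC_pull, map_mul]
      ring
    · refine Finset.sum_congr rfl fun i _ => ?_
      have h3 := (pull_homog π (isHomogeneous_X_pow (R := ℂ) j0 (K - b (q i)))).mul (hb _ (hqS i))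
      rw [Nat.sub_add_cancel (hbK _ (hqS i))] at h3
      rw [show l + (t + K) = (t + l) + K by ring, hC_mul (t + l) h3, hC_pull]

def Sand (V : Set (σ → ℂ)) (n r : ℕ) : Prop :=
  ∃ s s', ∀ t, r * n.multichoose t ≤ HF V (t + s) ∧ HF V t ≤ r * n.multichoose (t + s')

lemma sand_of {V : Set (σ → ℂ)} (hV : Irr V) {π : (σ → ℂ) →ₗ[ℂ] (τ → ℂ)} 
    (hinj : Inj V π) {r s l : ℕ} {a : Fin r → MvPolynomial σ ℂ} {G : MvPolynomial τ ℂ}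
    (ha : ∀ i, (a i).IsHomogeneous s) (hG : G ≠ 0)
    (hLI : ∀ c : Fin r → MvPolynomial τ ℂ, ∑ i, pull π (c i) * a i ∈ I V → ∀ i, c i = 0)
    (hgen : ∀ t, ∀ p : MvPolynomial σ ℂ, p.IsHomogeneous t → ∃ c : Fin r → MvPolynomial τ ℂ,
        (∀ i, (c i).IsHomogeneous (t + l)) ∧ pull π G * p - ∑ i, pull π (c i) * a i ∈ I V) :
    Sand V (Fintype.card τ) r := by
  have hpC : ∀ z : ℂ, pull π (C z) = C z := fun z => (pull π).commutes z
  refine ⟨s, l, fun t => ⟨?_, ?_⟩⟩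
  · have := le_HF V (t := t + s) (ι := Fin r × Mon τ t)
      (p := fun x => pull π (monomial x.2.1 1) * a x.1)
      (fun x => (pull_homog π x.2.homog).mul (ha x.1)) (by
        intro c hc
        have h1 := hLI (fun i => ∑ d : Mon τ t, C (c (i, d)) * monomial d.1 1) (by
          convert hc using 1
          rw [Fintype.sum_prod_type]
          refine Finset.sum_congr rfl fun i _ => ?_
          rw [map_sum, Finset.sum_mul]
          refine Finset.sum_congr rfl fun d _ => ?_
          rw [map_mul, hpC]; ring)
        rintro ⟨i, d⟩
        have h2 := congrArg (coeff d.1) (h1 i)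
        rw [Mon.coeff_sum (fun d => c (i, d)) d] at h2
        simpa using h2)
    rwa [Fintype.card_prod, Fintype.card_fin, Mon.card] at this
  · obtain ⟨p, hp, hI⟩ := HF_family V t
    have hI2 : Ind V (fun i => pull π G * p i) := by
      intro c hc
      apply hI c
      have : pull π G * ∑ i, C (c i) * p i ∈ I V := by
        convert hc using 1
        rw [Finset.mul_sum]
        refine Finset.sum_congr rfl fun i _ => by ring
      exact (hV.prime.mem_or_mem this).resolve_left fun h => hG (hinj G h)
    have := ind_card_le (κ := Fin r × Mon τ (t + l))
      (q := fun x => pull π (monomial x.2.1 1) * a x.1) hI2 (by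
        intro i
        obtain ⟨c, hc, hc'⟩ := hgen t (p i) (hp i)
        refine ⟨fun x => coeff x.2.1 (c x.1), ?_⟩
        convert hc' using 2
        rw [Fintype.sum_prod_type]
        refine Finset.sum_congr rfl fun i _ => ?_
        conv_rhs => rw [Mon.sum (hc i)]
        rw [map_sum, Finset.sum_mul]
        refine Finset.sum_congr rfl fun d _ => ?_
        rw [map_mul, hpC]; ring)
    rwa [Fintype.card_prod, Fintype.card_fin, Fintype.card_fin, Mon.card] at this

end norm
end GB


namespace GB
open MvPolynomial

set_option linter.unusedSectionVars false

section dims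
variable {σ τ : Type*} [Fintype σ] [Fintype τ]

lemma pull_C (π : (σ → ℂ) →ₗ[ℂ] (τ → ℂ)) (z : ℂ) : pull π (C z) = C z := (pull π).commutes z

/-- the polynomial of a linear form -/
noncomputable def lin (h : (σ → ℂ) →ₗ[ℂ] ℂ) : MvPolynomial σ ℂ :=
  pull (LinearMap.pi fun _ : Unit => h) (X ())

lemma eval_lin (h : (σ → ℂ) →ₗ[ℂ] ℂ) (x : σ → ℂ) : eval x (lin h) = h x := by
  rw [lin, eval_pull, eval_X]; rfl

lemma lin_homog (h : (σ → ℂ) →ₗ[ℂ] ℂ) : (lin h).IsHomogeneous 1 :=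
  pull_homog _ (isHomogeneous_X _ _)

lemma lin_mem {h : (σ → ℂ) →ₗ[ℂ] ℂ} {V : Set (σ → ℂ)} : lin h ∈ I V ↔ ∀ x ∈ V, h x = 0 := by
  simp only [mem_I, eval_lin]

lemma cone_lin (h : (σ → ℂ) →ₗ[ℂ] ℂ) : Cone {x | h x = 0} := by
  have := cone_of_homog (lin_homog h)
  simpa only [eval_lin] using this

lemma exists_comp_ne {f : MvPolynomial σ ℂ} (hf : f ≠ 0) : ∃ l, homogeneousComponent l f ≠ 0 := by
  by_contra h
  push Not at h
  apply hf
  rw [← sum_homogeneousComponent f]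
  exact Finset.sum_eq_zero fun i _ => h i

lemma exists_eval_ne {f : MvPolynomial σ ℂ} (hf : f ≠ 0) : ∃ x, eval x f ≠ 0 := by
  by_contra h
  push Not at h
  exact hf (MvPolynomial.funext fun x => by simpa using h x)

lemma step {n : ℕ} {V : Set (σ → ℂ)} (hV : ∀ v ∈ V, ∀ c : ℂ, c • v ∈ V)
    {π : (σ → ℂ) →ₗ[ℂ] (Fin (n + 1) → ℂ)}
    (hπ : Good V π) (hi : ¬ Inj V π) : ∃ π' : (σ → ℂ) →ₗ[ℂ] (Fin n → ℂ), Good V π' := by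
  simp only [Inj, not_forall] at hi
  obtain ⟨f, hf, hf0⟩ := hi
  obtain ⟨l, hl⟩ := exists_comp_ne hf0
  have h1 := comp_mem_I hV hf l
  rw [hC_pull] at h1
  obtain ⟨b, hb⟩ := exists_eval_ne (mul_ne_zero hl (X_ne_zero (R := ℂ) (0 : Fin (n + 1))))
  rw [map_mul, eval_X] at hb
  have hb0 := right_ne_zero_of_mul hb
  have hbf := left_ne_zero_of_mul hb
  let q : (Fin (n + 1) → ℂ) →ₗ[ℂ] (Fin n → ℂ) :=
    LinearMap.pi fun i => LinearMap.proj i.succ - (b i.succ / b 0) • LinearMap.proj 0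
  refine ⟨q ∘ₗ π, fun x hx hqx => hπ x hx ?_⟩
  have h2 : π x = (π x 0 / b 0) • b := by
    ext i
    refine Fin.cases ?_ (fun i => ?_) i
    · simp [hb0]
    · have := congrFun hqx i
      simp only [q, LinearMap.comp_apply, LinearMap.pi_apply, LinearMap.sub_apply,
        LinearMap.smul_apply, LinearMap.proj_apply, Pi.zero_apply, smul_eq_mul] at this
      rw [Pi.smul_apply, smul_eq_mul, sub_eq_zero.1 this]
      ring
  have h3 := mem_I.1 h1 x hx
  rw [eval_pull, h2, eval_smul_homog (homogeneousComponent_isHomogeneous _ _)] at h3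
  have h4 := (mul_eq_zero.1 h3).resolve_right hbf
  rw [h2, eq_zero_of_pow_eq_zero h4, zero_smul]


lemma HF_step {V Y : Set (σ → ℂ)} (hV : Irr V) (hY : Y ⊆ V) {f : MvPolynomial σ ℂ} {k : ℕ}
    (hf : f.IsHomogeneous k) (hfV : f ∉ I V) (hfY : f ∈ I Y) (t : ℕ) :
    HF V t + HF Y (t + k) ≤ HF V (t + k) := by
  obtain ⟨p, hp, hpI⟩ := HF_family V t
  obtain ⟨q, hq, hqI⟩ := HF_family Y (t + k)
  have := le_HF V (t := t + k) (ι := Fin (HF V t) ⊕ Fin (HF Y (t + k)))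
    (p := Sum.elim (fun i => p i * f) q) (by
      rintro (i | i)
      · exact (hp i).mul hf
      · exact hq i) (by
      intro c hc
      rw [Fintype.sum_sum_type] at hc
      simp only [Sum.elim_inl, Sum.elim_inr] at hc
      have h0 : ∑ i, C (c (Sum.inl i)) * (p i * f) = (∑ i, C (c (Sum.inl i)) * p i) * f := by
        rw [Finset.sum_mul]
        exact Finset.sum_congr rfl fun i _ => by ring
      rw [h0] at hc
      have h1 : ∀ i, c (Sum.inr i) = 0 := by
        apply hqI
        have := (I Y).sub_mem (I_anti hY hc)
          ((I Y).mul_mem_left (∑ i, C (c (Sum.inl i)) * p i) hfY)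
        rwa [add_sub_cancel_left] at this
      have h2 : ∀ i, c (Sum.inl i) = 0 := by
        apply hpI
        simp only [h1, map_zero, zero_mul, Finset.sum_const_zero, add_zero] at hc
        exact (hV.prime.mem_or_mem hc).resolve_right hfV
      rintro (i | i)
      · exact h2 i
      · exact h1 i)
  simpa using this

lemma HF_steps {V Y : Set (σ → ℂ)} (hV : Irr V) (hY : Y ⊆ V) {f : MvPolynomial σ ℂ} {k : ℕ}
    (hf : f.IsHomogeneous k) (hfV : f ∉ I V) (hfY : f ∈ I Y) (t J : ℕ) :
    ∑ u ∈ Finset.range J, HF Y (t + (u + 1) * k) ≤ HF V (t + J * k) := by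
  induction J with
  | zero => simp
  | succ J ih =>
    rw [Finset.sum_range_succ]
    have := HF_step hV hY hf hfV hfY (t + J * k)
    rw [show t + J * k + k = t + (J + 1) * k by ring] at this
    omega

lemma HF_pull {V : Set (σ → ℂ)} {π : (σ → ℂ) →ₗ[ℂ] (τ → ℂ)} (hinj : Inj V π) (t : ℕ) :
    (Fintype.card τ).multichoose t ≤ HF V t := by
  have := le_HF V (t := t) (ι := Mon τ t) (p := fun d => pull π (monomial d.1 1))
    (fun d => pull_homog π d.homog) (by
      intro c hc d
      have h1 := hinj (∑ d : Mon τ t, C (c d) * monomial d.1 1) (by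
        convert hc using 1
        rw [map_sum]
        exact Finset.sum_congr rfl fun d _ => by rw [map_mul, pull_C])
      have h2 := congrArg (coeff d.1) h1
      rw [Mon.coeff_sum c d] at h2
      simpa using h2)
  rwa [Mon.card] at this

lemma exists_homog_sep {V W : Set (σ → ℂ)} (hV : Cone V) (h : ¬ I V ≤ I W) :
    ∃ k, ∃ g : MvPolynomial σ ℂ, g.IsHomogeneous k ∧ g ∈ I V ∧ g ∉ I W := by
  obtain ⟨g, hg, hg'⟩ := SetLike.not_le_iff_exists.1 h
  by_contra hc
  push Not at hc
  apply hg'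
  rw [← sum_homogeneousComponent g]
  exact (I W).sum_mem fun i _ => hc i _ (homogeneousComponent_isHomogeneous _ _) (hV.comp_mem hg i)

lemma Irr.exists_X {V : Set (σ → ℂ)} (hV : Irr V) : ∃ i, (X i : MvPolynomial σ ℂ) ∉ I V := by
  obtain ⟨v, hv, hv0⟩ := hV.nonempty
  obtain ⟨i, hi⟩ := Function.ne_iff.1 hv0
  exact ⟨i, fun h => hi (by simpa using mem_I.1 h v hv)⟩

lemma exists_seps {T : Finset (Set (σ → ℂ))} (hT : ∀ Q ∈ T, Irr Q)
    (hmax : ∀ Q ∈ T, ∀ Q' ∈ T, Q ⊆ Q' → Q = Q') (Q : Set (σ → ℂ)) (hQ : Q ∈ T) :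
    ∃ k, ∃ g : MvPolynomial σ ℂ, g.IsHomogeneous k ∧ g ∉ I Q ∧ ∀ Q' ∈ T, Q' ≠ Q → g ∈ I Q' := by
  classical
  have h : ∀ Q' ∈ T.erase Q, ∃ k, ∃ g : MvPolynomial σ ℂ, g.IsHomogeneous k ∧ g ∈ I Q' ∧
      g ∉ I Q := by
    intro Q' hQ'
    rw [Finset.mem_erase] at hQ'
    apply exists_homog_sep (hT Q' hQ'.2).1
    intro h
    exact hQ'.1 (hmax Q hQ Q' hQ'.2 ((hT Q' hQ'.2).1.subset_iff.2 h)).symm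
  choose! k g hk hg hg' using h
  refine ⟨∑ Q' ∈ T.erase Q, k Q', ∏ Q' ∈ T.erase Q, g Q', IsHomogeneous.prod _ _ _ hk, ?_, ?_⟩
  · intro hm
    obtain ⟨Q', hQ', h⟩ := ((hT Q hQ).prime.prod_mem_iff).1 hm
    exact hg' Q' hQ' h
  · intro Q' hQ' hne
    have h1 : Q' ∈ T.erase Q := Finset.mem_erase.2 ⟨hne, hQ'⟩
    rw [← Finset.mul_prod_erase _ _ h1]
    exact (I Q').mul_mem_right _ (hg Q' h1)

lemma HF_union {T : Finset (Set (σ → ℂ))} (hT : ∀ Q ∈ T, Irr Q)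
    (hmax : ∀ Q ∈ T, ∀ Q' ∈ T, Q ⊆ Q' → Q = Q') {U : Set (σ → ℂ)} (hU : ∀ Q ∈ T, Q ⊆ U) :
    ∃ k, ∀ t, ∑ Q ∈ T, HF Q t ≤ HF U (t + k) := by
  classical
  have h := exists_seps hT hmax
  choose! k g hk hg hg' using h
  have h2 : ∀ Q ∈ T, ∃ y : MvPolynomial σ ℂ, y.IsHomogeneous 1 ∧ y ∉ I Q := fun Q hQ => by
    obtain ⟨i, hi⟩ := (hT Q hQ).exists_X
    exact ⟨X i, isHomogeneous_X _ _, hi⟩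
  choose! x hx1 hx using h2
  refine ⟨∑ Q ∈ T, k Q, fun t => ?_⟩
  set K := ∑ Q ∈ T, k Q with hK
  have hkK : ∀ Q ∈ T, k Q ≤ K := fun Q hQ => Finset.single_le_sum (f := k) (fun _ _ => Nat.zero_le _) hQ
  choose p hp hpI using fun Q : Set (σ → ℂ) => HF_family Q t
  let G : Set (σ → ℂ) → MvPolynomial σ ℂ := fun Q => g Q * x Q ^ (K - k Q)
  have hG : ∀ Q ∈ T, (G Q).IsHomogeneous K := by
    intro Q hQ
    have := (hk Q hQ).mul ((hx1 Q hQ).pow (K - k Q))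
    rwa [one_mul, Nat.add_sub_cancel' (hkK Q hQ)] at this
  have hG1 : ∀ Q ∈ T, G Q ∉ I Q := by
    intro Q hQ h
    rcases (hT Q hQ).prime.mem_or_mem h with h | h
    · exact hg Q hQ h
    · exact hx Q hQ ((hT Q hQ).prime.mem_of_pow_mem _ h)
  have hG2 : ∀ Q ∈ T, ∀ Q' ∈ T, Q' ≠ Q → G Q ∈ I Q' := fun Q hQ Q' hQ' hne =>
    (I Q').mul_mem_right _ (hg' Q hQ Q' hQ' hne)
  have := le_HF U (t := t + K) (ι := (Q : T) × Fin (HF Q.1 t)) (p := fun y => p y.1.1 y.2 * G y.1.1)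
    (fun y => (hp y.1.1 y.2).mul (hG _ y.1.2)) (by
      intro c hc
      rw [Fintype.sum_sigma] at hc
      have e : ∀ Q : T, ∑ i, C (c ⟨Q, i⟩) * (p Q.1 i * G Q.1) =
          (∑ i, C (c ⟨Q, i⟩) * p Q.1 i) * G Q.1 := by
        intro Q
        rw [Finset.sum_mul]
        exact Finset.sum_congr rfl fun i _ => by ring
      simp only [e] at hc
      have key : ∀ Q : T, ∀ i, c ⟨Q, i⟩ = 0 := by
        intro Q
        apply hpI
        have h1 := I_anti (hU Q.1 Q.2) hc
        rw [← Finset.add_sum_erase _ _ (Finset.mem_univ Q)] at h1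
        have h2 : ∑ Q' ∈ Finset.univ.erase Q, (∑ i, C (c ⟨Q', i⟩) * p Q'.1 i) * G Q'.1 ∈ I Q.1 := by
          refine (I Q.1).sum_mem fun Q' hQ' => (I Q.1).mul_mem_left _ ?_
          refine hG2 Q'.1 Q'.2 Q.1 Q.2 fun h => ?_
          exact (Finset.mem_erase.1 hQ').1 (Subtype.ext h.symm)
        have h3 := (I Q.1).sub_mem h1 h2
        rw [add_sub_cancel_right] at h3
        exact ((hT Q.1 Q.2).prime.mem_or_mem h3).resolve_right (hG1 _ Q.2)
      rintro ⟨Q, i⟩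
      exact key Q i)
  rw [Fintype.card_sigma] at this
  simp only [Fintype.card_fin] at this
  rwa [Finset.sum_coe_sort T (fun Q => HF Q t)] at this

open Classical in
/-- dimension of the affine cone -/
noncomputable def cdim (V : Set (σ → ℂ)) : ℕ :=
  sInf {n | ∃ π : (σ → ℂ) →ₗ[ℂ] (Fin n → ℂ), Good V π}

lemma cdim_nonempty (V : Set (σ → ℂ)) : {n | ∃ π : (σ → ℂ) →ₗ[ℂ] (Fin n → ℂ), Good V π}.Nonempty := by
  refine ⟨Fintype.card σ, (LinearEquiv.funCongrLeft ℂ ℂ (Fintype.equivFin σ).symm).toLinearMap, ?_⟩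
  intro x _ hx
  exact (LinearEquiv.map_eq_zero_iff _).1 hx

lemma cdim_le {V : Set (σ → ℂ)} {n : ℕ} {π : (σ → ℂ) →ₗ[ℂ] (Fin n → ℂ)} (h : Good V π) :
    cdim V ≤ n := Nat.sInf_le ⟨π, h⟩

lemma cdim_norm {V : Set (σ → ℂ)} (hV : Cone V) (h0 : ¬ V ⊆ {0}) :
    1 ≤ cdim V ∧ ∃ π : (σ → ℂ) →ₗ[ℂ] (Fin (cdim V) → ℂ), Good V π ∧ Inj V π := by
  obtain ⟨π, hπ⟩ : ∃ π : (σ → ℂ) →ₗ[ℂ] (Fin (cdim V) → ℂ), Good V π := Nat.sInf_mem (cdim_nonempty V)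
  have h1 : 1 ≤ cdim V := by
    by_contra h
    have h2 : cdim V = 0 := by omega
    apply h0
    intro x hx
    refine hπ x hx ?_
    ext i
    exact (Fin.cast h2 i).elim0
  refine ⟨h1, π, hπ, ?_⟩
  by_contra hi
  obtain ⟨n, hn⟩ : ∃ n, cdim V = n + 1 := ⟨cdim V - 1, by omega⟩
  have key : ∀ m, m = n + 1 → ∀ π : (σ → ℂ) →ₗ[ℂ] (Fin m → ℂ), Good V π → ¬ Inj V π → cdim V ≤ n := by
    rintro _ rfl π h h'
    obtain ⟨π', h''⟩ := step (fun v hv c => hV.smul hv c) h h'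
    exact cdim_le h''
  have := key _ hn π hπ hi
  omega

lemma good_mono {V W : Set (σ → ℂ)} (h : V ⊆ W) {π : (σ → ℂ) →ₗ[ℂ] (τ → ℂ)} (hπ : Good W π) :
    Good V π := fun x hx => hπ x (h hx)

lemma cdim_mono {V W : Set (σ → ℂ)} (h : V ⊆ W) : cdim V ≤ cdim W := by
  obtain ⟨π, hπ⟩ : ∃ π : (σ → ℂ) →ₗ[ℂ] (Fin (cdim W) → ℂ), Good W π := Nat.sInf_mem (cdim_nonempty W)
  exact cdim_le (good_mono h hπ)

lemma exists_sand {V : Set (σ → ℂ)} (hV : Irr V) : ∃ r, 1 ≤ r ∧ Sand V (cdim V) r := by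
  obtain ⟨h1, π, hπ, hi⟩ := cdim_norm hV.1 hV.2.1
  obtain ⟨r, s, l, a, G, hr, ha, hG, hLI, hgen⟩ := rank_core hV hπ hi ⟨0, h1⟩
  have := sand_of hV hi ha hG hLI hgen
  rw [Fintype.card_fin] at this
  exact ⟨r, hr, this⟩

open Classical in
/-- Hilbert degree of an irreducible cone -/
noncomputable def D (V : Set (σ → ℂ)) : ℕ := if h : Irr V then (exists_sand h).choose else 0

lemma D_spec {V : Set (σ → ℂ)} (hV : Irr V) : 1 ≤ D V ∧ Sand V (cdim V) (D V) := by
  rw [D, dif_pos hV]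
  exact (exists_sand hV).choose_spec

lemma cdim_pos {V : Set (σ → ℂ)} (hV : Irr V) : 1 ≤ cdim V := (cdim_norm hV.1 hV.2.1).1

lemma Irr.lower {V : Set (σ → ℂ)} (hV : Irr V) :
    ∃ s, ∀ S t, s ≤ S → D V * (cdim V).multichoose t ≤ HF V (t + S) := by
  obtain ⟨h1, s, s', h⟩ := D_spec hV
  refine ⟨s, fun S t hS => ?_⟩
  obtain ⟨e, rfl⟩ := Nat.exists_eq_add_of_le hS
  calc _ ≤ D V * (cdim V).multichoose (t + e) :=
        Nat.mul_le_mul_left _ (mc_mono _ (cdim_pos hV) (by omega))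
    _ ≤ _ := by
      have := (h (t + e)).1
      rwa [show t + e + s = t + (s + e) by ring] at this

lemma Irr.upper {V : Set (σ → ℂ)} (hV : Irr V) :
    ∃ s, ∀ t, HF V t ≤ D V * (cdim V).multichoose (t + s) := by
  obtain ⟨h1, s, s', h⟩ := D_spec hV
  exact ⟨s', fun t => (h t).2⟩

lemma inj_le {V : Set (σ → ℂ)} (hV : Irr V) {π : (σ → ℂ) →ₗ[ℂ] (τ → ℂ)} (hinj : Inj V π) :
    Fintype.card τ ≤ cdim V := by
  rcases Nat.eq_zero_or_pos (Fintype.card τ) with h | h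
  · omega
  obtain ⟨s, hs⟩ := hV.upper
  have := mc_cmp (n := Fintype.card τ) (n' := cdim V) (r := 1) (r' := D V) (s := s) h le_rfl
    (fun t => by rw [one_mul]; exact (HF_pull hinj t).trans (hs t))
  omega

lemma cdim_strict {V W : Set (σ → ℂ)} (hV : Irr V) (hW : Irr W) (h : V ⊂ W) :
    cdim V < cdim W := by
  rcases (cdim_mono h.1).lt_or_eq with h1 | h1
  · exact h1
  exfalso
  obtain ⟨k, f, hf, hfV, hfW⟩ := exists_homog_sep hV.1 (fun hc => h.2 (hV.1.subset_iff.2 hc))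
  obtain ⟨s, hs⟩ := hV.lower
  obtain ⟨s', hs'⟩ := hW.upper
  have key := mc_cmp (n := cdim V) (n' := cdim W) (r := (D W + 1) * D V) (r' := D W)
    (s := s + (D W + 1) * k + s') (cdim_pos hV) (by have := (D_spec hV).1; nlinarith) (fun t => by
      have h2 := HF_steps hW h.1 hf hfW hfV (t + s) (D W + 1)
      have h3 := hs' (t + s + (D W + 1) * k)
      rw [show t + (s + (D W + 1) * k + s') = t + s + (D W + 1) * k + s' by ring]
      refine le_trans ?_ (h2.trans h3)
      calc _ = ∑ u ∈ Finset.range (D W + 1), D V * (cdim V).multichoose t := by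
            rw [Finset.sum_const, Finset.card_range, smul_eq_mul, mul_assoc]
        _ ≤ _ := Finset.sum_le_sum fun u _ => by
          rw [add_assoc]
          exact hs _ _ (by omega))
  have := (D_spec hV).1
  have : (D W + 1) * D V ≤ D W := by omega
  nlinarith

/-- a hyperplane section has a projection to one dimension less -/
lemma exchange {V : Set (σ → ℂ)} (hV : Irr V) (h : (σ → ℂ) →ₗ[ℂ] ℂ) (hh : lin h ∉ I V) {k : ℕ}
    (hk : cdim V = k + 1) :
    ∃ π : (σ → ℂ) →ₗ[ℂ] (Fin k → ℂ), Good (V ∩ {x | h x = 0}) π := by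
  obtain ⟨h1, π, hπ, hi⟩ := cdim_norm hV.1 hV.2.1
  have hc : Cone (V ∩ {x | h x = 0}) := hV.1.inter (cone_lin h)
  have hn : ¬ Inj (V ∩ {x | h x = 0}) π := by
    intro hinj
    obtain ⟨s, hs⟩ := hV.upper
    have := mc_cmp (n := cdim V + 1) (n' := cdim V) (r := 1) (r' := D V) (s := 1 + s) (by omega) le_rfl
      (fun t => by
        have h2 := HF_steps hV Set.inter_subset_left (lin_homog h) hh
          (lin_mem.2 fun x hx => hx.2 : lin h ∈ I (V ∩ {x | h x = 0})) 0 (t + 1)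
        have h3 := hs (0 + (t + 1) * 1)
        rw [show t + (1 + s) = 0 + (t + 1) * 1 + s by ring]
        refine le_trans ?_ (h2.trans h3)
        rw [one_mul, ← mc_sum]
        refine Finset.sum_le_sum fun u _ => ?_
        have h4 := HF_pull hinj (0 + (u + 1) * 1)
        rw [Fintype.card_fin] at h4
        refine le_trans ?_ h4
        exact mc_mono _ h1 (by omega))
    omega
  have key : ∀ m, m = k + 1 → ∀ π : (σ → ℂ) →ₗ[ℂ] (Fin m → ℂ), Good (V ∩ {x | h x = 0}) π →
      ¬ Inj (V ∩ {x | h x = 0}) π → ∃ π : (σ → ℂ) →ₗ[ℂ] (Fin k → ℂ), Good (V ∩ {x | h x = 0}) π := by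
    rintro _ rfl π h h'
    exact step (fun v hv c => hc.smul hv c) h h'
  exact key _ hk π (good_mono Set.inter_subset_left hπ) hn

end dims
end GB


namespace GB
open MvPolynomial

set_option linter.unusedSectionVars false

section purity
variable {σ τ : Type*} [Fintype σ] [Fintype τ]

/-- coordinate ring -/
def CR (V : Set (σ → ℂ)) : Type _ := MvPolynomial σ ℂ ⧸ I V

noncomputable instance (V : Set (σ → ℂ)) : CommRing (CR V) :=
  inferInstanceAs (CommRing (MvPolynomial σ ℂ ⧸ I V))

/-- projection to the coordinate ring -/
noncomputable def mkA (V : Set (σ → ℂ)) : MvPolynomial σ ℂ →+* CR V := Ideal.Quotient.mk (I V)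

lemma mkA_surj (V : Set (σ → ℂ)) : Function.Surjective (mkA V) := Ideal.Quotient.mk_surjective

lemma mkA_zero {V : Set (σ → ℂ)} {p : MvPolynomial σ ℂ} : mkA V p = 0 ↔ p ∈ I V :=
  Ideal.Quotient.eq_zero_iff_mem

lemma mkA_ker (V : Set (σ → ℂ)) : RingHom.ker (mkA V) = I V := Ideal.mk_ker

lemma CR_domain {V : Set (σ → ℂ)} (hV : Irr V) : IsDomain (CR V) :=
  (Ideal.Quotient.isDomain_iff_prime (I V)).2 hV.prime

/-- the structure map of the coordinate ring over the polynomial ring -/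
noncomputable def toA (V : Set (σ → ℂ)) (π : (σ → ℂ) →ₗ[ℂ] (τ → ℂ)) :
    MvPolynomial τ ℂ →+* CR V :=
  (mkA V).comp (pull π).toRingHom

lemma toA_apply (V : Set (σ → ℂ)) (π : (σ → ℂ) →ₗ[ℂ] (τ → ℂ)) (f : MvPolynomial τ ℂ) :
    toA V π f = mkA V (pull π f) := rfl

lemma toA_inj {V : Set (σ → ℂ)} {π : (σ → ℂ) →ₗ[ℂ] (τ → ℂ)} (h : Inj V π) :
    Function.Injective (toA V π) := by
  rw [injective_iff_map_eq_zero]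
  intro f hf
  rw [toA_apply, mkA_zero] at hf
  exact h f hf

lemma toA_finite {V : Set (σ → ℂ)} (hV : Cone V) {π : (σ → ℂ) →ₗ[ℂ] (τ → ℂ)} (h : Good V π) :
    (toA V π).Finite := by
  classical
  obtain ⟨K, M, hM, hgen⟩ := gen hV h
  let := (toA V π).toAlgebra
  refine ⟨M.image (mkA V), ?_⟩
  rw [eq_top_iff]
  rintro a -
  obtain ⟨p, rfl⟩ := mkA_surj V a
  obtain ⟨c, hc⟩ := hgen p
  rw [← mkA_zero, map_sub, sub_eq_zero] at hc
  rw [hc, map_sum]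
  refine Submodule.sum_mem _ fun m hm => ?_
  rw [map_mul]
  exact Submodule.smul_mem _ (c m) (Submodule.subset_span (by
    rw [Finset.coe_image]
    exact ⟨m, hm, rfl⟩))

lemma I_inter_lin {V : Set (σ → ℂ)} (hV : Cone V) (h : (σ → ℂ) →ₗ[ℂ] ℂ)
    {J : Ideal (MvPolynomial σ ℂ)} (hJ : J.IsPrime) (h1 : I V ≤ J) (h2 : lin h ∈ J) :
    I (V ∩ {x | h x = 0}) ≤ J := by
  have h3 : I (V ∩ {x | h x = 0}) ≤ (I V ⊔ Ideal.span {lin h}).radical := by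
    intro f hf
    rw [← vanishingIdeal_zeroLocus_eq_radical (K := ℂ), mem_vanishingIdeal_iff]
    intro x hx
    rw [mem_zeroLocus_iff] at hx
    have hxV : x ∈ V := hV.mem_iff.2 fun p hp => by
      have := hx p (Ideal.mem_sup_left hp)
      simpa using this
    have hx0 : h x = 0 := by
      have := hx (lin h) (Ideal.mem_sup_right (Ideal.subset_span rfl))
      have h2 : eval x (lin h) = 0 := by simpa using this
      rwa [eval_lin] at h2
    have := mem_I.1 hf x ⟨hxV, hx0⟩
    simpa using this
  refine h3.trans ((Ideal.radical_mono (sup_le h1 ?_)).trans hJ.radical.le)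
  rw [Ideal.span_le]
  simpa using h2

lemma comp_max {V : Set (σ → ℂ)} {T : Finset (Set (σ → ℂ))} (hT : ∀ Z ∈ T, Comp V Z) :
    ∀ Q ∈ T, ∀ Q' ∈ T, Q ⊆ Q' → Q = Q' := fun Q hQ Q' hQ' h =>
  ((hT Q hQ).2.2 Q' (hT Q' hQ').1 h (hT Q' hQ').2.1).symm

lemma exists_sep_comp {V Q : Set (σ → ℂ)} (hV : Cone V) (hQ : Comp V Q) :
    ∃ p, p ∉ I Q ∧ ∀ f ∈ I Q, p * f ∈ I V := by
  obtain ⟨T, hT, hTV, -⟩ := exists_comps V hV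
  obtain ⟨k, g, hg, hgQ, hg'⟩ := exists_seps (T := T) (fun Z hZ => ((hT Z).1 hZ).1)
    (comp_max fun Z hZ => (hT Z).1 hZ) Q ((hT Q).2 hQ)
  refine ⟨g, hgQ, fun f hf => mem_I.2 fun x hx => ?_⟩
  rw [map_mul]
  rcases hTV hx with h0 | h1
  · rw [Set.mem_singleton_iff] at h0
    rw [h0, mem_I.1 hf 0 hQ.1.zero_mem, mul_zero]
  · simp only [Set.mem_iUnion] at h1
    obtain ⟨Z, hZ, hxZ⟩ := h1
    by_cases h : Z = Q
    · rw [mem_I.1 hf x (h ▸ hxZ), mul_zero]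
    · rw [mem_I.1 (hg' Z hZ h) x hxZ, zero_mul]

lemma purity_core {V Q : Set (σ → ℂ)} (hV : Irr V) {k : ℕ} {π : (σ → ℂ) →ₗ[ℂ] (Fin (k + 1) → ℂ)}
    (hπ : Good V π) (hi : Inj V π) (h : (σ → ℂ) →ₗ[ℂ] ℂ) (hπh : ∀ x, π x 0 = h x)
    (hQ : Comp (V ∩ {x | h x = 0}) Q) (f : MvPolynomial (Fin (k + 1)) ℂ) (hf : pull π f ∈ I Q) :
    f ∈ Ideal.span {(X 0 : MvPolynomial (Fin (k + 1)) ℂ)} := by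
  have hVp := CR_domain hV
  have hQp := hQ.1.prime
  have hQV : I V ≤ I Q := I_anti (hQ.2.1.trans Set.inter_subset_left)
  let := (toA V π).toAlgebra
  have hfin : Module.Finite (MvPolynomial (Fin (k + 1)) ℂ) (CR V) :=
    toA_finite hV.1 hπ
  have : FaithfulSMul (MvPolynomial (Fin (k + 1)) ℂ) (CR V) := by
    rw [faithfulSMul_iff_algebraMap_injective]
    exact toA_inj hi
  let P : Ideal (CR V) := (I Q).map (mkA V)
  have hPc : P.comap (mkA V) = I Q := by
    rw [Ideal.comap_map_of_surjective _ (mkA_surj V), ← RingHom.ker_eq_comap_bot,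
      mkA_ker, sup_eq_left.2 hQV]
  have hP : P.IsPrime := Ideal.map_isPrime_of_surjective (mkA_surj V)
    (by rw [mkA_ker]; exact hQV)
  have hlin : pull π (X 0) = lin h := MvPolynomial.funext fun x => by
    rw [eval_pull, eval_X, eval_lin, hπh]
  have hX : Prime (X 0 : MvPolynomial (Fin (k + 1)) ℂ) := MvPolynomial.X_prime
  have hsp : (Ideal.span {(X 0 : MvPolynomial (Fin (k + 1)) ℂ)}).IsPrime :=
    (Ideal.span_singleton_prime hX.ne_zero).2 hX
  have hle : Ideal.span {(X 0 : MvPolynomial (Fin (k + 1)) ℂ)} ≤ P.under _ := by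
    rw [Ideal.span_le, Set.singleton_subset_iff, SetLike.mem_coe, Ideal.mem_comap]
    change mkA V (pull π (X 0)) ∈ P
    rw [hlin, ← Ideal.mem_comap, hPc, lin_mem]
    exact fun x hx => (hQ.2.1 hx).2
  obtain ⟨P', hP'P, hP', hover⟩ := Ideal.exists_ideal_le_liesOver_of_le
    (p := Ideal.span {(X 0 : MvPolynomial (Fin (k + 1)) ℂ)}) (q := P.under _) P hle
  have hJ : (P'.comap (mkA V)).IsPrime := inferInstance
  have h1 : I (V ∩ {x | h x = 0}) ≤ P'.comap (mkA V) := by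
    refine I_inter_lin hV.1 h hJ ?_ ?_
    · intro p hp
      rw [Ideal.mem_comap, mkA_zero.2 hp]
      exact P'.zero_mem
    · have : (X 0 : MvPolynomial (Fin (k + 1)) ℂ) ∈ P'.under _ := by
        rw [← hover.over]; exact Ideal.subset_span rfl
      rw [Ideal.mem_comap, ← hlin]
      exact this
  obtain ⟨p, hp, hpf⟩ := exists_sep_comp (hV.1.inter (cone_lin h)) hQ
  have h2 := h1 (hpf _ hf)
  have h3 : pull π f ∈ P'.comap (mkA V) := by
    refine (hJ.mem_or_mem h2).resolve_left fun hc => hp ?_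
    rw [← hPc]
    exact hP'P hc
  rw [hover.over]
  exact h3

lemma purity {V Q : Set (σ → ℂ)} (hV : Irr V) (h : (σ → ℂ) →ₗ[ℂ] ℂ) (hh : lin h ∉ I V)
    (hQ : Comp (V ∩ {x | h x = 0}) Q) : cdim V = cdim Q + 1 := by
  obtain ⟨k, hk⟩ : ∃ k, cdim V = k + 1 := ⟨cdim V - 1, by have := cdim_pos hV; omega⟩
  obtain ⟨π', hπ'⟩ := exchange hV h hh hk
  let π : (σ → ℂ) →ₗ[ℂ] (Fin (k + 1) → ℂ) :=
    LinearMap.pi (Fin.cons h fun i => LinearMap.proj i ∘ₗ π')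
  have hπ0 : ∀ x, π x 0 = h x := fun x => by simp [π]
  have hπs : ∀ x i, π x (Fin.succ i) = π' x i := fun x i => by simp [π]
  have hg : Good V π := by
    intro x hx h0
    refine hπ' x ⟨hx, ?_⟩ ?_
    · rw [Set.mem_ofPred_eq, ← hπ0, h0]; rfl
    · ext i
      rw [← hπs, h0]; rfl
  have hi : Inj V π := by
    by_contra hc
    obtain ⟨π'', h''⟩ := step (fun v hv c => hV.1.smul hv c) hg hc
    have := cdim_le h''
    omega
  have hQi : Inj Q π' := by
    intro f hf
    have e : pull π (rename Fin.succ f) = pull π' f := MvPolynomial.funext fun x => by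
      rw [eval_pull, eval_pull, eval_rename]
      congr 1
    have h1 := purity_core hV hg hi h hπ0 hQ (rename Fin.succ f) (by rwa [e])
    obtain ⟨g, hg⟩ := Ideal.mem_span_singleton'.1 h1
    refine MvPolynomial.funext fun y => ?_
    have h2 := congrArg (eval (Fin.cons 0 y : Fin (k + 1) → ℂ)) hg
    rw [map_mul, eval_X, eval_rename] at h2
    simp only [Fin.cons_zero, mul_zero] at h2
    rw [map_zero, h2]
    congr 1
  have h1 := inj_le hQ.1 hQi
  have h2 := cdim_le (good_mono hQ.2.1 hπ')
  rw [Fintype.card_fin] at h1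
  omega

/-- Heintz step -/
lemma heintz_step {V : Set (σ → ℂ)} (hV : Irr V) (h : (σ → ℂ) →ₗ[ℂ] ℂ) {T : Finset (Set (σ → ℂ))}
    (hT : ∀ Q ∈ T, Comp (V ∩ {x | h x = 0}) Q) : ∑ Q ∈ T, D Q ≤ D V := by
  by_cases hh : lin h ∈ I V
  · have hVH : V ∩ {x | h x = 0} = V := Set.inter_eq_left.2 fun x hx => lin_mem.1 hh x hx
    rw [hVH] at hT
    have : T ⊆ {V} := fun Q hQ => by
      rw [Finset.mem_singleton]
      exact ((hT Q hQ).2.2 V hV (hT Q hQ).2.1 le_rfl).symm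
    simpa using Finset.sum_le_sum_of_subset (f := D) this
  obtain ⟨k, hk⟩ : ∃ k, cdim V = k + 1 := ⟨cdim V - 1, by have := cdim_pos hV; omega⟩
  have hd : ∀ Q ∈ T, cdim Q = k := fun Q hQ => by
    have := purity hV h hh (hT Q hQ); omega
  obtain ⟨κ, hκ⟩ := HF_union (fun Q hQ => (hT Q hQ).1) (comp_max hT) (U := V ∩ {x | h x = 0})
    fun Q hQ => (hT Q hQ).2.1
  have hl : ∀ Q ∈ T, ∃ s, ∀ S t, s ≤ S → D Q * k.multichoose t ≤ HF Q (t + S) := fun Q hQ => by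
    have := (hT Q hQ).1.lower
    rwa [hd Q hQ] at this
  choose! s hs using hl
  obtain ⟨s', hs'⟩ := hV.upper
  set S := ∑ Q ∈ T, s Q with hS
  have hsS : ∀ Q ∈ T, s Q ≤ S := fun Q hQ => Finset.single_le_sum (f := s) (fun _ _ => Nat.zero_le _) hQ
  have h1 : ∀ t, (∑ Q ∈ T, D Q) * k.multichoose t ≤ HF (V ∩ {x | h x = 0}) (t + (S + 1) + κ) := by
    intro t
    refine le_trans ?_ (hκ _)
    rw [Finset.sum_mul]
    exact Finset.sum_le_sum fun Q hQ => hs Q hQ _ _ (by have := hsS Q hQ; omega)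
  rcases Nat.eq_zero_or_pos (∑ Q ∈ T, D Q) with h0 | h0
  · omega
  have := mc_cmp (n := k + 1) (n' := cdim V) (r := ∑ Q ∈ T, D Q) (r' := D V)
    (s := S + κ + 1 + s') (by omega) h0 (fun t => by
      have h2 := HF_steps hV Set.inter_subset_left (lin_homog h) hh
          (lin_mem.2 fun x hx => hx.2 : lin h ∈ I (V ∩ {x | h x = 0})) (S + κ) (t + 1)
      have h3 := hs' (S + κ + (t + 1) * 1)
      rw [show t + (S + κ + 1 + s') = S + κ + (t + 1) * 1 + s' by ring]
      refine le_trans ?_ (h2.trans h3)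
      rw [← mc_sum, Finset.mul_sum]
      refine Finset.sum_le_sum fun u _ => ?_
      have := h1 u
      rwa [show u + (S + 1) + κ = S + κ + (u + 1) * 1 by ring] at this)
  omega

end purity
end GB


namespace GB
open MvPolynomial

set_option linter.unusedSectionVars false

section pts
variable {σ τ : Type*} [Fintype σ] [Fintype τ]

lemma comp_split {U E : Set (σ → ℂ)} {S : Finset (Set (σ → ℂ))}
    (hS : ∀ W, Irr W → W ⊆ U → ∃ Q ∈ S, W ⊆ Q) (hSU : ∀ Q ∈ S, Q ⊆ U)
    {F : Set (σ → ℂ) → ℕ}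
    (hF : ∀ Q ∈ S, ∀ T : Finset (Set (σ → ℂ)), (∀ C ∈ T, Comp (Q ∩ E) C) → ∑ C ∈ T, D C ≤ F Q)
    {T : Finset (Set (σ → ℂ))} (hT : ∀ C ∈ T, Comp (U ∩ E) C) :
    ∑ C ∈ T, D C ≤ ∑ Q ∈ S, F Q := by
  classical
  have h : ∀ C ∈ T, ∃ Q ∈ S, C ⊆ Q := fun C hC =>
    hS C (hT C hC).1 ((hT C hC).2.1.trans Set.inter_subset_left)
  choose! j hj hjC using h
  rw [← Finset.sum_fiberwise_of_maps_to hj]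
  refine Finset.sum_le_sum fun Q hQ => hF Q hQ _ fun C hC => ?_
  rw [Finset.mem_filter] at hC
  obtain ⟨h1, h2, h3⟩ := hT C hC.1
  have hCQ : C ⊆ Q := by have := hjC C hC.1; rwa [hC.2] at this
  refine ⟨h1, fun x hx => ⟨hCQ hx, (h2 hx).2⟩, fun Z' hZ' hCZ' hsub => h3 Z' hZ' hCZ' ?_⟩
  exact fun x hx => ⟨hSU Q hQ (hsub hx).1, (hsub hx).2⟩

lemma heintz_list (l : List ((σ → ℂ) →ₗ[ℂ] ℂ)) : ∀ {V : Set (σ → ℂ)}, Irr V →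
    ∀ {T : Finset (Set (σ → ℂ))}, (∀ C ∈ T, Comp (V ∩ {x | ∀ h ∈ l, h x = 0}) C) →
      ∑ C ∈ T, D C ≤ D V := by
  induction l with
  | nil =>
    intro V hV T hT
    refine heintz_step hV 0 fun Q hQ => ?_
    have := hT Q hQ
    simpa using this
  | cons h l ih =>
    intro V hV T hT
    obtain ⟨S, hS1, -, hS3⟩ := exists_comps (V ∩ {x | h x = 0}) (hV.1.inter (cone_lin h))
    have e : V ∩ {x | ∀ g ∈ h :: l, g x = 0} = (V ∩ {x | h x = 0}) ∩ {x | ∀ g ∈ l, g x = 0} := by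
      ext x; simp [and_assoc]
    rw [e] at hT
    refine (comp_split hS3 (fun Q hQ => ((hS1 Q).1 hQ).2.1) (F := D) ?_ hT).trans
      (heintz_step hV h fun Q hQ => (hS1 Q).1 hQ)
    exact fun Q hQ T hT => ih ((hS1 Q).1 hQ).1 hT

lemma sub_forms (W : Submodule ℂ (σ → ℂ)) : ∃ l : List ((σ → ℂ) →ₗ[ℂ] ℂ),
    (W : Set (σ → ℂ)) = {x | ∀ h ∈ l, h x = 0} := by
  let b := Module.finBasis ℂ ((σ → ℂ) ⧸ W)
  refine ⟨List.ofFn fun i => b.coord i ∘ₗ W.mkQ, ?_⟩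
  ext x
  simp only [SetLike.mem_coe, Set.mem_ofPred_eq, List.mem_ofFn, forall_exists_index,
    forall_apply_eq_imp_iff, LinearMap.comp_apply]
  rw [b.forall_coord_eq_zero_iff, Submodule.mkQ_apply, Submodule.Quotient.mk_eq_zero]

lemma cone_sub (W : Submodule ℂ (σ → ℂ)) : Cone (W : Set (σ → ℂ)) := by
  obtain ⟨l, hl⟩ := sub_forms W
  rw [hl]
  have : {x : σ → ℂ | ∀ h ∈ l, h x = 0} = ⋂ h : {h // h ∈ l}, {x | h.1 x = 0} := by
    ext x; simp
  rw [this]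
  exact Cone.iInter fun h => cone_lin h.1

lemma heintz_sub {V : Set (σ → ℂ)} (hV : Irr V) (W : Submodule ℂ (σ → ℂ))
    {T : Finset (Set (σ → ℂ))} (hT : ∀ C ∈ T, Comp (V ∩ W) C) : ∑ C ∈ T, D C ≤ D V := by
  obtain ⟨l, hl⟩ := sub_forms W
  rw [hl] at hT
  exact heintz_list l hV hT

/-- projective points -/
def pts (X : Set (σ → ℂ)) : Set (Submodule ℂ (σ → ℂ)) :=
  {L | Module.finrank ℂ L = 1 ∧ (L : Set (σ → ℂ)) ⊆ X}

lemma line_irr {L : Submodule ℂ (σ → ℂ)} (hL : Module.finrank ℂ L = 1) : Irr (L : Set (σ → ℂ)) := by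
  obtain ⟨v, hv, hv'⟩ := finrank_eq_one_iff'.1 hL
  have hspan : ∀ w ∈ L, ∃ c : ℂ, w = c • v.1 := fun w hw => by
    obtain ⟨c, hc⟩ := hv' ⟨w, hw⟩
    exact ⟨c, by rw [← Submodule.coe_smul, hc]⟩
  refine ⟨cone_sub L, fun h => hv (Subtype.ext (h v.2)), fun Y Z hY hZ h => ?_⟩
  rcases h v.2 with h | h
  · left
    intro w hw
    obtain ⟨c, rfl⟩ := hspan w hw
    exact hY.smul h c
  · right
    intro w hw
    obtain ⟨c, rfl⟩ := hspan w hw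
    exact hZ.smul h c

lemma pts_comp {X : Set (σ → ℂ)} (hX : Cone X) (hf : (pts X).Finite) {L : Submodule ℂ (σ → ℂ)}
    (hL : L ∈ pts X) : Comp X (L : Set (σ → ℂ)) := by
  classical
  refine ⟨line_irr hL.1, hL.2, fun Z hZ hLZ hZX => ?_⟩
  obtain ⟨Y, hY, hZY⟩ := hZ.subset_of_biUnion
    (T := hf.toFinset.image fun L : Submodule ℂ (σ → ℂ) => (L : Set (σ → ℂ))) (by
      intro Y hY
      obtain ⟨L, -, rfl⟩ := Finset.mem_image.1 hY
      exact cone_sub L) (by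
      intro x hx
      by_cases h0 : x = 0
      · left; exact h0
      · right
        simp only [Set.mem_iUnion]
        refine ⟨_, Finset.mem_image.2 ⟨ℂ ∙ x, ?_, rfl⟩, Submodule.mem_span_singleton_self x⟩
        rw [Set.Finite.mem_toFinset]
        refine ⟨finrank_span_singleton h0, fun y hy => ?_⟩
        obtain ⟨c, rfl⟩ := Submodule.mem_span_singleton.1 hy
        exact hX.smul (hZX hx) c)
  obtain ⟨L', hL', rfl⟩ := Finset.mem_image.1 hY
  rw [Set.Finite.mem_toFinset] at hL'
  have hLL' : L ≤ L' := hLZ.trans hZY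
  have : L = L' := Submodule.eq_of_le_of_finrank_eq hLL' (hL.1.trans hL'.1.symm)
  subst this
  exact Set.Subset.antisymm hZY hLZ

lemma pts_card_le {X : Set (σ → ℂ)} (hX : Cone X) {S : Finset (Set (σ → ℂ))}
    (hS : ∀ Z, Z ∈ S ↔ Comp X Z) (W : Submodule ℂ (σ → ℂ))
    (hf : (pts (X ∩ (W : Set (σ → ℂ)))).Finite) :
    (pts (X ∩ (W : Set (σ → ℂ)))).ncard ≤ ∑ Q ∈ S, D Q := by
  classical
  obtain ⟨S', hS', -, hS''⟩ := exists_comps X hX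
  have : S' = S := by ext Z; rw [hS', hS]
  subst this
  let T := hf.toFinset.image fun L : Submodule ℂ (σ → ℂ) => (L : Set (σ → ℂ))
  have hT : ∀ C ∈ T, Comp (X ∩ W) C := by
    intro C hC
    obtain ⟨L, hL, rfl⟩ := Finset.mem_image.1 hC
    exact pts_comp (hX.inter (cone_sub W)) hf ((Set.Finite.mem_toFinset hf).1 hL)
  have h1 := comp_split hS'' (fun Q hQ => ((hS Q).1 hQ).2.1) (E := W) (F := D)
    (fun Q hQ T hT => heintz_sub ((hS Q).1 hQ).1 W hT) hT
  refine le_trans ?_ h1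
  rw [Set.ncard_eq_toFinset_card _ hf, ← Finset.card_image_of_injective _ SetLike.coe_injective]
  rw [Finset.card_eq_sum_ones]
  exact Finset.sum_le_sum fun C hC => (D_spec (hT C hC).1).1

/-- chains of irreducible cones -/
def Chains (X : Set (σ → ℂ)) : Set ℕ :=
  {k : ℕ | ∃ c : Fin (k + 1) → Set (σ → ℂ),
    (∀ i, Irr (c i) ∧ c i ⊆ X) ∧ ∀ i j, i < j → c i ⊂ c j}

lemma chain_le {X : Set (σ → ℂ)} {k : ℕ} (h : k ∈ Chains X) : k + 1 ≤ cdim X := by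
  obtain ⟨c, hc, hlt⟩ := h
  have : ∀ n, ∀ hn : n < k + 1, n + 1 ≤ cdim (c ⟨n, hn⟩) := by
    intro n
    induction n with
    | zero => intro hn; exact cdim_pos (hc _).1
    | succ n ih =>
      intro hn
      have h1 := ih (by omega)
      have := cdim_strict (hc ⟨n, by omega⟩).1 (hc ⟨n + 1, hn⟩).1 (hlt _ _ (by simp))
      omega
  exact (this k (by omega)).trans (cdim_mono (hc _).2)

lemma exists_section {V : Set (σ → ℂ)} (hV : Irr V) {k : ℕ} (hk : cdim V = k + 2) :
    ∃ Q, Irr Q ∧ Q ⊂ V ∧ cdim Q = k + 1 := by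
  obtain ⟨v, hv, hv0⟩ := hV.nonempty
  obtain ⟨i, hi⟩ := Function.ne_iff.1 hv0
  let h : (σ → ℂ) →ₗ[ℂ] ℂ := LinearMap.proj i
  have hh : lin h ∉ I V := fun hc => hi (lin_mem.1 hc v hv)
  have hn : ¬ V ∩ {x | h x = 0} ⊆ {0} := by
    intro hc
    have : Good V (LinearMap.pi fun _ : Fin 1 => h) := fun x hx h0 =>
      hc ⟨hx, congrFun h0 0⟩
    have := cdim_le this
    omega
  obtain ⟨S, hS, hS2, -⟩ := exists_comps (V ∩ {x | h x = 0}) (hV.1.inter (cone_lin h))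
  rcases S.eq_empty_or_nonempty with rfl | ⟨Q, hQ⟩
  · simp at hS2
    exact absurd (by simpa using hS2) hn
  · have hQ' := (hS Q).1 hQ
    have := purity hV h hh hQ'
    refine ⟨Q, hQ'.1, ⟨hQ'.2.1.trans Set.inter_subset_left, fun hc => ?_⟩, by omega⟩
    exact hh (lin_mem.2 fun x hx => (hQ'.2.1 (hc hx)).2)

lemma chain_exists (k : ℕ) : ∀ {V : Set (σ → ℂ)}, Irr V → cdim V = k + 1 → k ∈ Chains V := by
  induction k with
  | zero =>
    intro V hV h
    refine ⟨fun _ => V, fun _ => ⟨hV, le_rfl⟩, fun i j hij => ?_⟩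
    omega
  | succ k ih =>
    intro V hV h
    obtain ⟨Q, hQ, hQV, hd⟩ := exists_section hV h
    obtain ⟨c, hc, hlt⟩ := ih hQ hd
    refine ⟨Fin.snoc (α := fun _ => Set (σ → ℂ)) c V, ?_, ?_⟩
    · intro i
      refine Fin.lastCases ?_ (fun i => ?_) i
      · simp [hV]
      · rw [Fin.snoc_castSucc]
        exact ⟨(hc i).1, (hc i).2.trans hQV.1⟩
    · intro i j
      refine Fin.lastCases ?_ (fun i => ?_) i
      · intro hij
        exact absurd hij (Fin.not_lt.2 (Fin.le_last j))
      · refine Fin.lastCases ?_ (fun j => ?_) j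
        · intro _
          rw [Fin.snoc_castSucc, Fin.snoc_last]
          exact lt_of_le_of_lt (hc i).2 hQV
        · intro hij
          rw [Fin.snoc_castSucc, Fin.snoc_castSucc]
          exact hlt i j (by simpa using hij)

lemma chains_sSup {V : Set (σ → ℂ)} (hV : Irr V) : sSup (Chains V) + 1 = cdim V := by
  obtain ⟨k, hk⟩ : ∃ k, cdim V = k + 1 := ⟨cdim V - 1, by have := cdim_pos hV; omega⟩
  have h1 := chain_exists k hV hk
  have hb : ∀ m ∈ Chains V, m ≤ k := fun m hm => by have := chain_le hm; omega
  have h2 : k ≤ sSup (Chains V) := le_csSup ⟨k, hb⟩ h1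
  have h3 : sSup (Chains V) ≤ k := csSup_le ⟨k, h1⟩ hb
  omega

end pts
end GB


namespace GB
open MvPolynomial

set_option linter.unusedSectionVars false

section prod
variable {σ τ : Type*} [Fintype σ] [Fintype τ]

lemma Cone.comap {V : Set (τ → ℂ)} (hV : Cone V) (φ : (σ → ℂ) →ₗ[ℂ] (τ → ℂ)) :
    Cone {x | φ x ∈ V} := by
  obtain ⟨S, hS, rfl⟩ := hV
  refine ⟨pull φ '' S, ?_, ?_⟩
  · rintro _ ⟨p, hp, rfl⟩
    obtain ⟨d, hd⟩ := hS p hp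
    exact ⟨d, pull_homog φ hd⟩
  · ext x
    simp [eval_pull]

/-- product of cones -/
def prd (V : Set (σ → ℂ)) (W : Set (τ → ℂ)) : Set (σ ⊕ τ → ℂ) :=
  {z | (fun i => z (Sum.inl i)) ∈ V ∧ (fun i => z (Sum.inr i)) ∈ W}

lemma mem_prd {V : Set (σ → ℂ)} {W : Set (τ → ℂ)} {v : σ → ℂ} {w : τ → ℂ} :
    Sum.elim v w ∈ prd V W ↔ v ∈ V ∧ w ∈ W := Iff.rfl

lemma prd_cone {V : Set (σ → ℂ)} {W : Set (τ → ℂ)} (hV : Cone V) (hW : Cone W) :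
    Cone (prd V W) :=
  (hV.comap (LinearMap.funLeft ℂ ℂ (Sum.inl : σ → σ ⊕ τ))).inter
    (hW.comap (LinearMap.funLeft ℂ ℂ (Sum.inr : τ → σ ⊕ τ)))

lemma mem_I_prd {V : Set (σ → ℂ)} {W : Set (τ → ℂ)} {f : MvPolynomial (σ ⊕ τ) ℂ} :
    f ∈ I (prd V W) ↔ ∀ v ∈ V, ∀ w ∈ W, eval (Sum.elim v w) f = 0 := by
  rw [mem_I]
  refine ⟨fun h v hv w hw => h _ (mem_prd.2 ⟨hv, hw⟩), fun h z hz => ?_⟩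
  have e : z = Sum.elim (fun i => z (Sum.inl i)) (fun i => z (Sum.inr i)) := by
    ext (i | i) <;> rfl
  rw [e]
  exact h _ hz.1 _ hz.2

/-- partial evaluation -/
noncomputable def evR (w : τ → ℂ) (f : MvPolynomial (σ ⊕ τ) ℂ) : MvPolynomial σ ℂ :=
  aeval (Sum.elim X fun j => C (w j)) f

noncomputable def evL (v : σ → ℂ) (f : MvPolynomial (σ ⊕ τ) ℂ) : MvPolynomial τ ℂ :=
  aeval (Sum.elim (fun j => C (v j)) X) f

lemma eval_evR (v : σ → ℂ) (w : τ → ℂ) (f : MvPolynomial (σ ⊕ τ) ℂ) :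
    eval v (evR w f) = eval (Sum.elim v w) f := by
  induction f using MvPolynomial.induction_on with
  | C a => simp [evR]
  | add p q hp hq => simp only [evR, map_add] at *; rw [hp, hq]
  | mul_X p n hp =>
    simp only [evR, map_mul, aeval_X, eval_X] at *
    rw [hp]
    rcases n with i | i <;> simp

lemma eval_evL (v : σ → ℂ) (w : τ → ℂ) (f : MvPolynomial (σ ⊕ τ) ℂ) :
    eval w (evL v f) = eval (Sum.elim v w) f := by
  induction f using MvPolynomial.induction_on with
  | C a => simp [evL]
  | add p q hp hq => simp only [evL, map_add] at *; rw [hp, hq]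
  | mul_X p n hp =>
    simp only [evL, map_mul, aeval_X, eval_X] at *
    rw [hp]
    rcases n with i | i <;> simp

lemma prd_irr {V : Set (σ → ℂ)} {W : Set (τ → ℂ)} (hV : Irr V) (hW : Irr W) : Irr (prd V W) := by
  refine irr_of_prime (prd_cone hV.1 hW.1) ?_ ?_
  · obtain ⟨v, hv, hv0⟩ := hV.nonempty
    intro h
    have := h (mem_prd.2 ⟨hv, hW.zero_mem⟩)
    apply hv0
    ext i
    exact congrFun this (Sum.inl i)
  · refine ⟨?_, ?_⟩
    · intro h
      have : (1 : MvPolynomial (σ ⊕ τ) ℂ) ∈ I (prd V W) := by rw [h]; trivial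
      have := mem_I_prd.1 this 0 hV.zero_mem 0 hW.zero_mem
      simp at this
    · intro f g hfg
      by_contra hc
      rw [not_or, mem_I_prd, mem_I_prd] at hc
      push Not at hc
      obtain ⟨⟨v1, hv1, w1, hw1, h1⟩, v2, hv2, w2, hw2, h2⟩ := hc
      have k1 : evL v1 f ∉ I W := fun h => h1 (by rw [← eval_evL]; exact mem_I.1 h w1 hw1)
      have k2 : evL v2 g ∉ I W := fun h => h2 (by rw [← eval_evL]; exact mem_I.1 h w2 hw2)
      have k3 : evL v1 f * evL v2 g ∉ I W := fun h => (hW.prime.mem_or_mem h).elim k1 k2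
      simp only [mem_I, not_forall] at k3
      obtain ⟨w, hw, h3⟩ := k3
      rw [map_mul, eval_evL, eval_evL] at h3
      have k4 : evR w f ∉ I V := fun h => left_ne_zero_of_mul h3 (by
        rw [← eval_evR]; exact mem_I.1 h v1 hv1)
      have k5 : evR w g ∉ I V := fun h => right_ne_zero_of_mul h3 (by
        rw [← eval_evR]; exact mem_I.1 h v2 hv2)
      have k6 : evR w f * evR w g ∈ I V := mem_I.2 fun v hv => by
        rw [map_mul, eval_evR, eval_evR, ← map_mul]
        exact mem_I_prd.1 hfg v hv w hw
      exact (hV.prime.mem_or_mem k6).elim k4 k5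

lemma HF_basis (V : Set (σ → ℂ)) (t : ℕ) : ∃ p : Fin (HF V t) → MvPolynomial σ ℂ,
    (∀ i, (p i).IsHomogeneous t) ∧ ∀ q : MvPolynomial σ ℂ, q.IsHomogeneous t →
      ∃ c : Fin (HF V t) → ℂ, q - ∑ i, C (c i) * p i ∈ I V := by
  let b := Module.finBasis ℂ (Submodule.map (Ideal.Quotient.mkₐ ℂ (I V)).toLinearMap
    (homogeneousSubmodule σ ℂ t))
  have : ∀ i, ∃ p : MvPolynomial σ ℂ, p.IsHomogeneous t ∧
      Ideal.Quotient.mk (I V) p = (b i : _ ⧸ I V) := by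
    intro i
    obtain ⟨p, hp, hp'⟩ := (b i).2
    exact ⟨p, hp, hp'⟩
  choose p hp hp' using this
  refine ⟨p, hp, fun q hq => ?_⟩
  let y : Submodule.map (Ideal.Quotient.mkₐ ℂ (I V)).toLinearMap
    (homogeneousSubmodule σ ℂ t) := ⟨Ideal.Quotient.mk (I V) q, q, hq, rfl⟩
  refine ⟨fun i => b.repr y i, ?_⟩
  rw [← Ideal.Quotient.eq_zero_iff_mem, map_sub, map_sum, sub_eq_zero]
  have h1 := congrArg Subtype.val (b.sum_repr y)
  rw [AddSubmonoidClass.coe_finset_sum] at h1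
  refine h1.symm.trans (Finset.sum_congr rfl fun i _ => ?_)
  rw [map_mul, hp']
  exact Algebra.smul_def _ _

lemma HF_prd (V : Set (σ → ℂ)) (W : Set (τ → ℂ)) (t : ℕ) :
    HF (prd V W) t ≤ ∑ x ∈ Finset.HasAntidiagonal.antidiagonal t, HF V x.1 * HF W x.2 := by
  classical
  choose p hp hps using HF_basis V
  choose q hq hqs using HF_basis W
  have := HF_le (V := prd V W) (t := t)
    (κ := (x : Finset.HasAntidiagonal.antidiagonal t) × (Fin (HF V x.1.1) × Fin (HF W x.1.2)))
    (q := fun y => rename Sum.inl (p y.1.1.1 y.2.1) * rename Sum.inr (q y.1.1.2 y.2.2)) (by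
      intro f hf
      let M : Submodule ℂ (MvPolynomial (σ ⊕ τ) ℂ) := (I (prd V W)).restrictScalars ℂ ⊔
        Submodule.span ℂ (Set.range fun y : (x : Finset.HasAntidiagonal.antidiagonal t) ×
          (Fin (HF V x.1.1) × Fin (HF W x.1.2)) =>
            rename Sum.inl (p y.1.1.1 y.2.1) * rename Sum.inr (q y.1.1.2 y.2.2))
      have hM : f ∈ M := by
        rw [Mon.sum hf]
        refine M.sum_mem fun d _ => ?_
        rw [← smul_eq_C_mul]
        refine M.smul_mem _ ?_
        let d1 : σ →₀ ℕ := d.1.comapDomain Sum.inl Sum.inl_injective.injOn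
        let d2 : τ →₀ ℕ := d.1.comapDomain Sum.inr Sum.inr_injective.injOn
        have hd : d.1 = d1.mapDomain Sum.inl + d2.mapDomain Sum.inr := by
          ext (i | i)
          · rw [Finsupp.add_apply, Finsupp.mapDomain_apply Sum.inl_injective,
              Finsupp.mapDomain_notin_range _ _ (by simp)]
            simp [d1]
          · rw [Finsupp.add_apply, Finsupp.mapDomain_apply Sum.inr_injective,
              Finsupp.mapDomain_notin_range _ _ (by simp)]
            simp [d2]
        have hdeg : d1.degree + d2.degree = t := by
          have h1 := mem_mon.1 d.2
          rw [Finsupp.degree_eq_sum, Fintype.sum_sum_type] at h1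
          rw [Finsupp.degree_eq_sum, Finsupp.degree_eq_sum, ← h1]
          rfl
        have hmon : monomial d.1 (1 : ℂ) = rename Sum.inl (monomial d1 1) *
            rename Sum.inr (monomial d2 1) := by
          rw [rename_monomial, rename_monomial, monomial_mul, one_mul, ← hd]
        obtain ⟨c, hc⟩ := hps d1.degree (monomial d1 1) (isHomogeneous_monomial _ rfl)
        obtain ⟨e, he⟩ := hqs d2.degree (monomial d2 1) (isHomogeneous_monomial _ rfl)
        set P := ∑ i, C (c i) * p d1.degree i with hP
        set Q := ∑ i, C (e i) * q d2.degree i with hQ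
        have e1 : monomial d.1 (1 : ℂ) = (rename Sum.inl (monomial d1 1 - P) *
            rename Sum.inr (monomial d2 1) + rename Sum.inl P * rename Sum.inr (monomial d2 1 - Q))
            + rename Sum.inl P * rename Sum.inr Q := by
          rw [hmon, map_sub, map_sub]; ring
        rw [e1]
        refine Submodule.add_mem_sup ?_ ?_
        · rw [Submodule.restrictScalars_mem, mem_I_prd]
          intro v hv w hw
          have i1 := mem_I.1 hc v hv
          have i2 := mem_I.1 he w hw
          rw [map_add, map_mul, map_mul, eval_rename, eval_rename, eval_rename, eval_rename]
          rw [Sum.elim_comp_inl, Sum.elim_comp_inr, i1, i2]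
          ring
        · rw [hP, hQ, map_sum, map_sum, Finset.sum_mul_sum]
          refine Submodule.sum_mem _ fun i _ => Submodule.sum_mem _ fun j _ => ?_
          have : rename Sum.inl (C (c i) * p d1.degree i) * rename Sum.inr (C (e j) * q d2.degree j)
            = (c i * e j) • (rename Sum.inl (p d1.degree i) * rename Sum.inr (q d2.degree j) :
              MvPolynomial (σ ⊕ τ) ℂ) := by
            rw [map_mul, map_mul, rename_C, rename_C, smul_eq_C_mul, map_mul]; ring
          rw [this]
          refine Submodule.smul_mem _ _ (Submodule.subset_span
            ⟨⟨⟨(d1.degree, d2.degree), Finset.HasAntidiagonal.mem_antidiagonal.2 hdeg⟩, (i, j)⟩, rfl⟩)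
      obtain ⟨a, ha, b, hb, hab⟩ := Submodule.mem_sup.1 hM
      obtain ⟨c, hc⟩ := (Submodule.mem_span_range_iff_exists_fun ℂ).1 hb
      refine ⟨c, ?_⟩
      simp only [smul_eq_C_mul] at hc
      rw [hc, ← hab, add_sub_cancel_right]
      exact ha)
  rw [Fintype.card_sigma] at this
  simp only [Fintype.card_prod, Fintype.card_fin] at this
  rwa [Finset.sum_coe_sort (Finset.HasAntidiagonal.antidiagonal t)
    (fun x => HF V x.1 * HF W x.2)] at this

lemma D_prd {V : Set (σ → ℂ)} {W : Set (τ → ℂ)} (hV : Irr V) (hW : Irr W) :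
    D (prd V W) ≤ D V * D W := by
  have hP := prd_irr hV hW
  obtain ⟨-, π, -, hi⟩ := cdim_norm hV.1 hV.2.1
  obtain ⟨-, π', -, hi'⟩ := cdim_norm hW.1 hW.2.1
  let φ : (σ ⊕ τ → ℂ) →ₗ[ℂ] (Fin (cdim V) ⊕ Fin (cdim W) → ℂ) :=
    LinearMap.pi (Sum.elim
      (fun i => LinearMap.proj i ∘ₗ π ∘ₗ LinearMap.funLeft ℂ ℂ (Sum.inl : σ → σ ⊕ τ))
      (fun i => LinearMap.proj i ∘ₗ π' ∘ₗ LinearMap.funLeft ℂ ℂ (Sum.inr : τ → σ ⊕ τ)))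
  have hφ : ∀ v w, φ (Sum.elim v w) = Sum.elim (π v) (π' w) := by
    intro v w
    ext (i | i) <;> rfl
  have hφi : Inj (prd V W) φ := by
    intro f hf
    rw [mem_I_prd] at hf
    simp only [eval_pull, hφ] at hf
    have h1 : ∀ w ∈ W, evR (π' w) f = 0 := fun w hw => hi _ (mem_I.2 fun v hv => by
      rw [eval_pull, eval_evR]; exact hf v hv w hw)
    have h2 : ∀ y, evL y f = 0 := fun y => hi' _ (mem_I.2 fun w hw => by
      rw [eval_pull, eval_evL, ← eval_evR, h1 w hw, map_zero])
    refine MvPolynomial.funext fun z => ?_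
    have e : z = Sum.elim (fun i => z (Sum.inl i)) (fun i => z (Sum.inr i)) := by
      ext (i | i) <;> rfl
    rw [e, ← eval_evL, h2, map_zero, map_zero]
  have hd := inj_le hP hφi
  rw [Fintype.card_sum, Fintype.card_fin, Fintype.card_fin] at hd
  obtain ⟨s, hs⟩ := hP.lower
  obtain ⟨s1, hs1⟩ := hV.upper
  obtain ⟨s2, hs2⟩ := hW.upper
  have := mc_cmp (n := cdim (prd V W)) (n' := cdim V + cdim W) (r := D (prd V W))
    (r' := D V * D W) (s := s + (s1 + s2)) (cdim_pos hP) (D_spec hP).1 (fun t => by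
      refine (hs s t le_rfl).trans ((HF_prd V W (t + s)).trans ?_)
      refine (Finset.sum_le_sum (g := fun x => (D V * D W) * ((cdim V).multichoose (x.1 + s1) *
        (cdim W).multichoose (x.2 + s2))) fun x _ => ?_).trans ?_
      · refine (Nat.mul_le_mul (hs1 x.1) (hs2 x.2)).trans (le_of_eq ?_)
        ring
      · rw [← Finset.mul_sum]
        have := mc_conv_le (cdim V) (cdim W) (t + s) s1 s2
        rw [show t + s + (s1 + s2) = t + (s + (s1 + s2)) by ring] at this
        exact Nat.mul_le_mul_left _ this)
  omega

lemma HF_image {C' : Set (σ → ℂ)} {E : Set (τ → ℂ)} (φ : (σ → ℂ) →ₗ[ℂ] (τ → ℂ))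
    (h : E ⊆ φ '' C') (t : ℕ) : HF E t ≤ HF C' t := by
  obtain ⟨p, hp, hpI⟩ := HF_family E t
  have := le_HF C' (p := fun i => pull φ (p i)) (fun i => pull_homog φ (hp i)) (by
    intro c hc
    apply hpI
    rw [mem_I] at hc ⊢
    intro y hy
    obtain ⟨x, hx, rfl⟩ := h hy
    rw [← eval_pull, map_sum]
    simp only [map_mul, pull_C]
    exact hc x hx)
  simpa using this

lemma D_le_of_HF {V : Set (σ → ℂ)} {W : Set (τ → ℂ)} (hV : Irr V) (hW : Irr W)
    (h : ∀ t, HF V t = HF W t) : D V ≤ D W := by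
  obtain ⟨s, hs⟩ := hV.lower
  obtain ⟨s1, hs1⟩ := hV.upper
  obtain ⟨s', hs'⟩ := hW.lower
  obtain ⟨s1', hs1'⟩ := hW.upper
  have a := mc_cmp (n := cdim V) (n' := cdim W) (r := D V) (r' := D W) (s := s + s1')
    (cdim_pos hV) (D_spec hV).1 (fun t => by
      rw [← add_assoc]
      exact (hs s t le_rfl).trans ((h _).le.trans (hs1' _)))
  have b := mc_cmp (n := cdim W) (n' := cdim V) (r := D W) (r' := D V) (s := s' + s1)
    (cdim_pos hW) (D_spec hW).1 (fun t => by
      rw [← add_assoc]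
      exact (hs' s' t le_rfl).trans ((h _).ge.trans (hs1 _)))
  omega

lemma irr_image {V : Set (σ → ℂ)} (hV : Irr V) (φ : (σ → ℂ) →ₗ[ℂ] (τ → ℂ)) (ψ : (τ → ℂ) →ₗ[ℂ] (σ → ℂ))
    (h : ∀ x, ψ (φ x) = x) (hc : Cone (φ '' V)) : Irr (φ '' V) := by
  refine ⟨hc, fun h0 => hV.2.1 fun x hx => ?_, fun Y Z hY hZ hsub => ?_⟩
  · have : φ x = 0 := h0 ⟨x, hx, rfl⟩
    rw [Set.mem_singleton_iff, ← h x, this, map_zero]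
  · rcases hV.2.2 _ _ (hY.comap φ) (hZ.comap φ) (fun x hx => hsub ⟨x, hx, rfl⟩) with h1 | h1
    · left; rintro _ ⟨x, hx, rfl⟩; exact h1 hx
    · right; rintro _ ⟨x, hx, rfl⟩; exact h1 hx

lemma bezout2 {V W : Set (σ → ℂ)} (hV : Irr V) (hW : Irr W) {T : Finset (Set (σ → ℂ))}
    (hT : ∀ C ∈ T, Comp (V ∩ W) C) : ∑ C ∈ T, D C ≤ D V * D W := by
  classical
  let δ : (σ → ℂ) →ₗ[ℂ] (σ ⊕ σ → ℂ) := LinearMap.funLeft ℂ ℂ (Sum.elim id id)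
  let ρ : (σ ⊕ σ → ℂ) →ₗ[ℂ] (σ → ℂ) := LinearMap.funLeft ℂ ℂ Sum.inl
  have hρδ : ∀ x, ρ (δ x) = x := fun x => rfl
  let Δ : Submodule ℂ (σ ⊕ σ → ℂ) := LinearMap.range δ
  have hδρ : ∀ z ∈ Δ, δ (ρ z) = z := by rintro _ ⟨x, rfl⟩; rfl
  have hδp : ∀ x, δ x ∈ prd V W ↔ x ∈ V ∧ x ∈ W := fun x => Iff.rfl
  have him : ∀ Z : Set (σ → ℂ), δ '' Z = {z | ρ z ∈ Z} ∩ Δ := by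
    intro Z
    ext z
    constructor
    · rintro ⟨x, hx, rfl⟩; exact ⟨hx, x, rfl⟩
    · rintro ⟨h1, h2⟩; exact ⟨ρ z, h1, hδρ z h2⟩
  have hcone : ∀ Z : Set (σ → ℂ), Cone Z → Cone (δ '' Z) := fun Z hZ => by
    rw [him]; exact (hZ.comap ρ).inter (cone_sub Δ)
  have hirr : ∀ Z : Set (σ → ℂ), Irr Z → Irr (δ '' Z) := fun Z hZ =>
    irr_image hZ δ ρ hρδ (hcone Z hZ.1)
  have hinj : Function.Injective (fun Z : Set (σ → ℂ) => δ '' Z) :=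
    Set.image_injective.2 (Function.LeftInverse.injective hρδ)
  have hD : ∀ C ∈ T, D C ≤ D (δ '' C) := fun C hC => by
    refine D_le_of_HF (hT C hC).1 (hirr C (hT C hC).1) fun t => le_antisymm ?_ ?_
    · exact HF_image ρ (fun x hx => ⟨δ x, Set.mem_image_of_mem δ hx, hρδ x⟩) t
    · exact HF_image δ le_rfl t
  have hcomp : ∀ C ∈ T, Comp (prd V W ∩ Δ) (δ '' C) := by
    intro C hC
    obtain ⟨h1, h2, h3⟩ := hT C hC
    refine ⟨hirr C h1, ?_, ?_⟩
    · rintro _ ⟨x, hx, rfl⟩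
      exact ⟨(hδp x).2 (h2 hx), x, rfl⟩
    · intro Z' hZ' hCZ hZs
      have e : ρ '' Z' = {x | δ x ∈ Z'} := by
        ext x
        constructor
        · rintro ⟨z, hz, rfl⟩
          change δ (ρ z) ∈ Z'
          rw [hδρ z (hZs hz).2]; exact hz
        · intro hx; exact ⟨δ x, hx, rfl⟩
      have hirr' : Irr (ρ '' Z') := by
        have hc : Cone (ρ '' Z') := by rw [e]; exact hZ'.1.comap δ
        refine ⟨hc, fun h0 => hZ'.2.1 fun z hz => ?_, fun Y Z hY hZ hsub => ?_⟩
        · have : ρ z = 0 := h0 ⟨z, hz, rfl⟩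
          rw [Set.mem_singleton_iff, ← hδρ z (hZs hz).2, this, map_zero]
        · rcases hZ'.2.2 _ _ (hY.comap ρ) (hZ.comap ρ) (fun x hx => hsub (Set.mem_image_of_mem ρ hx)) with h1 | h1
          · left; rintro _ ⟨x, hx, rfl⟩; exact h1 hx
          · right; rintro _ ⟨x, hx, rfl⟩; exact h1 hx
      have h4 := h3 (ρ '' Z') hirr' (fun x hx => ⟨δ x, hCZ ⟨x, hx, rfl⟩, rfl⟩) (by
        rw [e]
        intro x hx
        exact (hδp x).1 (hZs hx).1)
      rw [← h4]
      ext z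
      constructor
      · intro hz; exact ⟨ρ z, ⟨z, hz, rfl⟩, hδρ z (hZs hz).2⟩
      · rintro ⟨_, ⟨z', hz', rfl⟩, rfl⟩
        rw [hδρ z' (hZs hz').2]; exact hz'
  have h1 := heintz_sub (prd_irr hV hW) Δ (T := T.image fun Z => δ '' Z) (by
    intro C hC
    obtain ⟨Z, hZ, rfl⟩ := Finset.mem_image.1 hC
    exact hcomp Z hZ)
  rw [Finset.sum_image fun a _ b _ h => hinj h] at h1
  exact (Finset.sum_le_sum hD).trans (h1.trans (D_prd hV hW))

end prod
end GB


namespace GB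
open MvPolynomial

set_option linter.unusedSectionVars false

section prim
open Polynomial
open scoped nonZeroDivisors IntermediateField
attribute [local instance] FractionRing.liftAlgebra

lemma prim {B A : Type*} [CommRing B] [IsDomain B] [IsIntegrallyClosed B] [CharZero B]
    [CommRing A] [IsDomain A] [Algebra B A] [Module.Finite B A] [FaithfulSMul B A]
    {r : ℕ} {a : Fin r → A} (ha : LinearIndependent B a) :
    ∃ (α : A) (F : B[X]), F.Monic ∧ r ≤ F.natDegree ∧ (∀ p : B[X], aeval α p = 0 → F ∣ p) ∧
      ∃ (g : B) (u v : B[X]), g ≠ 0 ∧ u * F + v * derivative F = Polynomial.C g := by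
  let K := FractionRing B
  let L := FractionRing A
  have : CharZero K := IsFractionRing.charZero B
  have hfd : FiniteDimensional K L := inferInstance
  obtain ⟨β, hβ⟩ := Field.exists_primitive_element K L
  obtain ⟨⟨x, ⟨d, hd⟩⟩, hx⟩ := IsLocalization.surj (Algebra.algebraMapSubmonoid A B⁰) β
  obtain ⟨d, hd0, rfl⟩ := hd
  simp only at hx
  have hd0' : algebraMap B K d ≠ 0 := by
    simpa using nonZeroDivisors.ne_zero hd0
  have hx2 : algebraMap A L x = algebraMap K L (algebraMap B K d) * β := by
    rw [← hx, mul_comm, ← IsScalarTower.algebraMap_apply, ← IsScalarTower.algebraMap_apply]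
  have hα : K⟮algebraMap A L x⟯ = ⊤ := by
    rw [eq_top_iff, ← hβ, IntermediateField.adjoin_simple_le_iff]
    have : β = algebraMap K L (algebraMap B K d)⁻¹ * algebraMap A L x := by
      rw [hx2, ← mul_assoc, ← map_mul, inv_mul_cancel₀ hd0', map_one, one_mul]
    rw [this]
    exact mul_mem (IntermediateField.algebraMap_mem _ _) (IntermediateField.mem_adjoin_simple_self _ _)
  have hxi : IsIntegral B x := Algebra.IsIntegral.isIntegral x
  have hmin := minpoly.isIntegrallyClosed_eq_field_fractions K L hxi
  have hdeg : (minpoly B x).natDegree = Module.finrank K L := by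
    rw [← (Field.primitive_element_iff_minpoly_natDegree_eq K (algebraMap A L x)).1 hα, hmin,
      (minpoly.monic hxi).natDegree_map]
  refine ⟨x, minpoly B x, minpoly.monic hxi, ?_, fun p hp => minpoly.isIntegrallyClosed_dvd hxi hp, ?_⟩
  · rw [hdeg]
    have h1 : LinearIndependent B (fun i => algebraMap A L (a i)) :=
      ha.map' (IsScalarTower.toAlgHom B A L).toLinearMap
        (LinearMap.ker_eq_bot.2 (IsFractionRing.injective A L))
    rw [LinearIndependent.iff_fractionRing (R := B) (K := K)] at h1
    simpa using h1.fintype_card_le_finrank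
  · have hirr : Irreducible (minpoly K (algebraMap A L x)) :=
      minpoly.irreducible (Algebra.IsIntegral.isIntegral _)
    have hsep := hirr.separable
    rw [hmin, Polynomial.Separable] at hsep
    obtain ⟨u, v, huv⟩ := hsep
    obtain ⟨b, hb, hb'⟩ := IsLocalization.integerNormalization_spec B⁰ u
    obtain ⟨c, hc, hc'⟩ := IsLocalization.integerNormalization_spec B⁰ v
    set U := IsLocalization.integerNormalization B⁰ u
    set W := IsLocalization.integerNormalization B⁰ v
    refine ⟨b * c, Polynomial.C c * U, Polynomial.C b * W,
      mul_ne_zero (nonZeroDivisors.ne_zero hb) (nonZeroDivisors.ne_zero hc), ?_⟩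
    apply Polynomial.map_injective (algebraMap B K) (IsFractionRing.injective B K)
    have e : ∀ (z : B) (p : K[X]), z • p = Polynomial.C (algebraMap B K z) * p := fun z p => by
      rw [← Polynomial.smul_eq_C_mul, algebraMap_smul]
    simp only [Polynomial.map_add, Polynomial.map_mul, Polynomial.map_C, hb', hc', e,
      ← Polynomial.derivative_map, map_mul]
    linear_combination (Polynomial.C (algebraMap B K b) * Polynomial.C (algebraMap B K c)) * huv

end prim
end GB


namespace GB
open MvPolynomial

set_option linter.unusedSectionVars false

section fib
variable {σ τ : Type*} [Fintype σ] [Fintype τ]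

lemma exists_zero {J : Ideal (MvPolynomial σ ℂ)} (hJ : J ≠ ⊤) : ∃ x : σ → ℂ, ∀ f ∈ J, eval x f = 0 := by
  obtain ⟨M, hM, hJM⟩ := Ideal.exists_le_maximal J hJ
  obtain ⟨x, hx⟩ := (isMaximal_iff_eq_vanishingIdeal_singleton (K := ℂ)).1 hM
  refine ⟨x, fun f hf => ?_⟩
  have := hJM hf
  rw [hx, mem_vanishingIdeal_iff] at this
  simpa using this x rfl

/-- lifting a root to a point -/
lemma lift_root {V : Set (σ → ℂ)} (hV : Cone V) {π : (σ → ℂ) →ₗ[ℂ] (τ → ℂ)} (hπ : Good V π)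
    (p : MvPolynomial σ ℂ) (F : Polynomial (MvPolynomial τ ℂ))
    (hF : ∀ q : Polynomial (MvPolynomial τ ℂ), q.eval₂ (toA V π) (mkA V p) = 0 → F ∣ q)
    (b : τ → ℂ) (z : ℂ) (hz : F.eval₂ (eval b) z = 0) :
    ∃ x ∈ V, π x = b ∧ eval x p = z := by
  let ψ : Polynomial (MvPolynomial τ ℂ) →+* CR V := Polynomial.eval₂RingHom (toA V π) (mkA V p)
  let χ : Polynomial (MvPolynomial τ ℂ) →+* ℂ := Polynomial.eval₂RingHom (eval b) z
  have hψ : ψ.IsIntegral := by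
    have h1 : (toA V π).IsIntegral := (toA_finite hV hπ).to_isIntegral
    have h2 : toA V π = ψ.comp Polynomial.C := by
      ext1 <;> simp [ψ]
    rw [h2] at h1
    exact RingHom.IsIntegral.tower_top _ _ h1
  let := ψ.toAlgebra
  have : Algebra.IsIntegral (Polynomial (MvPolynomial τ ℂ)) (CR V) := ⟨hψ⟩
  have hP : (RingHom.ker χ).IsPrime := RingHom.ker_isPrime χ
  obtain ⟨Q, -, hQ, hQP⟩ := Ideal.exists_ideal_over_prime_of_isIntegral (S := CR V) (RingHom.ker χ) ⊥ (by
    intro q hq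
    have h3 : ψ q = 0 := hq
    obtain ⟨w, rfl⟩ := hF q h3
    rw [RingHom.mem_ker, map_mul]
    have : χ F = 0 := hz
    rw [this, zero_mul])
  have hQP' : ∀ q, χ q = 0 → ψ q ∈ Q := fun q hq => by
    have : q ∈ RingHom.ker χ := hq
    rw [← hQP] at this
    exact this
  have hne : Q.comap (mkA V) ≠ ⊤ := (Ideal.comap_isPrime (mkA V) Q).ne_top
  obtain ⟨x, hx⟩ := exists_zero hne
  refine ⟨x, hV.mem_iff.2 fun f hf => hx f ?_, ?_, ?_⟩
  · rw [Ideal.mem_comap, mkA_zero.2 hf]; exact Q.zero_mem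
  · ext j
    have h1 := hQP' (Polynomial.C (X j - C (b j))) (by simp [χ])
    have h2 : ψ (Polynomial.C (X j - C (b j))) = mkA V (pull π (X j - C (b j))) := by
      simp only [ψ, Polynomial.coe_eval₂RingHom, Polynomial.eval₂_C]; rfl
    rw [h2] at h1
    have h3 := hx _ h1
    rw [eval_pull, map_sub, eval_X, eval_C, sub_eq_zero] at h3
    exact h3
  · have h1 := hQP' (Polynomial.X - Polynomial.C (C z)) (by simp [χ])
    have h2 : ψ (Polynomial.X - Polynomial.C (C z)) = mkA V (p - C z) := by
      simp only [ψ, map_sub, Polynomial.coe_eval₂RingHom, Polynomial.eval₂_C, Polynomial.eval₂_X]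
      rw [toA_apply, pull_C]
    rw [h2] at h1
    have h3 := hx _ h1
    rw [map_sub, eval_C, sub_eq_zero] at h3
    exact h3

lemma D_le_rank {V : Set (σ → ℂ)} (hV : Irr V) {r : ℕ} (h : Sand V (cdim V) r) : D V ≤ r := by
  obtain ⟨h1, s, s2, h2⟩ := D_spec hV
  obtain ⟨s3, s', h3⟩ := h
  have := mc_cmp (n := cdim V) (n' := cdim V) (r := D V) (r' := r) (s := s + s') (cdim_pos hV) h1
    (fun t => by
      have := (h2 t).1.trans (h3 (t + s)).2
      rwa [add_assoc] at this)
  omega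

lemma fibre_lower {V : Set (σ → ℂ)} (hV : Irr V) {π : (σ → ℂ) →ₗ[ℂ] (τ → ℂ)} (hπ : Good V π)
    (hi : Inj V π) (hc : Fintype.card τ = cdim V) :
    ∃ g : MvPolynomial τ ℂ, g ≠ 0 ∧ ∀ b, eval b g ≠ 0 →
      ∃ T : Finset (σ → ℂ), D V ≤ T.card ∧ ∀ x ∈ T, x ∈ V ∧ π x = b := by
  classical
  have hpos := cdim_pos hV
  obtain ⟨j0⟩ : Nonempty τ := Fintype.card_pos_iff.1 (by omega)
  obtain ⟨r, s, l, a, G, hr, ha, hG, hLI, hgen⟩ := rank_core hV hπ hi j0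
  have hsand := sand_of hV hi ha hG hLI hgen
  rw [hc] at hsand
  have hDr := D_le_rank hV hsand
  have hdom := CR_domain hV
  let := (toA V π).toAlgebra
  have hfin : Module.Finite (MvPolynomial τ ℂ) (CR V) := toA_finite hV.1 hπ
  have : FaithfulSMul (MvPolynomial τ ℂ) (CR V) := by
    rw [faithfulSMul_iff_algebraMap_injective]
    exact toA_inj hi
  have hli : LinearIndependent (MvPolynomial τ ℂ) (fun i => mkA V (a i)) := by
    rw [Fintype.linearIndependent_iff]
    intro c hc
    apply hLI c
    rw [← mkA_zero, map_sum, ← hc]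
    refine Finset.sum_congr rfl fun i _ => ?_
    rw [map_mul]; rfl
  obtain ⟨α, F, hFm, hFr, hFd, g, u, v, hg, huv⟩ := prim hli
  obtain ⟨p, rfl⟩ := mkA_surj V α
  refine ⟨g, hg, fun b hb => ?_⟩
  let f := F.map (eval b)
  have hfm : f.Monic := hFm.map _
  have hfd : f.natDegree = F.natDegree := hFm.natDegree_map _
  have hsep : f.Separable := by
    have h1 := congrArg (Polynomial.map (eval b)) huv
    simp only [Polynomial.map_add, Polynomial.map_mul, Polynomial.map_C,
      ← Polynomial.derivative_map] at h1
    refine ⟨Polynomial.C (eval b g)⁻¹ * u.map (eval b), Polynomial.C (eval b g)⁻¹ * v.map (eval b), ?_⟩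
    have h2 : Polynomial.C (eval b g)⁻¹ * Polynomial.C (eval b g) = 1 := by
      rw [← Polynomial.C_mul, inv_mul_cancel₀ hb, Polynomial.C_1]
    linear_combination Polynomial.C (eval b g)⁻¹ * h1 + h2
  have hcard : f.roots.toFinset.card = F.natDegree := by
    rw [Multiset.toFinset_card_of_nodup (Polynomial.nodup_roots hsep), ← hfd]
    exact (IsAlgClosed.splits f).natDegree_eq_card_roots.symm
  have hl : ∀ z ∈ f.roots.toFinset, ∃ x ∈ V, π x = b ∧ eval x p = z := by
    intro z hz
    refine lift_root hV.1 hπ p F hFd b z ?_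
    rw [Multiset.mem_toFinset, Polynomial.mem_roots hfm.ne_zero, Polynomial.IsRoot,
      Polynomial.eval_map] at hz
    exact hz
  choose! x hxV hxb hxz using hl
  refine ⟨f.roots.toFinset.image x, ?_, ?_⟩
  · rw [Finset.card_image_of_injOn, hcard]
    · omega
    · intro z hz z' hz' h
      rw [← hxz z hz, ← hxz z' hz', h]
  · intro y hy
    obtain ⟨z, hz, rfl⟩ := Finset.mem_image.1 hy
    exact ⟨hxV z hz, hxb z hz⟩

lemma fibre_finite {V : Set (σ → ℂ)} (hV : Cone V) {π : (σ → ℂ) →ₗ[ℂ] (τ → ℂ)} (hπ : Good V π)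
    (b : τ → ℂ) : {x | x ∈ V ∧ π x = b}.Finite := by
  classical
  have h1 : (toA V π).IsIntegral := (toA_finite hV hπ).to_isIntegral
  have h2 : ∀ i : σ, ∃ f : Polynomial (MvPolynomial τ ℂ), f.Monic ∧
      f.eval₂ (toA V π) (mkA V (X i)) = 0 := fun i => h1 _
  choose f hfm hf using h2
  refine (Set.Finite.pi' (ι := σ) (t := fun i => {z : ℂ | z ∈ ((f i).map (eval b)).roots.toFinset})
    fun i => Finset.finite_toSet _).subset ?_
  rintro x ⟨hx, rfl⟩ i
  rw [Set.mem_ofPred_eq, Multiset.mem_toFinset, Polynomial.mem_roots ((hfm i).map _).ne_zero,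
    Polynomial.IsRoot, Polynomial.eval_map]
  have h3 : (f i).eval₂ (toA V π) (mkA V (X i)) = mkA V ((f i).eval₂ (pull π).toRingHom (X i)) := by
    rw [Polynomial.hom_eval₂]; rfl
  have h4 := hf i
  rw [h3, mkA_zero] at h4
  have h5 := mem_I.1 h4 x hx
  rw [Polynomial.hom_eval₂, eval_X] at h5
  rw [← h5]
  congr 1
  exact RingHom.ext fun q => (eval_pull π x q).symm

end fib
end GB


namespace GB
open MvPolynomial

set_option linter.unusedSectionVars false

section low
variable {σ τ : Type*} [Fintype σ] [Fintype τ]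

lemma prod_vanish {U : Set (σ → ℂ)} {T : Finset (Set (σ → ℂ))} {π : (σ → ℂ) →ₗ[ℂ] (τ → ℂ)} (j0 : τ)
    (hU : U ⊆ {0} ∪ ⋃ Z ∈ T, Z) (h : ∀ Z ∈ T, ¬ Inj Z π) :
    ∃ g : MvPolynomial τ ℂ, g ≠ 0 ∧ pull π g ∈ I U := by
  have h' : ∀ Z ∈ T, ∃ f : MvPolynomial τ ℂ, f ≠ 0 ∧ pull π f ∈ I Z := by
    intro Z hZ
    have := h Z hZ
    simp only [Inj, not_forall] at this
    obtain ⟨f, hf, hf0⟩ := this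
    exact ⟨f, hf0, hf⟩
  choose! f hf0 hf using h'
  refine ⟨X j0 * ∏ Z ∈ T, f Z, mul_ne_zero (X_ne_zero j0) (Finset.prod_ne_zero_iff.2 hf0),
    mem_I.2 fun x hx => ?_⟩
  rw [map_mul, map_mul]
  rcases hU hx with h0 | h1
  · rw [Set.mem_singleton_iff] at h0
    rw [h0, eval_pull, map_zero, eval_X]
    simp
  · simp only [Set.mem_iUnion] at h1
    obtain ⟨Z, hZ, hxZ⟩ := h1
    rw [map_prod, map_prod, Finset.prod_eq_zero hZ (mem_I.1 (hf Z hZ) x hxZ), mul_zero]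

lemma inj_of_cdim {Q : Set (σ → ℂ)} (hQ : Irr Q) {n : ℕ} {π : (σ → ℂ) →ₗ[ℂ] (Fin n → ℂ)}
    (hπ : Good Q π) (h : cdim Q = n) : Inj Q π := by
  by_contra hc
  have := cdim_pos hQ
  obtain ⟨k, rfl⟩ : ∃ k, n = k + 1 := ⟨n - 1, by omega⟩
  obtain ⟨π', hπ'⟩ := step (fun v hv c => hQ.1.smul hv c) hπ hc
  have := cdim_le hπ'
  omega

lemma pts_of_fibre {U : Set (σ → ℂ)} (hU : Cone U) {π : (σ → ℂ) →ₗ[ℂ] (τ → ℂ)} (hg : Good U π)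
    {b : τ → ℂ} (hb0 : b ≠ 0) (A : Finset (σ → ℂ)) (hA : ∀ x ∈ A, x ∈ U ∧ π x = b) :
    ∃ W : Submodule ℂ (σ → ℂ), (pts (U ∩ (W : Set (σ → ℂ)))).Finite ∧
      A.card ≤ (pts (U ∩ (W : Set (σ → ℂ)))).ncard := by
  classical
  let W : Submodule ℂ (σ → ℂ) := (Submodule.span ℂ {b}).comap π
  have hfin : (pts (U ∩ (W : Set (σ → ℂ)))).Finite := by
    refine ((fibre_finite hU hg b).image fun x => Submodule.span ℂ {x}).subset ?_
    rintro L ⟨hL1, hL⟩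
    obtain ⟨⟨y, hy⟩, hy0, hyL⟩ := finrank_eq_one_iff'.1 hL1
    have hy0' : y ≠ 0 := fun h => hy0 (Subtype.ext h)
    have hyU := hL hy
    obtain ⟨c, hc⟩ := Submodule.mem_span_singleton.1 (hyU.2 : π y ∈ Submodule.span ℂ {b})
    have hc0 : c ≠ 0 := by
      rintro rfl
      rw [zero_smul] at hc
      exact hy0' (hg y hyU.1 hc.symm)
    refine ⟨c⁻¹ • y, ⟨hU.smul hyU.1 _, ?_⟩, ?_⟩
    · rw [map_smul, ← hc, smul_smul, inv_mul_cancel₀ hc0, one_smul]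
    · apply le_antisymm
      · rw [Submodule.span_singleton_le_iff_mem]
        exact L.smul_mem _ hy
      · intro w hw
        obtain ⟨d, hd⟩ := hyL ⟨w, hw⟩
        have hd' : d • y = w := congrArg Subtype.val hd
        rw [Submodule.mem_span_singleton]
        exact ⟨d * c, by rw [← hd', smul_smul, mul_assoc, mul_inv_cancel₀ hc0, mul_one]⟩
  refine ⟨W, hfin, ?_⟩
  have hinj : Set.InjOn (fun x : σ → ℂ => Submodule.span ℂ {x}) (A : Set (σ → ℂ)) := by
    intro x hx y hy hxy
    have h1 : y ∈ Submodule.span ℂ {x} := by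
      change Submodule.span ℂ {x} = Submodule.span ℂ {y} at hxy
      rw [hxy]; exact Submodule.mem_span_singleton_self y
    obtain ⟨c, rfl⟩ := Submodule.mem_span_singleton.1 h1
    have h2 := (hA _ hy).2
    rw [map_smul, (hA _ hx).2] at h2
    have h3 : (c - 1) • b = 0 := by rw [sub_smul, h2, one_smul, sub_self]
    have h4 := (smul_eq_zero.1 h3).resolve_right hb0
    rw [sub_eq_zero.1 h4, one_smul]
  rw [← Finset.card_image_of_injOn hinj, ← Set.ncard_coe_finset]
  refine Set.ncard_le_ncard ?_ hfin
  intro L hL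
  rw [Finset.mem_coe, Finset.mem_image] at hL
  obtain ⟨x, hx, rfl⟩ := hL
  have hx0 : x ≠ 0 := by
    rintro rfl
    exact hb0 (by rw [← (hA _ hx).2, map_zero])
  refine ⟨finrank_span_singleton hx0, ?_⟩
  intro y hy
  obtain ⟨c, rfl⟩ := Submodule.mem_span_singleton.1 hy
  refine ⟨hU.smul (hA _ hx).1 c, ?_⟩
  change π (c • x) ∈ Submodule.span ℂ {b}
  rw [map_smul, (hA _ hx).2]
  exact Submodule.smul_mem _ _ (Submodule.mem_span_singleton_self b)

lemma exists_fibre {U : Set (σ → ℂ)} {n : ℕ} (hn : 1 ≤ n) {S : Finset (Set (σ → ℂ))}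
    (hS : ∀ Z, Z ∈ S ↔ Comp U Z) {π : (σ → ℂ) →ₗ[ℂ] (Fin n → ℂ)} (hg : Good U π)
    (hcd : ∀ Q ∈ S, cdim Q = n) :
    ∃ b : Fin n → ℂ, b ≠ 0 ∧ ∃ A : Finset (σ → ℂ), (∀ x ∈ A, x ∈ U ∧ π x = b) ∧
      ∑ Q ∈ S, D Q ≤ A.card := by
  classical
  let j0 : Fin n := ⟨0, hn⟩
  have hgood : ∀ Q ∈ S, Good Q π := fun Q hQ => good_mono ((hS Q).1 hQ).2.1 hg
  have hfl : ∀ Q ∈ S, ∃ g : MvPolynomial (Fin n) ℂ, g ≠ 0 ∧ ∀ b, eval b g ≠ 0 →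
      ∃ T : Finset (σ → ℂ), D Q ≤ T.card ∧ ∀ x ∈ T, x ∈ Q ∧ π x = b := fun Q hQ =>
    fibre_lower ((hS Q).1 hQ).1 (hgood Q hQ)
      (inj_of_cdim ((hS Q).1 hQ).1 (hgood Q hQ) (hcd Q hQ)) (by rw [Fintype.card_fin, hcd Q hQ])
  choose! g hg0 hgT using hfl
  have hpair : ∀ P ∈ S.offDiag, ∃ k : MvPolynomial (Fin n) ℂ, k ≠ 0 ∧ pull π k ∈ I (P.1 ∩ P.2) := by
    rintro ⟨Q, Q'⟩ hP
    obtain ⟨hQ, hQ', hne⟩ := Finset.mem_offDiag.1 hP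
    simp only at hQ hQ' hne
    obtain ⟨T, hT, hTU, -⟩ := exists_comps (Q ∩ Q') (((hS Q).1 hQ).1.1.inter ((hS Q').1 hQ').1.1)
    refine prod_vanish j0 hTU fun Z hZ hinj => ?_
    have hZc := (hT Z).1 hZ
    have h1 := inj_le hZc.1 hinj
    rw [Fintype.card_fin] at h1
    have h2 := cdim_strict hZc.1 ((hS Q).1 hQ).1 ⟨hZc.2.1.trans Set.inter_subset_left, fun hc =>
      hne (comp_max (fun Z hZ => (hS Z).1 hZ) Q hQ Q' hQ'
        (hc.trans (hZc.2.1.trans Set.inter_subset_right)))⟩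
    have h3 := hcd Q hQ
    omega
  choose! k hk0 hk using hpair
  obtain ⟨b, hb⟩ := exists_eval_ne (f := X j0 * ((∏ Q ∈ S, g Q) * ∏ P ∈ S.offDiag, k P))
    (mul_ne_zero (X_ne_zero j0) (mul_ne_zero (Finset.prod_ne_zero_iff.2 hg0)
      (Finset.prod_ne_zero_iff.2 hk0)))
  rw [map_mul, map_mul, map_prod, map_prod, eval_X] at hb
  have hb0 : b ≠ 0 := by
    rintro rfl
    simp at hb
  have hbg : ∀ Q ∈ S, eval b (g Q) ≠ 0 :=
    Finset.prod_ne_zero_iff.1 (left_ne_zero_of_mul (right_ne_zero_of_mul hb))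
  have hbk : ∀ P ∈ S.offDiag, eval b (k P) ≠ 0 :=
    Finset.prod_ne_zero_iff.1 (right_ne_zero_of_mul (right_ne_zero_of_mul hb))
  have hT : ∀ Q ∈ S, ∃ T : Finset (σ → ℂ), D Q ≤ T.card ∧ ∀ x ∈ T, x ∈ Q ∧ π x = b :=
    fun Q hQ => hgT Q hQ b (hbg Q hQ)
  choose! T hTc hT using hT
  let A : Finset (σ → ℂ) := S.biUnion T
  have hAc : ∑ Q ∈ S, D Q ≤ A.card := by
    rw [Finset.card_biUnion]
    · exact Finset.sum_le_sum hTc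
    · intro Q hQ Q' hQ' hne
      change Disjoint (T Q) (T Q')
      rw [Finset.disjoint_left]
      intro x hx hx'
      have hP : (Q, Q') ∈ S.offDiag := Finset.mem_offDiag.2 ⟨hQ, hQ', hne⟩
      have h1 := mem_I.1 (hk _ hP) x ⟨(hT Q hQ x hx).1, (hT Q' hQ' x hx').1⟩
      rw [eval_pull, (hT Q hQ x hx).2] at h1
      exact hbk _ hP h1
  have hA : ∀ x ∈ A, x ∈ U ∧ π x = b := by
    intro x hx
    obtain ⟨Q, hQ, hxQ⟩ := Finset.mem_biUnion.1 hx
    exact ⟨((hS Q).1 hQ).2.1 (hT Q hQ x hxQ).1, (hT Q hQ x hxQ).2⟩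
  exact ⟨b, hb0, A, hA, hAc⟩

lemma pts_lower {U : Set (σ → ℂ)} (hU : Cone U) (h0 : ¬ U ⊆ {0}) {S : Finset (Set (σ → ℂ))}
    (hS : ∀ Z, Z ∈ S ↔ Comp U Z) (hp : ∀ Z ∈ S, ∀ Z' ∈ S, cdim Z = cdim Z') :
    ∃ W : Submodule ℂ (σ → ℂ), (pts (U ∩ (W : Set (σ → ℂ)))).Finite ∧
      ∑ Q ∈ S, D Q ≤ (pts (U ∩ (W : Set (σ → ℂ)))).ncard := by
  classical
  obtain ⟨hn, π, hg, hi⟩ := cdim_norm hU h0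
  let j0 : Fin (cdim U) := ⟨0, hn⟩
  obtain ⟨S', hS', hUS, -⟩ := exists_comps U hU
  obtain rfl : S = S' := Finset.ext fun Z => (hS Z).trans (hS' Z).symm
  obtain ⟨Q0, hQ0, hiQ0⟩ : ∃ Q ∈ S, Inj Q π := by
    by_contra hc
    push Not at hc
    obtain ⟨g, hg0, hg⟩ := prod_vanish j0 hUS hc
    exact hg0 (hi g hg)
  have hcd : ∀ Q ∈ S, cdim Q = cdim U := by
    intro Q hQ
    have h1 := inj_le ((hS Q0).1 hQ0).1 hiQ0
    rw [Fintype.card_fin] at h1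
    have h2 := cdim_mono ((hS Q).1 hQ).2.1
    have h3 := hp Q hQ Q0 hQ0
    omega
  obtain ⟨b, hb0, A, hA, hAc⟩ := exists_fibre hn hS hg hcd
  obtain ⟨W, h1, h2⟩ := pts_of_fibre hU hg hb0 A hA
  exact ⟨W, h1, hAc.trans h2⟩

end low
end GB


namespace GB
open MvPolynomial

set_option linter.unusedSectionVars false

section fin
variable {σ τ : Type*} [Fintype σ] [Fintype τ]

lemma bez_multi : ∀ (n : ℕ) (Y : Fin (n + 1) → Set (σ → ℂ)) (_ : ∀ j, Cone (Y j))
    (S : Fin (n + 1) → Finset (Set (σ → ℂ))) (_ : ∀ j Z, Z ∈ S j ↔ Comp (Y j) Z)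
    (T : Finset (Set (σ → ℂ))) (_ : ∀ Z ∈ T, Comp (⋂ j, Y j) Z),
    ∑ Z ∈ T, D Z ≤ ∏ j, ∑ Q ∈ S j, D Q := by
  intro n
  induction n with
  | zero =>
    intro Y hY S hS T hT
    have e : ⋂ j, Y j = Y 0 := by
      ext x; simp
    rw [e] at hT
    rw [Fin.prod_univ_one]
    exact Finset.sum_le_sum_of_subset fun Z hZ => (hS 0 Z).2 (hT Z hZ)
  | succ k ih =>
    intro Y hY S hS T hT
    have e : ⋂ j, Y j = Y 0 ∩ ⋂ j : Fin (k + 1), Y j.succ := by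
      ext x
      simp only [Set.mem_iInter, Set.mem_inter_iff]
      exact Fin.forall_fin_succ
    rw [e] at hT
    set U := ⋂ j : Fin (k + 1), Y j.succ with hU
    have hUc : Cone U := Cone.iInter fun j => hY _
    obtain ⟨SU, hSU, -, hSU'⟩ := exists_comps U hUc
    obtain ⟨S0, hS0, -, hS0'⟩ := exists_comps (Y 0) (hY 0)
    have e0 : S0 = S 0 := Finset.ext fun Z => (hS0 Z).trans (hS 0 Z).symm
    subst e0
    have h1 := ih (fun j => Y j.succ) (fun j => hY _) (fun j => S j.succ) (fun j => hS _) SU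
      (fun Z hZ => (hSU Z).1 hZ)
    rw [Fin.prod_univ_succ]
    refine le_trans ?_ (Nat.mul_le_mul_left _ h1)
    rw [Finset.sum_mul]
    refine comp_split hS0' (fun Q hQ => ((hS0 Q).1 hQ).2.1) (E := U) ?_ hT
    intro Q hQ T' hT'
    rw [Finset.mul_sum]
    refine comp_split hSU' (fun Z hZ => ((hSU Z).1 hZ).2.1) (E := Q) ?_ (T := T')
      (fun C hC => by rw [Set.inter_comm]; exact hT' C hC)
    intro Z hZ T'' hT''
    exact bezout2 ((hS0 Q).1 hQ).1 ((hSU Z).1 hZ).1 (fun C hC => by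
      rw [Set.inter_comm]; exact hT'' C hC)

end fin
end GB


/-- **Generalized Bézout theorem.** If `X 0, …, X (n-1)` are pure-dimensional
projective varieties in `ℙ^N(ℂ)` and `Z 0, …, Z (m-1)` are the irreducible
components of their intersection, then `∑ deg (Z i) ≤ ∏ deg (X j)`. -/
theorem generalized_bezout (n : ℕ) (hn : 1 ≤ n)
    (X : Fin n → Set (Fin (N + 1) → ℂ))
    (halg : ∀ j, IsAlgCone N (X j))
    (hne : ∀ j, ¬ X j ⊆ {0})
    (hpure : ∀ j, ∀ Z Z', IsIrredComponent N (X j) Z → IsIrredComponent N (X j) Z' →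
      projDim N Z = projDim N Z')
    (m : ℕ) (Z : Fin m → Set (Fin (N + 1) → ℂ))
    (hZinj : Function.Injective Z)
    (hZcomp : ∀ i, IsIrredComponent N (⋂ j, X j) (Z i))
    (hZall : ∀ W, IsIrredComponent N (⋂ j, X j) W → ∃ i, Z i = W) :
    ∑ i, projDegree N (Z i) ≤ ∏ j, projDegree N (X j) := by
  classical
  obtain ⟨k, rfl⟩ : ∃ k, n = k + 1 := ⟨n - 1, by omega⟩
  have hX : ∀ j, GB.Cone (X j) := halg
  have hcs : ∀ j, ∃ S : Finset (Set (Fin (N + 1) → ℂ)), ∀ Z, Z ∈ S ↔ GB.Comp (X j) Z := fun j => by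
    obtain ⟨S, hS, -⟩ := GB.exists_comps (X j) (hX j)
    exact ⟨S, hS⟩
  choose S hS using hcs
  have hdim : ∀ V, GB.Irr V → projDim N V + 1 = GB.cdim V := fun V hV => GB.chains_sSup hV
  have hup : ∀ i, projDegree N (Z i) ≤ GB.D (Z i) := by
    intro i
    have hZi : GB.Irr (Z i) := (hZcomp i).1
    refine csSup_le' ?_
    rintro d ⟨W, hf, rfl⟩
    have := GB.pts_card_le hZi.1 (S := {Z i}) (fun Y => by
      rw [Finset.mem_singleton]
      constructor
      · rintro rfl
        exact ⟨hZi, le_rfl, fun Z' _ h1 h2 => le_antisymm h2 h1⟩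
      · rintro ⟨h1, h2, h3⟩
        exact (h3 (Z i) hZi h2 le_rfl).symm) W hf
    rwa [Finset.sum_singleton] at this
  have hlow : ∀ j, ∑ Q ∈ S j, GB.D Q ≤ projDegree N (X j) := by
    intro j
    obtain ⟨W, hf, hW⟩ := GB.pts_lower (hX j) (hne j) (hS j) (fun Y hY Y' hY' => by
      have h1 := hpure j Y Y' ((hS j Y).1 hY) ((hS j Y').1 hY')
      rw [← hdim Y ((hS j Y).1 hY).1, ← hdim Y' ((hS j Y').1 hY').1, h1])
    refine hW.trans (le_csSup ⟨∑ Q ∈ S j, GB.D Q, ?_⟩ ⟨W, hf, rfl⟩)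
    rintro d ⟨W', hf', rfl⟩
    exact GB.pts_card_le (hX j) (hS j) W' hf'
  have hmain := GB.bez_multi k X hX S hS (Finset.univ.image Z) (fun Y hY => by
    obtain ⟨i, -, rfl⟩ := Finset.mem_image.1 hY
    exact hZcomp i)
  rw [Finset.sum_image fun a _ b _ h => hZinj h] at hmain
  exact (Finset.sum_le_sum fun i _ => hup i).trans
    (hmain.trans (Finset.prod_le_prod' fun j _ => hlow j))
end
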